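/- Assume the linear symmetry group of P acts transitively on vertices (for all i, j ∈ {1,…,n} there is a linear symmetry T of P with T v_i = v_j) and transitively on edges (for all ij, kl ∈ E there is a linear symmetry T of P with {T v_i, T v_j} = {v_k, v_l}). Then every permutation σ of {1,…,n} with (ij ∈ E ⟺ σ(i)σ(j) ∈ E) equals σ_T for some linear symmetry T of P; i.e. P is exactly as symmetric as its edge-graph: the natural homomorphism Aut_GL(P) → Aut(G_P) is an isomorphism. -/

import Mathlib

/-!
Write `ℓ i = ⟪v i, ·⟫`. The functions `i ↦ ℓ i u`, for `u` in the space, form a `d`-dimensional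
space of functions on the vertices. The claim follows once this space is an *entire* eigenspace of
the Laplacian of the edge-graph: a graph automorphism preserves every eigenspace of the Laplacian,
so it maps coordinate functions to coordinate functions, which is to say that it is linear.

To compare the polytope with its graph, consider the weight `exp (-max_i ℓ i Y)` on the space and
its smooth version `psi ε`, in which the maximum is replaced by `ε * log (∑ i, exp (ℓ i Y / ε))`.
The derivatives of the soft maximum are the softened indicators `pw ε · i` of the normal cones of
the vertices. Let `M ε i j` be the integral of `pw i * pw j` (`overlap`) and `D ε i` that of `pw
i` (`cellMass`), both against the weight `psi ε`.

* Integration by parts along `u` shows `(D - M) (ℓ · u) / ε = M (ℓ · u)` (`translation_identity`).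
* By edge-transitivity `M ε` takes a single value `b ε` on edges; by vertex-transitivity `D ε i`
  does not depend on `i`. For nonadjacent `i ≠ j` the cones do not share a facet and `M ε i j =
  o(ε)` (`tendsto_overlap_div`). Hence `(D - M) / ε` is `b ε / ε` times the graph Laplacian up to
  `o(1)`, and in the limit every coordinate function is an eigenvector, with a common eigenvalue
  `ρ ≠ 0`.
* Conversely let `f` be any eigenvector for `ρ`. It has mean zero, since `ρ ≠ 0`. Let `Z ε t` be
  the integral of the weight with `ℓ i Y` replaced by `ℓ i Y + t * f i`. Its second derivative at
  `t = 0` is `⟪f, M f⟫ - ⟪f, (D - M) f⟫ / ε` (`hasDerivAt_integral_psi2`, `quad_eq`), which tends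
  to `0` as `ε → 0`. By the Prékopa–Leindler inequality (`prekopa_leindler`), and since the first
  derivative is zero for `f` of mean zero, this second derivative is always nonpositive, so `f` is
  an asymptotic equality case. A quantitative one-dimensional version (`oneD`), applied to the
  marginal along an arbitrary functional `e`, shows that the mass of `sel f`, the function equal
  to `f i` on the `i`-th cone, to one side of a hyperplane `e = s` is a constant multiple of the
  marginal density at `s` (`core_limit`). Taking Laplace transforms gives an identity with a
  constant `c`: its behaviour at parameter `0` makes `c` a first moment, which is linear in `e`,
  while for `e = ℓ a` at parameter `1` only the `a`-th cone contributes and `c = f a`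
  (`moment_formula`, `cone_formula`). So `f a = ℓ a y` for a fixed vector `y`
  (`eigenspace_exhausted`).
-/

set_option linter.unusedSectionVars false
open MeasureTheory Set Filter Topology

/-! ### The Prékopa–Leindler inequality -/

section
open scoped Pointwise

/-- One-dimensional Brunn–Minkowski inequality for compact sets, by placing translates of the two
sets side by side. -/
lemma bm_compact {A B C : Set ℝ} (hA : IsCompact A) (hB : IsCompact B) (hA0 : A.Nonempty)
    (hB0 : B.Nonempty) (hC : ∀ x ∈ A, ∀ y ∈ B, (x + y) / 2 ∈ C) :
    volume A + volume B ≤ 2 * volume C := by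
  obtain ⟨a, ha, hamax⟩ := hA.exists_isGreatest hA0
  obtain ⟨b, hb, hbmin⟩ := hB.exists_isLeast hB0
  have hsub : (fun x => b + x) '' A ∪ (fun x => a + x) '' B ⊆ (fun x => (2:ℝ) * x) '' C := by
    rintro _ (⟨x, hx, rfl⟩ | ⟨y, hy, rfl⟩)
    · exact ⟨_, hC x hx b hb, by ring⟩
    · exact ⟨_, hC a ha y hy, by ring⟩
  have hv : volume ((fun x => (2:ℝ) * x) '' C) = 2 * volume C := by
    have := Measure.addHaar_smul (volume : Measure ℝ) (2:ℝ) C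
    simp only [Module.finrank_self, pow_one] at this
    rw [abs_of_pos (by norm_num : (0:ℝ) < 2)] at this
    rw [show (fun x => (2:ℝ) * x) '' C = (2:ℝ) • C from rfl, this]
    norm_num
  have hdisj : AEDisjoint volume ((fun x => b + x) '' A) ((fun x => a + x) '' B) := by
    refine measure_mono_null (t := {a + b}) ?_ (by simp)
    rintro z ⟨⟨x, hx, rfl⟩, ⟨y, hy, hxy⟩⟩
    have h1 := hamax hx
    have h2 := hbmin hy
    simp only [mem_singleton_iff] at *
    linarith
  have hmB : NullMeasurableSet ((fun x => a + x) '' B) volume :=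
    ((hB.image (by fun_prop)).measurableSet).nullMeasurableSet
  calc volume A + volume B
      = volume ((fun x => b + x) '' A) + volume ((fun x => a + x) '' B) := by
        simp [image_add_left, measure_preimage_add]
    _ = volume ((fun x => b + x) '' A ∪ (fun x => a + x) '' B) :=
        (measure_union₀ hmB hdisj).symm
    _ ≤ _ := (measure_mono hsub).trans hv.le

/-- `bm_compact` extended to measurable sets by inner regularity. -/
lemma bm_meas {A B C : Set ℝ} (hA : MeasurableSet A) (hB : MeasurableSet B) (hA0 : A.Nonempty)
    (hB0 : B.Nonempty) (hC : ∀ x ∈ A, ∀ y ∈ B, (x + y) / 2 ∈ C) :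
    volume A + volume B ≤ 2 * volume C := by
  obtain ⟨a, ha⟩ := hA0
  obtain ⟨b, hb⟩ := hB0
  have key : ∀ K ⊆ A, IsCompact K → ∀ L ⊆ B, IsCompact L → volume K + volume L ≤ 2 * volume C := by
    intro K hK hKc L hL hLc
    have h1 : volume (insert a K) + volume (insert b L) ≤ 2 * volume C := by
      refine bm_compact (hKc.insert a) (hLc.insert b) (by simp) (by simp) ?_
      intro x hx y hy
      exact hC x (insert_subset ha hK hx) y (insert_subset hb hL hy)
    refine le_trans ?_ h1
    gcongr <;> simp
  rw [hA.measure_eq_iSup_isCompact, hB.measure_eq_iSup_isCompact]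
  simp only [iSup_and']
  refine ENNReal.biSup_add_biSup_le' (p := fun K => K ⊆ A ∧ IsCompact K)
    (q := fun K => K ⊆ B ∧ IsCompact K) ⟨∅, by simp⟩ ⟨∅, by simp⟩ ?_
  rintro K ⟨h1, h2⟩ L ⟨h3, h4⟩
  exact key K h1 h2 L h3 h4

/-- Integrating the Brunn–Minkowski inequality over superlevel sets. -/
lemma pl_normalized {f g h : ℝ → ℝ} (hf : Measurable f) (hg : Measurable g) (hh : Measurable h)
    (hf0 : ∀ x, 0 ≤ f x) (hg0 : ∀ x, 0 ≤ g x) (hh0 : ∀ x, 0 ≤ h x)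
    (hf1 : ∀ x, f x ≤ 1) (hg1 : ∀ x, g x ≤ 1)
    (hfs : ∀ t < 1, ∃ x, t < f x) (hgs : ∀ t < 1, ∃ x, t < g x)
    (H : ∀ x y, f x * g y ≤ h ((x + y) / 2) ^ 2) :
    (∫⁻ x, ENNReal.ofReal (f x)) + (∫⁻ x, ENNReal.ofReal (g x))
      ≤ 2 * ∫⁻ x, ENNReal.ofReal (h x) := by
  rw [lintegral_eq_lintegral_meas_lt _ (ae_of_all _ hf0) hf.aemeasurable,
    lintegral_eq_lintegral_meas_lt _ (ae_of_all _ hg0) hg.aemeasurable,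
    lintegral_eq_lintegral_meas_lt _ (ae_of_all _ hh0) hh.aemeasurable]
  have hm : ∀ k : ℝ → ℝ, Measurable fun t => volume {a | t < k a} := fun k =>
    Antitone.measurable (fun s t hst => measure_mono fun x hx => lt_of_le_of_lt hst hx)
  rw [← lintegral_add_left (hm f), ← lintegral_const_mul _ (hm h)]
  refine setLIntegral_mono ((hm h).const_mul 2) ?_
  intro t ht
  have ht0 : 0 < t := ht
  rcases lt_or_ge t 1 with h1 | h1
  · refine bm_meas (measurableSet_lt measurable_const hf) (measurableSet_lt measurable_const hg)
      (hfs t h1) (hgs t h1) ?_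
    intro x hx y hy
    have hx' : t < f x := hx
    have hy' : t < g y := hy
    have h2 : t ^ 2 < h ((x + y) / 2) ^ 2 := by
      refine lt_of_lt_of_le ?_ (H x y)
      nlinarith
    exact lt_of_pow_lt_pow_left₀ 2 (hh0 _) h2
  · have e1 : {a | t < f a} = ∅ := by
      ext a; simpa using (hf1 a).trans h1
    have e2 : {a | t < g a} = ∅ := by
      ext a; simpa using (hg1 a).trans h1
    simp [e1, e2]

lemma ennreal_amgm {a b c : ENNReal} (h : a + b ≤ 2 * c) : a * b ≤ c ^ 2 := by
  rcases eq_or_ne c ⊤ with rfl | hc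
  · simp
  have hab : a + b ≠ ⊤ := ne_top_of_le_ne_top (ENNReal.mul_ne_top (by simp) hc) h
  rw [ENNReal.add_ne_top] at hab
  lift a to NNReal using hab.1
  lift b to NNReal using hab.2
  lift c to NNReal using hc
  norm_cast at h ⊢
  rw [← NNReal.coe_le_coe] at h ⊢
  push_cast at h ⊢
  nlinarith [sq_nonneg ((a:ℝ) - b), a.2, b.2, c.2]

/-- Prékopa–Leindler for bounded functions, after normalising both suprema to `1`. -/
lemma pl_bounded {F G H : ℝ → ENNReal} (hF : Measurable F) (hG : Measurable G) (hH : Measurable H)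
    (N : NNReal) (hFN : ∀ x, F x ≤ N) (hGN : ∀ x, G x ≤ N)
    (h : ∀ x y, F x * G y ≤ H ((x + y) / 2) ^ 2) :
    (∫⁻ x, F x) * (∫⁻ x, G x) ≤ (∫⁻ x, H x) ^ 2 := by
  set α := ⨆ x, F x with hα
  set β := ⨆ x, G x with hβ
  have hαt : α ≠ ⊤ := ne_top_of_le_ne_top ENNReal.coe_ne_top (iSup_le hFN)
  have hβt : β ≠ ⊤ := ne_top_of_le_ne_top ENNReal.coe_ne_top (iSup_le hGN)
  rcases eq_or_ne α 0 with h0 | hα0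
  · have : F = 0 := by
      ext x; exact le_antisymm ((le_iSup F x).trans h0.le) bot_le
    simp [this]
  rcases eq_or_ne β 0 with h0 | hβ0
  · have : G = 0 := by
      ext x; exact le_antisymm ((le_iSup G x).trans h0.le) bot_le
    simp [this]
  lift α to NNReal using hαt with a ha
  lift β to NNReal using hβt with b hb
  have ha0 : 0 < a := by
    rw [pos_iff_ne_zero]; exact_mod_cast hα0
  have hb0 : 0 < b := by
    rw [pos_iff_ne_zero]; exact_mod_cast hβ0
  have hFa : ∀ x, F x ≤ a := fun x => (le_iSup F x).trans hα.ge
  have hGb : ∀ x, G x ≤ b := fun x => (le_iSup G x).trans hβ.ge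
  have hFt : ∀ x, F x ≠ ⊤ := fun x => ne_top_of_le_ne_top ENNReal.coe_ne_top (hFa x)
  have hGt : ∀ x, G x ≠ ⊤ := fun x => ne_top_of_le_ne_top ENNReal.coe_ne_top (hGb x)
  set c : NNReal := NNReal.sqrt (a * b) with hc
  have hc0 : 0 < c := by
    rw [hc]; exact NNReal.sqrt_pos.2 (mul_pos ha0 hb0)
  have hcc : c ^ 2 = a * b := NNReal.sq_sqrt _
  have hac : (a : ENNReal) ≠ 0 := by exact_mod_cast ha0.ne'
  have hbc : (b : ENNReal) ≠ 0 := by exact_mod_cast hb0.ne'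
  have hccc : (c : ENNReal) ≠ 0 := by exact_mod_cast hc0.ne'
  -- the normalised functions have supremum one
  have key : (∫⁻ x, ENNReal.ofReal ((F x / a).toReal)) +
      (∫⁻ x, ENNReal.ofReal ((G x / b).toReal))
      ≤ 2 * ∫⁻ x, ENNReal.ofReal ((min (H x / c) 1).toReal) := by
    have le1 : ∀ {K : ℝ → ENNReal} {k : NNReal}, 0 < k → (∀ x, K x ≤ k) → ∀ x, K x / k ≤ 1 :=
      fun hk hK x => ENNReal.div_le_of_le_mul (by simpa using hK x)
    refine pl_normalized (by fun_prop) (by fun_prop) (by fun_prop) (fun x => ENNReal.toReal_nonneg)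
      (fun x => ENNReal.toReal_nonneg) (fun x => ENNReal.toReal_nonneg) ?_ ?_ ?_ ?_ ?_
    · intro x
      simpa using ENNReal.toReal_mono (by simp) (le1 ha0 hFa x)
    · intro x
      simpa using ENNReal.toReal_mono (by simp) (le1 hb0 hGb x)
    · intro t ht
      rcases lt_or_ge t 0 with h1 | h1
      · exact ⟨0, h1.trans_le ENNReal.toReal_nonneg⟩
      have : ENNReal.ofReal t * a < ⨆ x, F x := by
        rw [← hα]
        calc ENNReal.ofReal t * a < 1 * a := by
              refine (ENNReal.mul_lt_mul_iff_left hac ENNReal.coe_ne_top).2 ?_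
              simpa using ht
          _ = a := one_mul _
      obtain ⟨x, hx⟩ := lt_iSup_iff.1 this
      refine ⟨x, ?_⟩
      rw [← ENNReal.ofReal_lt_iff_lt_toReal h1 (ENNReal.div_ne_top (hFt x) hac)]
      exact (ENNReal.lt_div_iff_mul_lt (Or.inl hac) (Or.inl ENNReal.coe_ne_top)).2 hx
    · intro t ht
      rcases lt_or_ge t 0 with h1 | h1
      · exact ⟨0, h1.trans_le ENNReal.toReal_nonneg⟩
      have : ENNReal.ofReal t * b < ⨆ x, G x := by
        rw [← hβ]
        calc ENNReal.ofReal t * b < 1 * b := by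
              refine (ENNReal.mul_lt_mul_iff_left hbc ENNReal.coe_ne_top).2 ?_
              simpa using ht
          _ = b := one_mul _
      obtain ⟨x, hx⟩ := lt_iSup_iff.1 this
      refine ⟨x, ?_⟩
      rw [← ENNReal.ofReal_lt_iff_lt_toReal h1 (ENNReal.div_ne_top (hGt x) hbc)]
      exact (ENNReal.lt_div_iff_mul_lt (Or.inl hbc) (Or.inl ENNReal.coe_ne_top)).2 hx
    · intro x y
      rw [← ENNReal.toReal_mul, ← ENNReal.toReal_pow]
      refine ENNReal.toReal_mono (by simp) ?_
      have h1 : F x / a * (G y / b) ≤ 1 :=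
        mul_le_one' (le1 ha0 hFa x) (le1 hb0 hGb y)
      have h2 : F x / a * (G y / b) ≤ (H ((x + y) / 2) / c) ^ 2 := by
        have e : (H ((x + y) / 2) / c) ^ 2 = H ((x + y) / 2) ^ 2 / (a * b) := by
          rw [div_eq_mul_inv, mul_pow, ← ENNReal.inv_pow, div_eq_mul_inv]
          congr 2
          exact_mod_cast hcc
        rw [e, div_eq_mul_inv, div_eq_mul_inv, div_eq_mul_inv,
          ENNReal.mul_inv (Or.inl hac) (Or.inl ENNReal.coe_ne_top), mul_mul_mul_comm]
        gcongr
        exact h x y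
      rcases le_total (H ((x + y) / 2) / c) 1 with h3 | h3
      · rwa [min_eq_left h3]
      · rw [min_eq_right h3]; simpa using h1
  have key2 := ennreal_amgm key
  have i1 : ∫⁻ x, ENNReal.ofReal ((F x / a).toReal) = (∫⁻ x, F x) / a := by
    simp_rw [fun x => ENNReal.ofReal_toReal (ENNReal.div_ne_top (hFt x) hac), div_eq_mul_inv]
    rw [lintegral_mul_const _ hF]
  have i2 : ∫⁻ x, ENNReal.ofReal ((G x / b).toReal) = (∫⁻ x, G x) / b := by
    simp_rw [fun x => ENNReal.ofReal_toReal (ENNReal.div_ne_top (hGt x) hbc), div_eq_mul_inv]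
    rw [lintegral_mul_const _ hG]
  have i3 : ∫⁻ x, ENNReal.ofReal ((min (H x / c) 1).toReal) ≤ (∫⁻ x, H x) / c := by
    rw [div_eq_mul_inv, ← lintegral_mul_const _ hH]
    refine lintegral_mono fun x => ?_
    refine ENNReal.ofReal_toReal_le.trans ?_
    rw [← div_eq_mul_inv]
    exact min_le_left _ _
  rw [i1, i2] at key2
  have key3 : (∫⁻ x, F x) / a * ((∫⁻ x, G x) / b) ≤ ((∫⁻ x, H x) / c) ^ 2 :=
    key2.trans (by gcongr)
  have e : ((∫⁻ x, H x) / c) ^ 2 = (∫⁻ x, H x) ^ 2 / (a * b) := by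
    rw [div_eq_mul_inv, mul_pow, ← ENNReal.inv_pow, div_eq_mul_inv]
    congr 2
    exact_mod_cast hcc
  have e2 : (∫⁻ x, F x) / a * ((∫⁻ x, G x) / b) = (∫⁻ x, F x) * (∫⁻ x, G x) / (a * b) := by
    rw [div_eq_mul_inv, div_eq_mul_inv, div_eq_mul_inv,
      ENNReal.mul_inv (Or.inl hac) (Or.inl ENNReal.coe_ne_top), mul_mul_mul_comm]
  rw [e, e2] at key3
  have hab : (a * b : ENNReal) ≠ 0 := mul_ne_zero hac hbc
  have habt : (a * b : ENNReal) ≠ ⊤ := ENNReal.mul_ne_top ENNReal.coe_ne_top ENNReal.coe_ne_top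
  have := (ENNReal.div_le_iff hab habt).1 key3
  rwa [ENNReal.div_mul_cancel hab habt] at this

/-- Prékopa–Leindler on the line, by truncation to bounded functions. -/
lemma pl_one {F G H : ℝ → ENNReal} (hF : Measurable F) (hG : Measurable G) (hH : Measurable H)
    (h : ∀ x y, F x * G y ≤ H ((x + y) / 2) ^ 2) :
    (∫⁻ x, F x) * (∫⁻ x, G x) ≤ (∫⁻ x, H x) ^ 2 := by
  have trunc : ∀ K : ℝ → ENNReal, Measurable K →
      ∫⁻ x, K x = ⨆ n : ℕ, ∫⁻ x, min (K x) ((n : NNReal) : ENNReal) := by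
    intro K hK
    rw [← lintegral_iSup (fun n => by fun_prop)]
    · congr 1
      ext x
      rw [← inf_iSup_eq]
      simp [ENNReal.iSup_natCast]
    · intro m n hmn x
      simp only
      gcongr
  rw [trunc F hF, trunc G hG, ENNReal.iSup_mul]
  refine iSup_le fun m => ?_
  rw [ENNReal.mul_iSup]
  refine iSup_le fun n => ?_
  refine pl_bounded (by fun_prop) (by fun_prop) hH (max m n) ?_ ?_ ?_
  · intro x
    refine (min_le_right _ _).trans ?_
    exact_mod_cast le_max_left _ _
  · intro x
    refine (min_le_right _ _).trans ?_
    exact_mod_cast le_max_right _ _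
  · intro x y
    refine le_trans ?_ (h x y)
    gcongr <;> exact min_le_left _ _

/-- The Prékopa–Leindler inequality in `ℝ^m` with weight one half. -/
theorem prekopa_leindler : ∀ (m : ℕ) {F G H : (Fin m → ℝ) → ENNReal}, Measurable F → Measurable G →
    Measurable H → (∀ x y, F x * G y ≤ H ((1 / 2 : ℝ) • (x + y)) ^ 2) →
    (∫⁻ x, F x) * (∫⁻ x, G x) ≤ (∫⁻ x, H x) ^ 2
  | 0, F, G, H, _, _, _, h => by
    have := h default default
    simp only [lintegral_unique, volume_pi, Measure.pi_univ]
    rw [Subsingleton.elim ((1 / 2 : ℝ) • (default + default : Fin 0 → ℝ)) default] at this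
    simp only [Finset.univ_eq_empty, Finset.prod_empty, mul_one]
    convert this
  | m + 1, F, G, H, hF, hG, hH, h => by
    set e := MeasurableEquiv.piFinSuccAbove (fun _ : Fin (m + 1) => ℝ) 0 with he
    have hsplit : ∀ K : (Fin (m + 1) → ℝ) → ENNReal, Measurable K →
        ∫⁻ x, K x = ∫⁻ s : ℝ, ∫⁻ x : Fin m → ℝ, K (Fin.cons s x) := by
      intro K hK
      rw [← (volume_preserving_piFinSuccAbove (fun _ : Fin (m + 1) => ℝ) 0).symm.lintegral_comp hK,
        Measure.volume_eq_prod, lintegral_prod (fun p => K (e.symm p))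
          (hK.comp e.symm.measurable).aemeasurable]
      refine lintegral_congr fun s => lintegral_congr fun x => ?_
      congr 1
      ext i
      refine Fin.cases ?_ (fun j => ?_) i <;>
        simp [he, MeasurableEquiv.piFinSuccAbove, Fin.insertNthEquiv]
    have hcons : Measurable fun p : ℝ × (Fin m → ℝ) => (Fin.cons p.1 p.2 : Fin (m + 1) → ℝ) :=
      measurable_pi_iff.2 fun i => by
        refine Fin.cases ?_ (fun j => ?_) i
        · simpa using measurable_fst
        · simp only [Fin.cons_succ]
          exact (measurable_pi_apply j).comp measurable_snd
    have hmeas : ∀ K : (Fin (m + 1) → ℝ) → ENNReal, Measurable K →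
        Measurable fun s : ℝ => ∫⁻ x : Fin m → ℝ, K (Fin.cons s x) := fun K hK =>
      (hK.comp hcons).lintegral_prod_right'
    rw [hsplit F hF, hsplit G hG, hsplit H hH]
    refine pl_one (hmeas F hF) (hmeas G hG) (hmeas H hH) fun s t => ?_
    have hs : ∀ s : ℝ, Measurable fun x : Fin m → ℝ => (Fin.cons s x : Fin (m + 1) → ℝ) :=
      fun s => hcons.comp (measurable_const.prodMk measurable_id)
    refine prekopa_leindler m (hF.comp (hs s)) (hG.comp (hs t)) (hH.comp (hs _)) fun x y => ?_
    refine (h (Fin.cons s x) (Fin.cons t y)).trans (le_of_eq ?_)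
    congr 2
    ext i
    refine Fin.cases ?_ (fun j => ?_) i <;> simp <;> ring

end

/-! ### Stability of log-concave marginals on the line -/

lemma logLip_continuous {K : ℝ → ℝ} {C : ℝ} (hpos : ∀ s, 0 < K s)
    (hlip : ∀ s s', K s ≤ Real.exp (C * |s - s'|) * K s') : Continuous K := by
  have h1 : LipschitzWith (Real.toNNReal |C|) fun s => Real.log (K s) := by
    refine LipschitzWith.of_le_add_mul _ fun s s' => ?_
    have h := Real.log_le_log (hpos s) (hlip s s')
    rw [Real.log_mul (Real.exp_pos _).ne' (hpos s').ne', Real.log_exp] at h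
    rw [Real.coe_toNNReal _ (abs_nonneg _), Real.dist_eq]
    have : C * |s - s'| ≤ |C| * |s - s'| := by gcongr; exact le_abs_self C
    linarith
  have h2 : K = fun s => Real.exp (Real.log (K s)) := by
    ext s; rw [Real.exp_log (hpos s)]
  rw [h2]
  exact Real.continuous_exp.comp h1.continuous

/-- A log-concave integrable function with bounded logarithmic slope dominates its own tail. -/
lemma tail_bound {G : ℝ → ℝ} {C : ℝ} (hC : 0 ≤ C) (hpos : ∀ s, 0 < G s)
    (hlip : ∀ s s', G s ≤ Real.exp (C * |s - s'|) * G s')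
    (hconc : ∀ s, G (s + 2) * G s ≤ G (s + 1) ^ 2) (hint : Integrable G) :
    ∃ K, ∀ s ≥ 0, ∫ x in Ioi s, G x ≤ K * G s := by
  have hcont := logLip_continuous hpos hlip
  have hr : ∀ s, G (s + 2) / G (s + 1) ≤ G (s + 1) / G s := fun s => by
    rw [div_le_div_iff₀ (hpos _) (hpos _)]; linarith [hconc s]
  have hrn : ∀ (s : ℝ) (j : ℕ), G (s + j + 1) / G (s + j) ≤ G (s + 1) / G s := by
    intro s j
    induction j with
    | zero => simp
    | succ j ih =>
      refine le_trans ?_ ih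
      have := hr (s + j)
      push_cast
      rwa [show s + (j + 1) + 1 = s + j + 2 by ring, show s + ((j:ℝ) + 1) = s + j + 1 by ring]
  -- the unit-step ratio drops below one, uniformly on a unit interval
  have hk : ∃ k : ℕ, ∀ s ∈ Icc (0:ℝ) 1, G (s + k + 1) < G (s + k) := by
    by_contra! hcon
    choose σ hσ hσ2 using hcon
    have hlow : ∀ k : ℕ, ∀ x ∈ Icc (k:ℝ) (k + 1), Real.exp (-2 * C) * G 0 ≤ G x := by
      intro k x hx
      have hj : ∀ j ≤ k, G (σ k) ≤ G (σ k + j) := by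
        intro j
        induction j with
        | zero => simp
        | succ j ih =>
          intro hjk
          refine (ih (by omega)).trans ?_
          have h1 := hrn (σ k + j) (k - j)
          rw [Nat.cast_sub (by omega), show σ k + j + ((k:ℝ) - j) = σ k + k by ring] at h1
          have h2 : 1 ≤ G (σ k + k + 1) / G (σ k + k) := by
            rw [le_div_iff₀ (hpos _)]; simpa using hσ2 k
          have h3 := h2.trans h1
          rw [le_div_iff₀ (hpos _), one_mul] at h3
          push_cast
          rwa [← add_assoc]
      have h1 := hlip 0 (σ k)
      have h2 := hlip (σ k + k) x
      have h3 := hj k le_rfl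
      obtain ⟨ha, hb⟩ := hσ k
      have e1 : |0 - σ k| ≤ 1 := by rw [abs_le]; constructor <;> linarith
      have e2 : |σ k + k - x| ≤ 1 := by
        rw [abs_le]; constructor <;> linarith [hx.1, hx.2]
      have h1' : G 0 ≤ Real.exp C * G (σ k) := h1.trans (by
        have := (hpos (σ k)).le
        gcongr; nlinarith)
      have h2' : G (σ k + k) ≤ Real.exp C * G x := h2.trans (by
        have := (hpos x).le
        gcongr; nlinarith)
      have : G 0 ≤ Real.exp C * (Real.exp C * G x) :=
        h1'.trans (by gcongr; exact h3.trans h2')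
      calc Real.exp (-2 * C) * G 0 ≤ Real.exp (-2 * C) * (Real.exp C * (Real.exp C * G x)) := by
            gcongr
        _ = G x := by
          rw [← mul_assoc, ← mul_assoc, ← Real.exp_add, ← Real.exp_add]
          ring_nf; simp
    have hsum : ∀ N : ℕ, N * (Real.exp (-2 * C) * G 0) ≤ ∫ x, G x := by
      intro N
      have h1 : ∫ x in (0:ℝ)..N, Real.exp (-2 * C) * G 0 ≤ ∫ x in (0:ℝ)..N, G x := by
        refine intervalIntegral.integral_mono_on (by positivity) (by simp)
          hint.intervalIntegrable fun x hx => ?_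
        exact hlow ⌊x⌋₊ x ⟨Nat.floor_le hx.1, (Nat.lt_floor_add_one x).le⟩
      simp only [intervalIntegral.integral_const, sub_zero, smul_eq_mul] at h1
      refine h1.trans ?_
      rw [intervalIntegral.integral_of_le (by positivity)]
      exact setIntegral_le_integral hint (ae_of_all _ fun x => (hpos x).le)
    obtain ⟨N, hN⟩ := exists_nat_gt ((∫ x, G x) / (Real.exp (-2 * C) * G 0))
    rw [div_lt_iff₀ (mul_pos (Real.exp_pos _) (hpos 0))] at hN
    linarith [hsum N]
  obtain ⟨k, hk⟩ := hk
  obtain ⟨q, hq1, hq⟩ : ∃ q < 1, ∀ s ∈ Icc (0:ℝ) 1, G (s + k + 1) / G (s + k) ≤ q := by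
    obtain ⟨x, hx, hmax⟩ := isCompact_Icc.exists_isMaxOn (nonempty_Icc.2 zero_le_one)
      (f := fun s => G (s + k + 1) / G (s + k)) (s := Icc (0:ℝ) 1)
      (Continuous.continuousOn (by
        refine Continuous.div (by fun_prop) (by fun_prop) fun x => (hpos _).ne'))
    refine ⟨_, ?_, fun s hs => hmax hs⟩
    rw [div_lt_one (hpos _)]; exact hk x hx
  have hqs : ∀ s ≥ (k:ℝ), G (s + 1) ≤ q * G s := by
    intro s hs
    have h0 : 0 ≤ s - k := by linarith
    have h1 := hq (s - k - ⌊s - k⌋₊) ⟨by linarith [Nat.floor_le h0],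
      by linarith [Nat.lt_floor_add_one (s - k)]⟩
    have h2 := hrn (s - k - ⌊s - k⌋₊ + k) ⌊s - k⌋₊
    rw [show s - k - ⌊s - k⌋₊ + k + (⌊s - k⌋₊ : ℝ) = s by ring] at h2
    have := h2.trans h1
    rwa [div_le_iff₀ (hpos _)] at this
  have htail : ∀ s ≥ (k:ℝ), ∫ x in Ioi s, G x ≤ Real.exp C / (1 - q) * G s := by
    intro s hs
    have e1 : ∫ x in Ioi (s + 1), G x = ∫ x in Ioi s, G (x + 1) := by
      have := (measurePreserving_add_right volume (1:ℝ)).setIntegral_preimage_emb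
        (measurableEmbedding_addRight 1) G (Ioi (s + 1))
      rw [← this]; simp
    have e2 : ∫ x in Ioi s, G (x + 1) ≤ q * ∫ x in Ioi s, G x := by
      rw [← integral_const_mul]
      refine setIntegral_mono_on (hint.comp_add_right 1).integrableOn
        (hint.const_mul q).integrableOn measurableSet_Ioi fun x hx => hqs x ?_
      exact hs.trans (le_of_lt hx)
    have e3 : ∫ x in Ioi s, G x = (∫ x in s..(s+1), G x) + ∫ x in Ioi (s + 1), G x := by
      rw [intervalIntegral.integral_of_le (by linarith),
        ← setIntegral_union (by
          rw [Set.disjoint_left]; intro x hx hx'; exact absurd hx.2 (not_le.2 hx'))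
          measurableSet_Ioi hint.integrableOn hint.integrableOn,
          Ioc_union_Ioi_eq_Ioi (by linarith)]
    have e4 : ∫ x in s..(s+1), G x ≤ Real.exp C * G s := by
      have : ∫ x in s..(s+1), G x ≤ ∫ x in s..(s+1), Real.exp C * G s := by
        refine intervalIntegral.integral_mono_on (by linarith) hint.intervalIntegrable (by simp)
          fun x hx => (hlip x s).trans ?_
        have := (hpos s).le
        have hx' : |x - s| ≤ 1 := by rw [abs_le]; constructor <;> linarith [hx.1, hx.2]
        gcongr; nlinarith
      simpa using this
    rw [div_mul_eq_mul_div, le_div_iff₀ (by linarith)]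
    nlinarith
  have hT0 : ∀ s, ∫ x in Ioi s, G x ≤ ∫ x, G x := fun s =>
    setIntegral_le_integral hint (ae_of_all _ fun x => (hpos x).le)
  have hI0 : 0 ≤ ∫ x, G x := integral_nonneg fun x => (hpos x).le
  have hmid : ∀ s ≥ 0, s ≤ (k:ℝ) →
      ∫ x in Ioi s, G x ≤ (∫ x, G x) * Real.exp (C * k) / G 0 * G s := by
    intro s hs hsk
    refine (hT0 s).trans ?_
    have h1 : G 0 ≤ Real.exp (C * k) * G s := (hlip 0 s).trans (by
      have := (hpos s).le
      have : |0 - s| ≤ k := by rw [abs_le]; constructor <;> linarith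
      gcongr)
    rw [div_mul_eq_mul_div, le_div_iff₀ (hpos 0), mul_assoc]
    gcongr
  refine ⟨max (Real.exp C / (1 - q)) ((∫ x, G x) * Real.exp (C * k) / G 0), fun s hs => ?_⟩
  have := (hpos s).le
  rcases le_total s k with h | h
  · refine (hmid s hs h).trans ?_
    gcongr; exact le_max_right _ _
  · refine (htail s h).trans ?_
    gcongr; exact le_max_left _ _

/-- The primitive of a mean-zero `g` with `|g| ≤ C * G` is bounded by a multiple of `G`: use the left
tail on the left half-line and the right tail on the right one. -/
lemma primitive_bound {G g : ℝ → ℝ} {C : ℝ} (hC : 0 ≤ C) (hpos : ∀ s, 0 < G s)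
    (hlip : ∀ s s', G s ≤ Real.exp (C * |s - s'|) * G s')
    (hconc : ∀ s a, G (s + a) * G (s - a) ≤ G s ^ 2) (hint : Integrable G)
    (hg : Continuous g) (hgb : ∀ s, |g s| ≤ C * G s) (hg0 : ∫ x, g x = 0) :
    ∃ B, 0 ≤ B ∧ ∀ s, |∫ x in Iic s, g x| ≤ B * G s := by
  have hgi : Integrable g := (hint.const_mul C).mono' hg.aestronglyMeasurable
    (ae_of_all _ fun s => by simpa using hgb s)
  obtain ⟨K1, hK1⟩ := tail_bound hC hpos hlip (fun s => by
    have := hconc (s + 1) 1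
    rwa [add_sub_cancel_right, show s + 1 + 1 = s + 2 by ring] at this) hint
  obtain ⟨K2, hK2⟩ := tail_bound (G := fun s => G (-s)) hC (fun s => hpos _) (fun s s' => by
    have := hlip (-s) (-s')
    rwa [show |-s - -s'| = |s - s'| by rw [← abs_neg]; ring_nf] at this) (fun s => by
    have := hconc (-s - 1) (-1)
    ring_nf at this ⊢
    exact this) hint.comp_neg
  have hb : ∀ A : Set ℝ, |∫ x in A, g x| ≤ C * ∫ x in A, G x := by
    intro A
    rw [← integral_const_mul]
    refine (abs_integral_le_integral_abs).trans ?_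
    exact integral_mono hgi.abs.integrableOn (hint.const_mul C).integrableOn hgb
  have hsplit : ∀ s, ∫ x in Iic s, g x = - ∫ x in Ioi s, g x := by
    intro s
    have := integral_add_compl (measurableSet_Iic (a := s)) hgi
    rw [compl_Iic, hg0] at this
    linarith
  refine ⟨C * max |K1| |K2|, by positivity, fun s => ?_⟩
  have hs := (hpos s).le
  rw [mul_assoc]
  rcases le_total 0 s with h | h
  · rw [hsplit, abs_neg]
    refine (hb _).trans ?_
    gcongr
    refine (hK1 s h).trans ?_
    gcongr
    exact (le_abs_self _).trans (le_max_left _ _)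
  · refine (hb _).trans ?_
    gcongr
    have := hK2 (-s) (by linarith)
    rw [integral_comp_neg_Ioi] at this
    simp only [neg_neg] at this
    refine this.trans ?_
    gcongr
    exact (le_abs_self _).trans (le_max_right _ _)

lemma cauchy_schwarz_interval {G u u' : ℝ → ℝ} {E : ℝ}
    (hder : ∀ s, HasDerivAt u (u' s) s) (hu' : Continuous u')
    (hG : Continuous G) (hpos : ∀ s, 0 < G s)
    (hi : Integrable fun s => G s * u' s ^ 2) (hE : ∫ s, G s * u' s ^ 2 ≤ E)
    {a b γ : ℝ} (hab : a < b) (hγ : ∀ s ∈ Icc a b, γ ≤ G s) :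
    γ * (u b - u a) ^ 2 ≤ (b - a) * E := by
  have h1 : ∫ s in a..b, u' s = u b - u a :=
    intervalIntegral.integral_eq_sub_of_hasDerivAt (fun s _ => hder s) (hu'.intervalIntegrable _ _)
  have hE0 : 0 ≤ E := le_trans (integral_nonneg fun s => by have := (hpos s).le; positivity) hE
  rcases le_or_gt γ 0 with h0 | h0
  · have : 0 ≤ (b - a) * E := mul_nonneg (by linarith) hE0
    nlinarith [sq_nonneg (u b - u a)]
  have h2 : γ * ∫ s in a..b, u' s ^ 2 ≤ E := by
    rw [← intervalIntegral.integral_const_mul]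
    have : ∫ s in a..b, γ * u' s ^ 2 ≤ ∫ s in a..b, G s * u' s ^ 2 := by
      refine intervalIntegral.integral_mono_on hab.le (Continuous.intervalIntegrable (by fun_prop) _ _)
        (Continuous.intervalIntegrable (by fun_prop) _ _) fun s hs => ?_
      gcongr; exact hγ s hs
    refine this.trans (le_trans ?_ hE)
    rw [intervalIntegral.integral_of_le hab.le]
    exact setIntegral_le_integral hi (ae_of_all _ fun s => by have := (hpos s).le; positivity)
  set l := (u b - u a) / (b - a) with hl
  have h3 : 0 ≤ ∫ s in a..b, (u' s - l) ^ 2 :=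
    intervalIntegral.integral_nonneg hab.le fun s _ => sq_nonneg _
  have h4 : ∫ s in a..b, (u' s - l) ^ 2
      = (∫ s in a..b, u' s ^ 2) - 2 * l * (u b - u a) + l ^ 2 * (b - a) := by
    rw [← h1, ← intervalIntegral.integral_const_mul, ← intervalIntegral.integral_sub
      (Continuous.intervalIntegrable (by fun_prop) _ _)
      (Continuous.intervalIntegrable (by fun_prop) _ _)]
    have : ∫ s in a..b, l ^ 2 = l ^ 2 * (b - a) := by simp [mul_comm]
    rw [← this, ← intervalIntegral.integral_add
      (Continuous.intervalIntegrable (by fun_prop) _ _)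
      (Continuous.intervalIntegrable (by fun_prop) _ _)]
    refine intervalIntegral.integral_congr fun s _ => ?_
    ring
  have h5 : l * (b - a) = u b - u a := by
    rw [hl]; field_simp [(sub_pos.2 hab).ne']
  have h6 : l * (u b - u a) ≤ ∫ s in a..b, u' s ^ 2 := by
    have : l ^ 2 * (b - a) = l * (u b - u a) := by rw [← h5]; ring
    linarith
  have hba : 0 < b - a := sub_pos.2 hab
  calc γ * (u b - u a) ^ 2 = (b - a) * (γ * (l * (u b - u a))) := by rw [← h5]; ring
    _ ≤ (b - a) * (γ * ∫ s in a..b, u' s ^ 2) := by gcongr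
    _ ≤ _ := by gcongr

/-- The Jacobian gain `1 - (t * w) ^ 2`, turned from a product into a sum; the arithmetic and
geometric means differ by `(√A - √B) ^ 2`. -/
lemma transport_step {A B G t w : ℝ} (hA : 0 ≤ A) (hB : 0 ≤ B) (hG : 0 ≤ G)
    (htw : (t * w) ^ 2 ≤ 1) (h : A * B ≤ G ^ 2 * (1 - (t * w) ^ 2)) :
    A + B - 2 * G ≤ - (t ^ 2 * (G * w ^ 2)) + (√A - √B) ^ 2 := by
  have hs : √A * √B ≤ G * (1 - (t * w) ^ 2 / 2) := by
    rw [← Real.sqrt_mul hA]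
    refine Real.sqrt_le_iff.2 ⟨mul_nonneg hG (by linarith), h.trans ?_⟩
    rw [mul_pow G]
    gcongr
    nlinarith [sq_nonneg ((t*w)^2)]
  nlinarith [Real.sq_sqrt hA, Real.sq_sqrt hB]

/-- The error term of `transport_step` when `A` and `B` are within a factor `exp (2 * k)` of `G`. -/
lemma sqrt_close {A B G k : ℝ} (hG : 0 ≤ G) (hk : 0 ≤ k) (hk1 : k ≤ 1)
    (h1 : Real.exp (-2 * k) * G ≤ A) (h2 : A ≤ Real.exp (2 * k) * G)
    (h3 : Real.exp (-2 * k) * G ≤ B) (h4 : B ≤ Real.exp (2 * k) * G) :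
    (√A - √B) ^ 2 ≤ 9 * k ^ 2 * G := by
  have e : ∀ x : ℝ, √(Real.exp (2 * x) * G) = Real.exp x * √G := by
    intro x
    rw [Real.sqrt_mul (Real.exp_pos _).le, two_mul, Real.exp_add,
      Real.sqrt_mul_self (Real.exp_pos _).le]
  have h1' := Real.sqrt_le_sqrt h1
  have h2' := Real.sqrt_le_sqrt h2
  have h3' := Real.sqrt_le_sqrt h3
  have h4' := Real.sqrt_le_sqrt h4
  rw [show -2 * k = 2 * -k by ring, e] at h1' h3'
  rw [e] at h2' h4'
  have hs := Real.sqrt_nonneg G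
  have b1 : Real.exp k ≤ 1 + 2 * k := by
    have := Real.abs_exp_sub_one_le (x := k) (by rwa [abs_of_nonneg hk])
    rw [abs_of_nonneg hk] at this
    linarith [le_abs_self (Real.exp k - 1)]
  have b2 : 1 - k ≤ Real.exp (-k) := by linarith [Real.add_one_le_exp (-k)]
  have b3 : Real.exp k * √G ≤ (1 + 2 * k) * √G := by gcongr
  have b4 : (1 - k) * √G ≤ Real.exp (-k) * √G := by gcongr
  have : |√A - √B| ≤ 3 * k * √G := by
    rw [abs_le]; constructor <;> linarith
  calc (√A - √B) ^ 2 = |√A - √B| ^ 2 := (sq_abs _).symm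
    _ ≤ (3 * k * √G) ^ 2 := by gcongr
    _ = 9 * k ^ 2 * G := by rw [mul_pow, Real.sq_sqrt hG]; ring

/-- Quantitative stability in the Prékopa–Leindler inequality on the line. The number `q` is the
second derivative at `0` of the total mass of `Γ t`, and `g` is the derivative of `Γ t s` in `t`.
Write `u s = -(∫ x in Iic s, g x) / Γ 0 s`, the velocity of the monotone transport from `Γ 0` to
`Γ t`. Comparing `Γ t (s + t u(s))` with `Γ (-t) (s - t u(s))` by `hPL` gains the Jacobian factor
`1 - (t u'(s)) ^ 2`, so the Dirichlet energy of `u` with weight `Γ 0` is at most `-q`, and the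
Cauchy–Schwarz inequality on `[a, b]` gives the claim. -/
theorem oneD {Γ : ℝ → ℝ → ℝ} {g G1 : ℝ → ℝ} {C q : ℝ} (hC : 0 ≤ C)
    (hpos : ∀ t s, 0 < Γ t s)
    (hPL : ∀ t s a, Γ t (s + a) * Γ (-t) (s - a) ≤ Γ 0 s ^ 2)
    (hlip : ∀ t t' s s', Γ t s ≤ Real.exp (C * (|t - t'| + |s - s'|)) * Γ t' s')
    (hder : ∀ s w, HasDerivAt (fun t => Γ t (s + t * w)) (g s + w * G1 s) 0)
    (hG : ∀ s, HasDerivAt (Γ 0) (G1 s) s)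
    (hgc : Continuous g) (hG1c : Continuous G1)
    (hgb : ∀ s, |g s| ≤ C * Γ 0 s) (hG1b : ∀ s, |G1 s| ≤ C * Γ 0 s)
    (hGi : Integrable (Γ 0)) (hg0 : ∫ s, g s = 0)
    (hZ : Tendsto (fun t => ((∫ s, Γ t s) + (∫ s, Γ (-t) s) - 2 * ∫ s, Γ 0 s) / t ^ 2)
      (𝓝[≠] 0) (𝓝 q))
    {a b γ : ℝ} (hab : a < b) (hγ : ∀ s ∈ Icc a b, γ ≤ Γ 0 s) :
    γ * ((∫ s in Iic b, g s) / Γ 0 b - (∫ s in Iic a, g s) / Γ 0 a) ^ 2 ≤ (b - a) * (-q) := by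
  have hlipt : ∀ t s s', Γ t s ≤ Real.exp (C * |s - s'|) * Γ t s' := fun t s s' => by
    simpa using hlip t t s s'
  have hcont : ∀ t, Continuous (Γ t) := fun t => logLip_continuous (hpos t) (hlipt t)
  obtain ⟨B, hB0, hB⟩ := primitive_bound hC (hpos 0) (hlipt 0)
    (fun s a => by simpa using hPL 0 s a) hGi hgc hgb hg0
  have hgi : Integrable g := (hGi.const_mul C).mono' hgc.aestronglyMeasurable
    (ae_of_all _ fun s => by simpa using hgb s)
  set I : ℝ → ℝ := fun s => ∫ x in Iic s, g x with hI
  have hId : ∀ s, HasDerivAt I (g s) s := by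
    intro s
    have h1 : I = fun s => (∫ x in Iic 0, g x) + ∫ x in (0:ℝ)..s, g x := by
      ext s
      rw [← intervalIntegral.integral_Iic_sub_Iic hgi.integrableOn hgi.integrableOn]
      simp [hI]
    rw [h1]
    exact (intervalIntegral.integral_hasDerivAt_right (hgc.intervalIntegrable _ _)
      (hgc.stronglyMeasurableAtFilter _ _) hgc.continuousAt).const_add _
  set u : ℝ → ℝ := fun s => - I s / Γ 0 s with hu
  set u' : ℝ → ℝ := fun s => - (g s + u s * G1 s) / Γ 0 s with hu'
  have hud : ∀ s, HasDerivAt u (u' s) s := by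
    intro s
    have hne := (hpos 0 s).ne'
    refine ((hId s).neg.div (hG s) hne).congr_deriv ?_
    change (-g s * Γ 0 s - -I s * G1 s) / Γ 0 s ^ 2 = -(g s + -I s / Γ 0 s * G1 s) / Γ 0 s
    field_simp
    ring
  have huc : Continuous u := continuous_iff_continuousAt.2 fun s => (hud s).continuousAt
  have hu'c : Continuous u' :=
    ((hgc.add (huc.mul hG1c)).neg).div (hcont 0) fun s => (hpos 0 s).ne'
  have hub : ∀ s, |u s| ≤ B := by
    intro s
    simp only [hu]
    rw [abs_div, abs_neg, abs_of_pos (hpos 0 s), div_le_iff₀ (hpos 0 s)]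
    exact hB s
  set B' := C + B * C with hB'
  have hB'0 : 0 ≤ B' := by positivity
  have hu'b : ∀ s, |u' s| ≤ B' := by
    intro s
    simp only [hu']
    rw [abs_div, abs_neg, abs_of_pos (hpos 0 s), div_le_iff₀ (hpos 0 s)]
    have h1 : |u s * G1 s| ≤ B * (C * Γ 0 s) := by
      rw [abs_mul]
      exact mul_le_mul (hub s) (hG1b s) (abs_nonneg _) hB0
    have := abs_add_le (g s) (u s * G1 s)
    have := hgb s
    rw [hB']; nlinarith
  have hi : Integrable fun s => Γ 0 s * u' s ^ 2 := by
    refine (hGi.const_mul (B' ^ 2)).mono' ((hcont 0).mul (hu'c.pow 2)).aestronglyMeasurable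
      (ae_of_all _ fun s => ?_)
    have := (hpos 0 s).le
    rw [Real.norm_of_nonneg (by positivity), mul_comm]
    refine mul_le_mul_of_nonneg_right ?_ this
    exact sq_le_sq' (abs_le.1 (hu'b s)).1 (abs_le.1 (hu'b s)).2
  -- it suffices to bound the Dirichlet energy of `u`
  suffices hE : ∫ s, Γ 0 s * u' s ^ 2 ≤ -q by
    have := cauchy_schwarz_interval hud hu'c (hcont 0) (hpos 0) hi hE hab hγ
    convert this using 2
    simp only [hu]
    ring
  set α : ℝ → ℝ → ℝ := fun t s => Γ t (s + t * u s) * (1 + t * u' s) with hα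
  -- for small `t` the map `s ↦ s + t u(s)` is a diffeomorphism of the line
  set k := C * (1 + B) + 2 * B' + 1 with hk
  have hk0 : 0 < k := by positivity
  have htB : ∀ t : ℝ, |t| * k ≤ 1 → ∀ s, |t * u' s| ≤ |t| * B' ∧ |t| * B' ≤ 1 / 2 := by
    intro t ht s
    constructor
    · rw [abs_mul]; gcongr; exact hu'b s
    · have h1 : 0 ≤ |t| * (C * (1 + B) + 1) := by positivity
      rw [hk] at ht
      nlinarith
  have hpos1 : ∀ t : ℝ, |t| * k ≤ 1 → ∀ s, 1 / 2 ≤ 1 + t * u' s := by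
    intro t ht s
    obtain ⟨h1, h2⟩ := htB t ht s
    linarith [(abs_le.1 h1).1]
  have hint : ∀ t : ℝ, |t| * k ≤ 1 → ∫ s, Γ t s = ∫ s, α t s := by
    intro t ht
    have hd : ∀ s, HasDerivAt (fun s => s + t * u s) (1 + t * u' s) s := fun s =>
      (hasDerivAt_id s).add ((hud s).const_mul t)
    have hmono : StrictMono fun s => s + t * u s := by
      refine strictMono_of_deriv_pos fun s => ?_
      rw [(hd s).deriv]
      linarith [hpos1 t ht s]
    have hbd : ∀ s, |t * u s| ≤ |t| * B := fun s => by
      rw [abs_mul]; gcongr; exact hub s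
    have hsurj : Function.Surjective fun s => s + t * u s := by
      refine Continuous.surjective (by fun_prop) ?_ ?_
      · refine tendsto_atTop_mono (f := fun s => s + -(|t| * B)) (fun s => ?_)
          (tendsto_atTop_add_const_right _ _ tendsto_id)
        linarith [(abs_le.1 (hbd s)).1]
      · refine tendsto_atBot_mono (fun s => ?_)
          (tendsto_atBot_add_const_right _ (|t| * B) tendsto_id)
        simp only [id]
        linarith [(abs_le.1 (hbd s)).2]
    have := integral_image_eq_integral_abs_deriv_smul (s := univ) MeasurableSet.univ
      (fun s _ => (hd s).hasDerivWithinAt) hmono.injective.injOn (Γ t)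
    rw [image_univ, hsurj.range_eq] at this
    simp only [setIntegral_univ] at this
    rw [this]
    refine integral_congr_ae (ae_of_all _ fun s => ?_)
    simp only [hα, smul_eq_mul]
    rw [abs_of_pos (by linarith [hpos1 t ht s]), mul_comm]
  have hα0 : ∀ t : ℝ, |t| * k ≤ 1 → ∀ s, 0 ≤ α t s := fun t ht s =>
    mul_nonneg (hpos _ _).le (by linarith [hpos1 t ht s])
  have hαu : ∀ t : ℝ, |t| * k ≤ 1 → ∀ s, α t s ≤ Real.exp (2 * (|t| * k)) * Γ 0 s := by
    intro t ht s
    obtain ⟨h1, h2⟩ := htB t ht s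
    have e1 : Γ t (s + t * u s) ≤ Real.exp (C * (|t| + |t| * B)) * Γ 0 s := by
      refine (hlip t 0 (s + t * u s) s).trans ?_
      have := (hpos 0 s).le
      have h3 : |t * u s| ≤ |t| * B := by rw [abs_mul]; gcongr; exact hub s
      rw [sub_zero, add_sub_cancel_left]
      gcongr
    have e2 : 1 + t * u' s ≤ Real.exp (|t| * B') := by
      linarith [le_abs_self (t * u' s), Real.add_one_le_exp (|t| * B')]
    have := (hpos 0 s).le
    calc α t s ≤ (Real.exp (C * (|t| + |t| * B)) * Γ 0 s) * Real.exp (|t| * B') := by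
          refine mul_le_mul e1 e2 (by linarith [hpos1 t ht s]) (by positivity)
      _ = Real.exp (C * (|t| + |t| * B) + |t| * B') * Γ 0 s := by rw [Real.exp_add]; ring
      _ ≤ _ := by
        gcongr
        have : 0 ≤ |t| * (C * (1 + B) + 3 * B' + 2) := by positivity
        rw [hk]; linarith
  have hαl : ∀ t : ℝ, |t| * k ≤ 1 → ∀ s, Real.exp (-2 * (|t| * k)) * Γ 0 s ≤ α t s := by
    intro t ht s
    obtain ⟨h1, h2⟩ := htB t ht s
    have hG0 := (hpos 0 s).le
    have e1 : Real.exp (-(C * (|t| + |t| * B))) * Γ 0 s ≤ Γ t (s + t * u s) := by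
      have h3 : |t * u s| ≤ |t| * B := by rw [abs_mul]; gcongr; exact hub s
      have h4 := hlip 0 t s (s + t * u s)
      rw [zero_sub, abs_neg, sub_add_cancel_left, abs_neg] at h4
      have h5 : Γ 0 s ≤ Real.exp (C * (|t| + |t| * B)) * Γ t (s + t * u s) := by
        refine h4.trans ?_
        have := (hpos t (s + t * u s)).le
        gcongr
      calc _ ≤ Real.exp (-(C * (|t| + |t| * B))) *
              (Real.exp (C * (|t| + |t| * B)) * Γ t (s + t * u s)) := by gcongr
        _ = _ := by rw [← mul_assoc, ← Real.exp_add]; simp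
    have e2 : Real.exp (-(2 * (|t| * B'))) ≤ 1 + t * u' s := by
      have hx : 0 ≤ |t| * B' := by positivity
      have h3 : 1 - |t| * B' ≤ 1 + t * u' s := by linarith [(abs_le.1 h1).1]
      refine le_trans ?_ h3
      rw [Real.exp_neg]
      refine inv_le_of_inv_le₀ (by linarith) ?_
      refine le_trans ?_ (Real.add_one_le_exp _)
      rw [inv_le_iff_one_le_mul₀ (by linarith)]
      nlinarith
    calc _ ≤ Real.exp (-(C * (|t| + |t| * B)) + -(2 * (|t| * B'))) * Γ 0 s := by
          gcongr
          have : 0 ≤ |t| * (C * (1 + B) + 2 * B' + 2) := by positivity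
          rw [hk]; linarith
      _ = (Real.exp (-(C * (|t| + |t| * B))) * Γ 0 s) * Real.exp (-(2 * (|t| * B'))) := by
          rw [Real.exp_add]; ring
      _ ≤ α t s := mul_le_mul e1 e2 (Real.exp_pos _).le (hpos _ _).le
  have hαc : ∀ t, Continuous (α t) := fun t =>
    ((hcont t).comp (by fun_prop)).mul (by fun_prop)
  have hαi : ∀ t : ℝ, |t| * k ≤ 1 → Integrable (α t) := fun t ht =>
    (hGi.const_mul _).mono' (hαc t).aestronglyMeasurable
      (ae_of_all _ fun s => by rw [Real.norm_of_nonneg (hα0 t ht s)]; exact hαu t ht s)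
  set R : ℝ → ℝ → ℝ := fun t s => (√(α t s) - √(α (-t) s)) ^ 2 / t ^ 2 with hR
  have hRb : ∀ t : ℝ, t ≠ 0 → |t| * k ≤ 1 → ∀ s, R t s ≤ 9 * k ^ 2 * Γ 0 s := by
    intro t ht0 ht s
    have ht' : |-t| * k ≤ 1 := by rwa [abs_neg]
    have h1 := hαl (-t) ht' s
    have h2 := hαu (-t) ht' s
    rw [abs_neg] at h1 h2
    have := sqrt_close (hpos 0 s).le (by positivity) ht (hαl t ht s) (hαu t ht s) h1 h2
    rw [hR, div_le_iff₀ (by positivity)]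
    refine this.trans (le_of_eq ?_)
    rw [mul_pow, sq_abs]; ring
  have hRc : ∀ t, Continuous (R t) := fun t => by
    exact (((hαc t).sqrt.sub (hαc (-t)).sqrt).pow 2).div_const _
  have hsmall : ∀ᶠ t : ℝ in 𝓝[≠] 0, t ≠ 0 ∧ |t| * k ≤ 1 := by
    refine (eventually_mem_nhdsWithin).and ?_
    refine nhdsWithin_le_nhds ?_
    have : Tendsto (fun t : ℝ => |t| * k) (𝓝 0) (𝓝 (|0| * k)) :=
      (Continuous.tendsto (by fun_prop) 0)
    simp only [abs_zero, zero_mul] at this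
    exact this.eventually (eventually_le_nhds zero_lt_one)
  have hRi : Tendsto (fun t => ∫ s, R t s) (𝓝[≠] 0) (𝓝 (∫ s : ℝ, (0:ℝ))) := by
    refine tendsto_integral_filter_of_dominated_convergence (fun s => 9 * k ^ 2 * Γ 0 s)
      (Eventually.of_forall fun t => (hRc t).aestronglyMeasurable) ?_ (hGi.const_mul _) ?_
    · filter_upwards [hsmall] with t ht
      refine ae_of_all _ fun s => ?_
      rw [Real.norm_of_nonneg (by simp only [hR]; positivity)]
      exact hRb t ht.1 ht.2 s
    · refine ae_of_all _ fun s => ?_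
      have hαd : HasDerivAt (fun t => α t s) 0 0 := by
        have h1 := (hder s (u s)).mul (((hasDerivAt_id (0:ℝ)).mul_const (u' s)).const_add 1)
        refine h1.congr_deriv ?_
        have hne := (hpos 0 s).ne'
        have h2 : u' s * Γ 0 s = -(g s + u s * G1 s) := by
          simp only [hu']; field_simp
        change (g s + u s * G1 s) * (1 + 0 * u' s) + Γ 0 (s + 0 * u s) * (1 * u' s) = 0
        simp only [zero_mul, add_zero, mul_one, one_mul]
        linarith
      have hαe : α 0 s = Γ 0 s := by simp [hα]
      have hsq : HasDerivAt (fun t => √(α t s)) 0 0 := by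
        have := hαd.sqrt (by rw [hαe]; exact (hpos 0 s).ne')
        simpa using this
      have hsqn : HasDerivAt (fun t => √(α (-t) s)) 0 0 := by
        have := HasDerivAt.scomp (0:ℝ) (h := fun t : ℝ => -t) (h' := -1)
          (g₁ := fun t => √(α t s)) (g₁' := 0) (by simpa using hsq) (hasDerivAt_neg 0)
        rw [smul_zero] at this
        exact this
      have hdiff := (hsq.sub hsqn)
      rw [hasDerivAt_iff_tendsto_slope] at hdiff
      have h2 := hdiff.pow 2
      simp only [sub_self] at h2
      rw [show (0:ℝ) ^ 2 = 0 by norm_num] at h2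
      refine h2.congr fun t => ?_
      simp [slope_def_field, hR, div_pow]
  simp only [integral_zero] at hRi
  have hfin : ∀ᶠ t : ℝ in 𝓝[≠] 0,
      ((∫ s, Γ t s) + (∫ s, Γ (-t) s) - 2 * ∫ s, Γ 0 s) / t ^ 2
        ≤ -(∫ s, Γ 0 s * u' s ^ 2) + ∫ s, R t s := by
    filter_upwards [hsmall] with t ht
    obtain ⟨ht0, ht⟩ := ht
    have ht' : |-t| * k ≤ 1 := by rwa [abs_neg]
    have hRint : Integrable (R t) := (hGi.const_mul (9 * k ^ 2)).mono'
      (hRc t).aestronglyMeasurable (ae_of_all _ fun s => by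
        rw [Real.norm_of_nonneg (by simp only [hR]; positivity)]
        exact hRb t ht0 ht s)
    have h1 : ∫ s, (α t s + α (-t) s - 2 * Γ 0 s)
        ≤ ∫ s, (-(t ^ 2 * (Γ 0 s * u' s ^ 2)) + t ^ 2 * R t s) := by
      refine integral_mono (((hαi t ht).add (hαi _ ht')).sub (hGi.const_mul 2))
        ((hi.const_mul _).neg.add (hRint.const_mul _)) fun s => ?_
      have e : t ^ 2 * R t s = (√(α t s) - √(α (-t) s)) ^ 2 := by
        simp only [hR]; field_simp
      simp only [e]
      obtain ⟨h1, h2⟩ := htB t ht s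
      have h3 : (t * u' s) ^ 2 ≤ 1 := by
        rw [sq_le_one_iff_abs_le_one]; linarith
      refine transport_step (hα0 t ht s) (hα0 _ ht' s) (hpos 0 s).le h3 ?_
      have h4 := hPL t s (t * u s)
      have h5 : α t s * α (-t) s
          = Γ t (s + t * u s) * Γ (-t) (s - t * u s) * (1 - (t * u' s) ^ 2) := by
        simp only [hα, neg_mul, ← sub_eq_add_neg]; ring
      rw [h5]
      exact mul_le_mul_of_nonneg_right h4 (by linarith)
    have e1 : ∫ s, (α t s + α (-t) s - 2 * Γ 0 s)
        = (∫ s, α t s) + (∫ s, α (-t) s) - 2 * ∫ s, Γ 0 s := by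
      have hs : Integrable fun s => α t s + α (-t) s := (hαi t ht).add (hαi _ ht')
      rw [integral_sub hs (hGi.const_mul 2),
        integral_add (hαi t ht) (hαi _ ht'), integral_const_mul]
    have e2 : ∫ s, (-(t ^ 2 * (Γ 0 s * u' s ^ 2)) + t ^ 2 * R t s)
        = t ^ 2 * (-(∫ s, Γ 0 s * u' s ^ 2) + ∫ s, R t s) := by
      have hs : Integrable fun s => -(t ^ 2 * (Γ 0 s * u' s ^ 2)) := (hi.const_mul _).neg
      rw [integral_add hs (hRint.const_mul _), integral_neg,
        integral_const_mul, integral_const_mul]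
      ring
    rw [hint t ht, hint (-t) ht', ← e1, div_le_iff₀ (by positivity), mul_comm, ← e2]
    exact h1
  have := le_of_tendsto_of_tendsto hZ (tendsto_const_nhds.add hRi) hfin
  linarith

/-! ### Softened maxima and softened cells -/

noncomputable section

variable {ι : Type*} [Fintype ι]

/-- The exponential of minus the softened maximum of `z` at scale `ε`. -/
def psi (ε : ℝ) (z : ι → ℝ) : ℝ := Real.exp (-(ε * Real.log (∑ i, Real.exp (z i / ε))))

/-- The softened indicator of `z i` being the maximum of `z`. -/
def pw (ε : ℝ) (z : ι → ℝ) (i : ι) : ℝ := Real.exp (z i / ε) / ∑ j, Real.exp (z j / ε)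

section
variable {ε : ℝ}

lemma psi_pos (z : ι → ℝ) : 0 < psi ε z := Real.exp_pos _

lemma sumexp_pos [Nonempty ι] (z : ι → ℝ) : 0 < ∑ i, Real.exp (z i / ε) :=
  Finset.sum_pos (fun _ _ => Real.exp_pos _) Finset.univ_nonempty

lemma pw_nonneg (z : ι → ℝ) (i : ι) : 0 ≤ pw ε z i :=
  div_nonneg (Real.exp_pos _).le (Finset.sum_nonneg fun _ _ => (Real.exp_pos _).le)

lemma pw_sum [Nonempty ι] (z : ι → ℝ) : ∑ i, pw ε z i = 1 := by
  unfold pw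
  rw [← Finset.sum_div, div_self (sumexp_pos z).ne']

lemma pw_le_one [Nonempty ι] (z : ι → ℝ) (i : ι) : pw ε z i ≤ 1 := by
  rw [← pw_sum (ε := ε) z]
  exact Finset.single_le_sum (fun j _ => pw_nonneg z j) (Finset.mem_univ i)

lemma abs_pw_avg_le [Nonempty ι] (z w : ι → ℝ) {c : ℝ} (h : ∀ i, |w i| ≤ c) :
    |∑ i, pw ε z i * w i| ≤ c := by
  calc |∑ i, pw ε z i * w i| ≤ ∑ i, |pw ε z i * w i| := Finset.abs_sum_le_sum_abs _ _
    _ ≤ ∑ i, pw ε z i * c := by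
      refine Finset.sum_le_sum fun i _ => ?_
      rw [abs_mul, abs_of_nonneg (pw_nonneg z i)]
      exact mul_le_mul_of_nonneg_left (h i) (pw_nonneg z i)
    _ = c := by rw [← Finset.sum_mul, pw_sum, one_mul]

/-- `psi ε` is log-concave at midpoints. -/
lemma psi_mul_le [Nonempty ι] (hε : 0 < ε) (z w : ι → ℝ) :
    psi ε z * psi ε w ≤ psi ε ((1 / 2 : ℝ) • (z + w)) ^ 2 := by
  have h : (∑ i, Real.exp (((1 / 2 : ℝ) • (z + w)) i / ε)) ^ 2
      ≤ (∑ i, Real.exp (z i / ε)) * ∑ i, Real.exp (w i / ε) := by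
    refine Finset.sum_sq_le_sum_mul_sum_of_sq_le_mul _ (fun _ _ => (Real.exp_pos _).le)
      (fun _ _ => (Real.exp_pos _).le) fun i _ => le_of_eq ?_
    rw [← Real.exp_add, sq, ← Real.exp_add]
    congr 1
    simp
    ring
  have hl := Real.log_le_log (pow_pos (sumexp_pos _) 2) h
  rw [Real.log_mul (sumexp_pos _).ne' (sumexp_pos _).ne', Real.log_pow] at hl
  unfold psi
  rw [← Real.exp_add, sq, ← Real.exp_add, Real.exp_le_exp]
  push_cast at hl
  nlinarith

lemma psi_le_exp [Nonempty ι] (hε : 0 < ε) (z : ι → ℝ) (i : ι) : psi ε z ≤ Real.exp (-z i) := by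
  unfold psi
  rw [Real.exp_le_exp, neg_le_neg_iff]
  have h : Real.exp (z i / ε) ≤ ∑ j, Real.exp (z j / ε) :=
    Finset.single_le_sum (f := fun j => Real.exp (z j / ε)) (fun _ _ => (Real.exp_pos _).le)
      (Finset.mem_univ i)
  have := Real.log_le_log (Real.exp_pos _) h
  rw [Real.log_exp, div_le_iff₀ hε] at this
  linarith

lemma le_psi [Nonempty ι] (hε : 0 < ε) (z : ι → ℝ) {M : ℝ} (hM : ∀ i, z i ≤ M) :
    Real.exp (-(ε * Real.log (Fintype.card ι))) * Real.exp (-M) ≤ psi ε z := by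
  unfold psi
  rw [← Real.exp_add, Real.exp_le_exp]
  have h : ∑ j, Real.exp (z j / ε) ≤ Fintype.card ι * Real.exp (M / ε) := by
    rw [← nsmul_eq_mul, ← Finset.card_univ]
    refine Finset.sum_le_card_nsmul _ _ _ fun i _ => ?_
    rw [Real.exp_le_exp]
    gcongr; exact hM i
  have := Real.log_le_log (sumexp_pos z) h
  rw [Real.log_mul (by simp) (Real.exp_pos _).ne', Real.log_exp] at this
  have h2 : ε * (Real.log (∑ j, Real.exp (z j / ε))) ≤ ε * Real.log (Fintype.card ι) + M := by
    calc _ ≤ ε * (Real.log (Fintype.card ι) + M / ε) := by gcongr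
      _ = _ := by field_simp
  linarith

/-- `-log (psi ε)` is `1`-Lipschitz for the sup norm. -/
lemma psi_le_mul [Nonempty ι] (hε : 0 < ε) (z w : ι → ℝ) {c : ℝ} (h : ∀ i, |z i - w i| ≤ c) :
    psi ε z ≤ Real.exp c * psi ε w := by
  unfold psi
  rw [← Real.exp_add, Real.exp_le_exp]
  have h1 : ∑ j, Real.exp (w j / ε) ≤ Real.exp (c / ε) * ∑ j, Real.exp (z j / ε) := by
    rw [Finset.mul_sum]
    refine Finset.sum_le_sum fun i _ => ?_
    rw [← Real.exp_add, Real.exp_le_exp, ← add_div]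
    gcongr
    linarith [(abs_le.1 (h i)).1]
  have := Real.log_le_log (sumexp_pos w) h1
  rw [Real.log_mul (Real.exp_pos _).ne' (sumexp_pos z).ne', Real.log_exp] at this
  have h2 : ε * (Real.log (∑ j, Real.exp (w j / ε)))
      ≤ c + ε * Real.log (∑ j, Real.exp (z j / ε)) := by
    calc _ ≤ ε * (c / ε + Real.log (∑ j, Real.exp (z j / ε))) := by gcongr
      _ = _ := by field_simp
  linarith

lemma continuous_psi [Nonempty ι] : Continuous (psi ε : (ι → ℝ) → ℝ) := by
  unfold psi
  refine Real.continuous_exp.comp (Continuous.neg (continuous_const.mul ?_))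
  exact Continuous.log (by fun_prop) fun z => (sumexp_pos z).ne'

lemma continuous_pw [Nonempty ι] (i : ι) : Continuous fun z : ι → ℝ => pw ε z i := by
  unfold pw
  exact Continuous.div (by fun_prop) (by fun_prop) fun z => (sumexp_pos z).ne'

lemma pw_mul_le [Nonempty ι] (z : ι → ℝ) (i j : ι) :
    pw ε z i * pw ε z j ≤ Real.exp (-|z i - z j| / ε) := by
  have key : ∀ i j, pw ε z i ≤ Real.exp ((z i - z j) / ε) := by
    intro i j
    unfold pw
    rw [div_le_iff₀ (sumexp_pos z)]
    calc Real.exp (z i / ε) = Real.exp ((z i - z j) / ε) * Real.exp (z j / ε) := by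
          rw [← Real.exp_add]; ring_nf
      _ ≤ _ := by
        gcongr
        exact Finset.single_le_sum (f := fun j => Real.exp (z j / ε))
          (fun _ _ => (Real.exp_pos _).le) (Finset.mem_univ j)
  rcases le_total (z i) (z j) with h | h
  · rw [abs_of_nonpos (by linarith), neg_neg]
    calc _ ≤ pw ε z i * 1 := by
          exact mul_le_mul_of_nonneg_left (pw_le_one z j) (pw_nonneg z i)
      _ ≤ _ := by rw [mul_one]; exact key i j
  · rw [abs_of_nonneg (by linarith), neg_sub]
    calc _ ≤ 1 * pw ε z j := by
          exact mul_le_mul_of_nonneg_right (pw_le_one z i) (pw_nonneg z j)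
      _ ≤ _ := by rw [one_mul]; exact key j i

lemma hasDerivAt_sumexp (z a : ι → ℝ) (t : ℝ) :
    HasDerivAt (fun t : ℝ => ∑ i, Real.exp ((z i + t * a i) / ε))
      (∑ i, Real.exp ((z i + t * a i) / ε) * (a i / ε)) t := by
  refine HasDerivAt.fun_sum fun i _ => ?_
  refine (HasDerivAt.exp ((((hasDerivAt_id t).mul_const (a i)).const_add (z i)).div_const ε)).congr_deriv ?_
  simp

lemma hasDerivAt_psi [Nonempty ι] (hε : 0 < ε) (z a : ι → ℝ) (t : ℝ) :
    HasDerivAt (fun t : ℝ => psi ε (z + t • a))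
      (-(∑ i, pw ε (z + t • a) i * a i) * psi ε (z + t • a)) t := by
  have h1 := (hasDerivAt_sumexp (ε := ε) z a t).log (sumexp_pos (z + t • a)).ne'
  refine ((h1.const_mul ε).neg.exp).congr_deriv ?_
  have e : -(ε * ((∑ i, Real.exp ((z i + t * a i) / ε) * (a i / ε)) /
      ∑ i, Real.exp ((z i + t * a i) / ε))) = -(∑ i, pw ε (z + t • a) i * a i) := by
    unfold pw
    rw [Finset.sum_div, Finset.mul_sum]
    congr 1
    refine Finset.sum_congr rfl fun i _ => ?_
    simp only [Pi.add_apply, Pi.smul_apply, smul_eq_mul]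
    field_simp
  rw [e, mul_comm]
  rfl

lemma hasDerivAt_pw [Nonempty ι] (hε : 0 < ε) (z a : ι → ℝ) (t : ℝ) (i : ι) :
    HasDerivAt (fun t : ℝ => pw ε (z + t • a) i)
      (pw ε (z + t • a) i * (a i - ∑ j, pw ε (z + t • a) j * a j) / ε) t := by
  have hne := (sumexp_pos (ε := ε) (z + t • a)).ne'
  have h0 : HasDerivAt (fun t : ℝ => Real.exp ((z i + t * a i) / ε))
      (Real.exp ((z i + t * a i) / ε) * (a i / ε)) t := by
    refine (HasDerivAt.exp ((((hasDerivAt_id t).mul_const (a i)).const_add (z i)).div_const ε)).congr_deriv ?_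
    simp
  refine (h0.div (hasDerivAt_sumexp (ε := ε) z a t) hne).congr_deriv ?_
  have e : ∑ j, pw ε (z + t • a) j * a j
      = (ε * ∑ i, Real.exp ((z i + t * a i) / ε) * (a i / ε)) /
      ∑ i, Real.exp ((z i + t * a i) / ε) := by
    unfold pw
    rw [Finset.mul_sum, Finset.sum_div]
    refine Finset.sum_congr rfl fun i _ => ?_
    simp only [Pi.add_apply, Pi.smul_apply, smul_eq_mul]
    field_simp
  rw [e]
  unfold pw
  simp only [Pi.add_apply, Pi.smul_apply, smul_eq_mul] at hne ⊢
  field_simp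

end
end

/-! ### Differentiation of integrals of softened maxima -/

/-- A symmetric second difference quotient converges to the second derivative. -/
lemma second_diff {Z Z1 : ℝ → ℝ} {q : ℝ} (h1 : ∀ t, HasDerivAt Z (Z1 t) t)
    (h2 : HasDerivAt Z1 q 0) :
    Tendsto (fun t => (Z t + Z (-t) - 2 * Z 0) / t ^ 2) (𝓝[≠] 0) (𝓝 q) := by
  have hneg : ∀ t, HasDerivAt (fun t => Z (-t)) (-Z1 (-t)) t := fun t => by
    have := HasDerivAt.scomp t (h1 (-t)) (hasDerivAt_neg t)
    simpa [Function.comp_def] using this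
  have hneg1 : HasDerivAt (fun t => Z1 (-t)) (-q) 0 := by
    have := HasDerivAt.scomp (0:ℝ) (h := fun t : ℝ => -t) (h' := -1) (g₁ := Z1) (g₁' := q)
      (by simpa using h2) (hasDerivAt_neg 0)
    simpa [Function.comp_def] using this
  have hc : ContinuousAt (fun t => Z t + Z (-t) - 2 * Z 0) 0 :=
    (((h1 0).add (hneg 0)).sub_const _).continuousAt
  refine HasDerivAt.lhopital_zero_nhdsNE (f' := fun t => Z1 t + -Z1 (-t)) (g' := fun t => 2 * t)
    ?_ ?_ ?_ ?_ ?_ ?_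
  · exact Eventually.of_forall fun t => ((h1 t).add (hneg t)).sub_const _
  · exact Eventually.of_forall fun t => (hasDerivAt_pow 2 t).congr_deriv (by simp)
  · filter_upwards [eventually_mem_nhdsWithin] with t ht
    simpa using ht
  · have : Tendsto (fun t => Z t + Z (-t) - 2 * Z 0) (𝓝[≠] 0) _ :=
      hc.tendsto.mono_left nhdsWithin_le_nhds
    simpa [two_mul] using this
  · have : Tendsto (fun t : ℝ => t ^ 2) (𝓝 0) (𝓝 (0 ^ 2)) := Continuous.tendsto (by fun_prop) 0
    simpa using this.mono_left nhdsWithin_le_nhds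
  · have h3 := h2.sub hneg1
    rw [hasDerivAt_iff_tendsto_slope] at h3
    have h4 := h3.div_const 2
    rw [show (q - -q) / 2 = q by ring] at h4
    refine h4.congr' ?_
    filter_upwards [eventually_mem_nhdsWithin] with t ht
    have ht' : t ≠ 0 := ht
    simp [slope_def_field]
    field_simp
    try ring

section
variable {ι : Type*} [Fintype ι] {X : Type*} [MeasurableSpace X] {μ : Measure X} {ε : ℝ}

lemma exists_abs_bound (a : ι → ℝ) : ∃ C, 0 ≤ C ∧ ∀ i, |a i| ≤ C :=
  ⟨‖a‖, norm_nonneg _, fun i => norm_le_pi_norm a i⟩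

variable [Nonempty ι]

lemma psi_shift_le (hε : 0 < ε) (z a : ι → ℝ) {C : ℝ} (hC : ∀ i, |a i| ≤ C) (t : ℝ) :
    psi ε (z + t • a) ≤ Real.exp (|t| * C) * psi ε z := by
  refine psi_le_mul hε _ _ fun i => ?_
  simp only [Pi.add_apply, Pi.smul_apply, smul_eq_mul, add_sub_cancel_left, abs_mul]
  gcongr; exact hC i

lemma integrable_psi_shift (hε : 0 < ε) {z : X → ι → ℝ} (hz : Measurable z)
    (hint : Integrable (fun x => psi ε (z x)) μ) (a : ι → ℝ) (t : ℝ) :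
    Integrable (fun x => psi ε (z x + t • a)) μ := by
  obtain ⟨C, hC0, hC⟩ := exists_abs_bound a
  refine (hint.const_mul (Real.exp (|t| * C))).mono'
    (continuous_psi.measurable.comp (hz.add_const _)).aestronglyMeasurable (ae_of_all _ fun x => ?_)
  rw [Real.norm_of_nonneg (psi_pos _).le]
  exact psi_shift_le hε _ _ hC t

lemma measurable_pw_comp {z : X → ι → ℝ} (hz : Measurable z) (i : ι) :
    Measurable fun x => pw ε (z x) i := (continuous_pw i).measurable.comp hz

lemma measurable_avg_comp {z : X → ι → ℝ} (hz : Measurable z) (a : ι → ℝ) :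
    Measurable fun x => ∑ i, pw ε (z x) i * a i :=
  Finset.measurable_sum _ fun i _ => (measurable_pw_comp hz i).mul_const _

lemma hasDerivAt_integral_psi (hε : 0 < ε) {z : X → ι → ℝ} (hz : Measurable z)
    (hint : Integrable (fun x => psi ε (z x)) μ) (a : ι → ℝ) (t : ℝ) :
    HasDerivAt (fun t : ℝ => ∫ x, psi ε (z x + t • a) ∂μ)
      (∫ x, -(∑ i, pw ε (z x + t • a) i * a i) * psi ε (z x + t • a) ∂μ) t := by
  obtain ⟨C, hC0, hC⟩ := exists_abs_bound a
  have hm : ∀ t : ℝ, Measurable fun x => psi ε (z x + t • a) := fun t =>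
    continuous_psi.measurable.comp (hz.add_const _)
  refine (hasDerivAt_integral_of_dominated_loc_of_deriv_le (s := Metric.ball t 1)
    (F := fun t x => psi ε (z x + t • a))
    (F' := fun t x => -(∑ i, pw ε (z x + t • a) i * a i) * psi ε (z x + t • a))
    (bound := fun x => C * (Real.exp ((|t| + 1) * C) * psi ε (z x)))
    (Metric.ball_mem_nhds t one_pos)
    (Eventually.of_forall fun t => (hm t).aestronglyMeasurable)
    (integrable_psi_shift hε hz hint a t) ?_ ?_ ?_ ?_).2
  · exact ((measurable_avg_comp (hz.add_const _) a).neg.mul (hm t)).aestronglyMeasurable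
  · refine ae_of_all _ fun x s hs => ?_
    rw [norm_mul, norm_neg, Real.norm_eq_abs, Real.norm_of_nonneg (psi_pos _).le]
    refine mul_le_mul (abs_pw_avg_le _ _ hC) ?_ (psi_pos _).le hC0
    refine (psi_shift_le hε _ _ hC s).trans ?_
    have := (psi_pos (ε := ε) (z x)).le
    have h3 : |s| ≤ |t| + 1 := by
      have h1 := abs_sub_abs_le_abs_sub s t
      have h2 : |s - t| < 1 := hs
      linarith
    gcongr
  · exact (hint.const_mul _).const_mul _
  · exact ae_of_all _ fun x s _ => hasDerivAt_psi hε _ _ _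

lemma hasDerivAt_integral_psi2 (hε : 0 < ε) {z : X → ι → ℝ} (hz : Measurable z)
    (hint : Integrable (fun x => psi ε (z x)) μ) (a : ι → ℝ) :
    HasDerivAt
      (fun t : ℝ => ∫ x, -(∑ i, pw ε (z x + t • a) i * a i) * psi ε (z x + t • a) ∂μ)
      (∫ x, ((∑ i, pw ε (z x) i * a i) ^ 2 -
        (∑ i, pw ε (z x) i * a i ^ 2 - (∑ i, pw ε (z x) i * a i) ^ 2) / ε) * psi ε (z x) ∂μ) 0 := by
  obtain ⟨C, hC0, hC⟩ := exists_abs_bound a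
  have hm : ∀ t : ℝ, Measurable fun x => psi ε (z x + t • a) := fun t =>
    continuous_psi.measurable.comp (hz.add_const _)
  have hma : ∀ (t : ℝ) (b : ι → ℝ), Measurable fun x => ∑ i, pw ε (z x + t • a) i * b i :=
    fun t b => measurable_avg_comp (hz.add_const _) b
  set D : ℝ → X → ℝ := fun t x => ((∑ i, pw ε (z x + t • a) i * a i) ^ 2 -
        (∑ i, pw ε (z x + t • a) i * a i ^ 2 - (∑ i, pw ε (z x + t • a) i * a i) ^ 2) / ε)
          * psi ε (z x + t • a) with hD
  have hC2 : ∀ i, |a i ^ 2| ≤ C ^ 2 := fun i => by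
    rw [abs_pow]; have := hC i; gcongr
  have key := (hasDerivAt_integral_of_dominated_loc_of_deriv_le (s := Metric.ball (0:ℝ) 1)
    (F := fun t x => -(∑ i, pw ε (z x + t • a) i * a i) * psi ε (z x + t • a))
    (F' := D) (μ := μ)
    (bound := fun x => (C ^ 2 + (C ^ 2 + C ^ 2) / ε) * (Real.exp (1 * C) * psi ε (z x)))
    (Metric.ball_mem_nhds 0 one_pos)
    (Eventually.of_forall fun t => ((hma t a).neg.mul (hm t)).aestronglyMeasurable)
    ?_ ?_ ?_ ?_ ?_).2
  · simpa [hD] using key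
  · refine ((integrable_psi_shift hε hz hint a 0).const_mul C).mono'
      ((hma 0 a).neg.mul (hm 0)).aestronglyMeasurable (ae_of_all _ fun x => ?_)
    rw [norm_mul, norm_neg, Real.norm_eq_abs, Real.norm_of_nonneg (psi_pos _).le]
    exact mul_le_mul_of_nonneg_right (abs_pw_avg_le _ _ hC) (psi_pos _).le
  · exact (((hma 0 a).pow_const 2).sub (((hma 0 _).sub ((hma 0 a).pow_const 2)).div_const ε)).mul
      (hm 0) |>.aestronglyMeasurable
  · refine ae_of_all _ fun x s hs => ?_
    simp only [hD]
    rw [norm_mul, Real.norm_eq_abs, Real.norm_of_nonneg (psi_pos _).le]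
    refine mul_le_mul ?_ ?_ (psi_pos _).le (by positivity)
    · have h1 := abs_pw_avg_le (ε := ε) (z x + s • a) a hC
      have h2 := abs_pw_avg_le (ε := ε) (z x + s • a) (fun i => a i ^ 2) hC2
      have h3 : |(∑ i, pw ε (z x + s • a) i * a i) ^ 2| ≤ C ^ 2 := by rw [abs_pow]; gcongr
      refine (abs_sub _ _).trans ?_
      rw [abs_div, abs_of_pos hε]
      gcongr
      exact (abs_sub _ _).trans (add_le_add h2 h3)
    · refine (psi_shift_le hε _ _ hC s).trans ?_
      have := (psi_pos (ε := ε) (z x)).le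
      have h3 : |s| ≤ 1 := by
        have h2 : |s - 0| < 1 := hs
        rw [sub_zero] at h2; exact h2.le
      gcongr
  · exact (hint.const_mul _).const_mul _
  · refine ae_of_all _ fun x s _ => ?_
    have h1 : HasDerivAt (fun t : ℝ => -∑ i, pw ε (z x + t • a) i * a i)
        (-∑ i, pw ε (z x + s • a) i * (a i - ∑ j, pw ε (z x + s • a) j * a j) / ε * a i) s :=
      (HasDerivAt.fun_sum fun i _ => (hasDerivAt_pw hε (z x) a s i).mul_const (a i)).neg
    refine (h1.mul (hasDerivAt_psi hε (z x) a s)).congr_deriv ?_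
    simp only [hD]
    set m := ∑ j, pw ε (z x + s • a) j * a j with hm'
    have e : ∑ i, pw ε (z x + s • a) i * (a i - m) / ε * a i
        = (∑ i, pw ε (z x + s • a) i * a i ^ 2 - m ^ 2) / ε := by
      rw [sq m]
      nth_rewrite 2 [hm']
      rw [Finset.sum_mul, ← Finset.sum_sub_distrib, Finset.sum_div]
      refine Finset.sum_congr rfl fun i _ => ?_
      ring
    rw [e]
    ring

end

/-! ### Stability at a positive scale -/

lemma integrable_exp_neg_norm {E : Type*} [NormedAddCommGroup E] [NormedSpace ℝ E]
    [FiniteDimensional ℝ E] [MeasurableSpace E] [BorelSpace E] (μ : Measure E)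
    [μ.IsAddHaarMeasure] {r : ℝ} (hr : 0 < r) : Integrable (fun x : E => Real.exp (-(r * ‖x‖))) μ := by
  set d := Module.finrank ℝ E
  have h1 : Integrable (fun x : E => (1 + ‖x‖) ^ (-((d:ℝ) + 1))) μ :=
    integrable_one_add_norm (by simp [d])
  have hbd : ∃ K, ∀ y : ℝ, 0 ≤ y → Real.exp (-(r * y)) ≤ K * (1 + y) ^ (-((d:ℝ) + 1)) := by
    refine ⟨Real.exp r * ((d + 1).factorial / r ^ (d + 1)), fun y hy => ?_⟩
    have h2 := Real.pow_div_factorial_le_exp (r * (1 + y)) (by positivity) (d + 1)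
    rw [Real.rpow_neg (by positivity), show ((d:ℝ) + 1) = ((d + 1 : ℕ) : ℝ) by push_cast; ring,
      Real.rpow_natCast, ← div_eq_mul_inv, le_div_iff₀ (by positivity)]
    rw [div_le_iff₀ (by positivity), mul_pow] at h2
    have h3 : Real.exp (-(r * y)) = Real.exp r / Real.exp (r * (1 + y)) := by
      rw [← Real.exp_sub]; ring_nf
    rw [h3, div_mul_eq_mul_div, div_le_iff₀ (Real.exp_pos _), mul_assoc]
    gcongr
    rw [div_mul_eq_mul_div, le_div_iff₀ (by positivity)]
    linarith
  obtain ⟨K, hK⟩ := hbd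
  refine (h1.const_mul K).mono' (by fun_prop) (ae_of_all _ fun x => ?_)
  rw [Real.norm_of_nonneg (Real.exp_pos _).le]
  exact hK _ (norm_nonneg _)

lemma lipschitz_psi_aux {C t t' s s' f e l : ℝ} (hf : |f| ≤ C) (he : |e| ≤ C) :
    |(s * e + l + t * f) - (s' * e + l + t' * f)| ≤ C * (|t - t'| + |s - s'|) := by
  rw [show (s * e + l + t * f) - (s' * e + l + t' * f) = (t - t') * f + (s - s') * e by ring]
  refine (abs_add_le _ _).trans ?_
  rw [abs_mul, abs_mul]
  nlinarith [abs_nonneg (t - t'), abs_nonneg (s - s'),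
    mul_le_mul_of_nonneg_left hf (abs_nonneg (t - t')),
    mul_le_mul_of_nonneg_left he (abs_nonneg (s - s'))]

section
variable {ι : Type*} [Fintype ι]

/-- The vector of values at `Y` of a family of linear functionals. -/
def zl {E : Type*} [NormedAddCommGroup E] [NormedSpace ℝ E] (ℓ : ι → E →L[ℝ] ℝ) (Y : E) : ι → ℝ :=
  fun i => ℓ i Y

omit [Fintype ι] in
lemma continuous_zl {E : Type*} [NormedAddCommGroup E] [NormedSpace ℝ E] (ℓ : ι → E →L[ℝ] ℝ) :
    Continuous (zl ℓ) := continuous_pi fun i => (ℓ i).continuous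

variable [Nonempty ι]

lemma psi_zl_le {E : Type*} [NormedAddCommGroup E] [NormedSpace ℝ E] {ℓ : ι → E →L[ℝ] ℝ} {r ε : ℝ}
    (hε : 0 < ε) (hco : ∀ Y, ∃ i, r * ‖Y‖ ≤ ℓ i Y) (Y : E) :
    psi ε (zl ℓ Y) ≤ Real.exp (-(r * ‖Y‖)) := by
  obtain ⟨i, hi⟩ := hco Y
  refine (psi_le_exp hε _ i).trans ?_
  rw [Real.exp_le_exp]
  simpa [zl] using hi

lemma integrable_psi_zl {E : Type*} [NormedAddCommGroup E] [NormedSpace ℝ E]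
    [FiniteDimensional ℝ E] [MeasurableSpace E] [BorelSpace E] (μ : Measure E)
    [μ.IsAddHaarMeasure] {ℓ : ι → E →L[ℝ] ℝ} {r ε : ℝ} (hr : 0 < r)
    (hε : 0 < ε) (hco : ∀ Y, ∃ i, r * ‖Y‖ ≤ ℓ i Y) :
    Integrable (fun Y => psi ε (zl ℓ Y)) μ := by
  refine (integrable_exp_neg_norm μ hr).mono'
    (continuous_psi.comp (continuous_zl ℓ)).aestronglyMeasurable (ae_of_all _ fun Y => ?_)
  rw [Real.norm_of_nonneg (psi_pos _).le]
  exact psi_zl_le hε hco Y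

variable {m : ℕ} {ℓ : ι → (ℝ × (Fin m → ℝ)) →L[ℝ] ℝ} {r ε : ℝ}

lemma integrable_slice (hr : 0 < r) (hε : 0 < ε) (hco : ∀ Y, ∃ i, r * ‖Y‖ ≤ ℓ i Y) (s : ℝ) :
    Integrable (fun x : Fin m → ℝ => psi ε (zl ℓ (s, x))) := by
  refine (integrable_exp_neg_norm volume hr).mono'
    (continuous_psi.comp ((continuous_zl ℓ).comp (by fun_prop))).aestronglyMeasurable
    (ae_of_all _ fun x => ?_)
  rw [Real.norm_of_nonneg (psi_pos _).le]
  refine (psi_zl_le hε hco _).trans ?_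
  rw [Real.exp_le_exp]
  have : ‖x‖ ≤ ‖(s, x)‖ := le_max_right _ _
  nlinarith

lemma continuous_slice_integral (hr : 0 < r) (hε : 0 < ε) (hco : ∀ Y, ∃ i, r * ‖Y‖ ≤ ℓ i Y)
    (a : ι → ℝ) :
    Continuous fun s : ℝ => ∫ x : Fin m → ℝ,
      -(∑ i, pw ε (zl ℓ (s, x)) i * a i) * psi ε (zl ℓ (s, x)) := by
  obtain ⟨C, hC0, hC⟩ := exists_abs_bound a
  have hz := continuous_zl ℓ
  have hcz : Continuous fun Y => -(∑ i, pw ε (zl ℓ Y) i * a i) * psi ε (zl ℓ Y) :=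
    (continuous_finsetSum _ fun i _ => ((continuous_pw i).comp hz).mul continuous_const).neg.mul
      (continuous_psi.comp hz)
  refine continuous_of_dominated (bound := fun x => C * Real.exp (-(r * ‖x‖))) (fun s => ?_)
    (fun s => ae_of_all _ fun x => ?_) ((integrable_exp_neg_norm volume hr).const_mul C)
    (ae_of_all _ fun x => hcz.comp (by fun_prop))
  · exact (hcz.comp (by fun_prop)).aestronglyMeasurable
  · rw [norm_mul, norm_neg, Real.norm_eq_abs, Real.norm_of_nonneg (psi_pos _).le]
    refine mul_le_mul (abs_pw_avg_le _ _ hC) ((psi_zl_le hε hco _).trans ?_) (psi_pos _).le hC0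
    rw [Real.exp_le_exp]
    have : ‖x‖ ≤ ‖(s, x)‖ := le_max_right _ _
    nlinarith

/-- The slice integrals of the shifted weight `psi` satisfy the hypothesis `hPL` of `oneD`, by
Prékopa–Leindler in the remaining variables. -/
lemma pl_slice (hr : 0 < r) (hε : 0 < ε) (hco : ∀ Y, ∃ i, r * ‖Y‖ ≤ ℓ i Y) (f : ι → ℝ)
    (t s a : ℝ) :
    (∫ x : Fin m → ℝ, psi ε (zl ℓ (s + a, x) + t • f)) *
      (∫ x : Fin m → ℝ, psi ε (zl ℓ (s - a, x) + (-t) • f))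
      ≤ (∫ x : Fin m → ℝ, psi ε (zl ℓ (s, x) + (0:ℝ) • f)) ^ 2 := by
  have hc : ∀ (t s : ℝ), Continuous fun x : Fin m → ℝ => psi ε (zl ℓ (s, x) + t • f) := fun t s =>
    continuous_psi.comp (((continuous_zl ℓ).comp (by fun_prop)).add continuous_const)
  have hi : ∀ (t s : ℝ), Integrable fun x : Fin m → ℝ => psi ε (zl ℓ (s, x) + t • f) := fun t s =>
    integrable_psi_shift hε ((continuous_zl ℓ).comp (by fun_prop)).measurable
      (integrable_slice hr hε hco s) f t
  have hn : ∀ (t s : ℝ), 0 ≤ ∫ x : Fin m → ℝ, psi ε (zl ℓ (s, x) + t • f) := fun t s =>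
    integral_nonneg fun x => (psi_pos _).le
  have h := prekopa_leindler m (F := fun x => ENNReal.ofReal (psi ε (zl ℓ (s + a, x) + t • f)))
    (G := fun x => ENNReal.ofReal (psi ε (zl ℓ (s - a, x) + (-t) • f)))
    (H := fun x => ENNReal.ofReal (psi ε (zl ℓ (s, x) + (0:ℝ) • f)))
    (hc _ _).measurable.ennreal_ofReal (hc _ _).measurable.ennreal_ofReal
    (hc _ _).measurable.ennreal_ofReal fun x y => by
      rw [← ENNReal.ofReal_mul (psi_pos _).le, ← ENNReal.ofReal_pow (psi_pos _).le]
      refine ENNReal.ofReal_le_ofReal ((psi_mul_le hε _ _).trans (le_of_eq ?_))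
      congr 2
      ext i
      have e : ((s : ℝ), (1 / 2 : ℝ) • (x + y)) = (1 / 2 : ℝ) • ((s + a, x) + (s - a, y)) := by
        ext j
        · simp; ring
        · simp; ring
      simp only [e, zl, Pi.add_apply, Pi.smul_apply, smul_eq_mul, map_smul, map_add]
      ring
  rw [← ofReal_integral_eq_lintegral_ofReal (hi _ _) (ae_of_all _ fun x => (psi_pos _).le),
    ← ofReal_integral_eq_lintegral_ofReal (hi _ _) (ae_of_all _ fun x => (psi_pos _).le),
    ← ofReal_integral_eq_lintegral_ofReal (hi _ _) (ae_of_all _ fun x => (psi_pos _).le),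
    ← ENNReal.ofReal_mul (hn _ _), ← ENNReal.ofReal_pow (hn _ _),
    ENNReal.ofReal_le_ofReal_iff (by have := hn 0 s; positivity)] at h
  exact h

/-- `oneD` applied to the slice integrals of `psi ε (zl ℓ Y + t • f)`: the conditional masses to the
left of a hyperplane `Y.1 = s`, divided by the slice integral, vary by at most the stability deficit
of `f` at scale `ε`. -/
theorem core_eps (hr : 0 < r) (hε : 0 < ε) (hco : ∀ Y, ∃ i, r * ‖Y‖ ≤ ℓ i Y) (f : ι → ℝ)
    (hmean : ∫ Y, (∑ i, pw ε (zl ℓ Y) i * f i) * psi ε (zl ℓ Y) = 0)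
    {a b γ : ℝ} (hab : a < b)
    (hγ : ∀ s ∈ Icc a b, γ ≤ ∫ x : Fin m → ℝ, psi ε (zl ℓ (s, x))) :
    γ * ((∫ Y in Iic b ×ˢ univ, (∑ i, pw ε (zl ℓ Y) i * f i) * psi ε (zl ℓ Y)) /
          (∫ x : Fin m → ℝ, psi ε (zl ℓ (b, x))) -
        (∫ Y in Iic a ×ˢ univ, (∑ i, pw ε (zl ℓ Y) i * f i) * psi ε (zl ℓ Y)) /
          (∫ x : Fin m → ℝ, psi ε (zl ℓ (a, x)))) ^ 2
      ≤ (b - a) * -(∫ Y, ((∑ i, pw ε (zl ℓ Y) i * f i) ^ 2 -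
        (∑ i, pw ε (zl ℓ Y) i * f i ^ 2 - (∑ i, pw ε (zl ℓ Y) i * f i) ^ 2) / ε)
          * psi ε (zl ℓ Y)) := by
  set e : ι → ℝ := fun i => ℓ i (1, 0) with he
  obtain ⟨C1, hC10, hC1⟩ := exists_abs_bound f
  obtain ⟨C2, hC20, hC2⟩ := exists_abs_bound e
  set C := max C1 C2 with hCdef
  have hC0 : 0 ≤ C := le_max_of_le_left hC10
  have hfC : ∀ i, |f i| ≤ C := fun i => (hC1 i).trans (le_max_left _ _)
  have heC : ∀ i, |e i| ≤ C := fun i => (hC2 i).trans (le_max_right _ _)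
  have hze : ∀ (s : ℝ) (x : Fin m → ℝ) i, zl ℓ (s, x) i = s * e i + ℓ i (0, x) := by
    intro s x i
    have : (s, x) = s • ((1:ℝ), (0 : Fin m → ℝ)) + (0, x) := by ext <;> simp
    simp only [zl, he]
    rw [this, map_add, map_smul, smul_eq_mul]
  have hz := continuous_zl ℓ
  have hzs : ∀ s : ℝ, Continuous fun x : Fin m → ℝ => zl ℓ (s, x) := fun s => hz.comp (by fun_prop)
  have hsl := fun s => integrable_slice (s := s) hr hε hco
  have hi : ∀ (t s : ℝ), Integrable fun x : Fin m → ℝ => psi ε (zl ℓ (s, x) + t • f) := fun t s =>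
    integrable_psi_shift hε (hzs s).measurable (hsl s) f t
  set Γ : ℝ → ℝ → ℝ := fun t s => ∫ x : Fin m → ℝ, psi ε (zl ℓ (s, x) + t • f) with hΓ
  have hΓ0 : ∀ s, Γ 0 s = ∫ x : Fin m → ℝ, psi ε (zl ℓ (s, x)) := fun s => by simp [hΓ]
  have : (volume : Measure (ℝ × (Fin m → ℝ))).IsAddHaarMeasure := by
    rw [Measure.volume_eq_prod]; infer_instance
  have hI := integrable_psi_zl (volume : Measure (ℝ × (Fin m → ℝ))) hr hε hco
  have hIt : ∀ t : ℝ, Integrable fun Y => psi ε (zl ℓ Y + t • f) := fun t =>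
    integrable_psi_shift hε hz.measurable hI f t
  have hgen : ∀ (s : ℝ) (c : ι → ℝ), HasDerivAt
      (fun t : ℝ => ∫ x : Fin m → ℝ, psi ε (zl ℓ (s, x) + t • c))
      (∫ x : Fin m → ℝ, -(∑ i, pw ε (zl ℓ (s, x)) i * c i) * psi ε (zl ℓ (s, x))) 0 := fun s c => by
    simpa using hasDerivAt_integral_psi hε (hzs s).measurable (hsl s) c 0
  set g : ℝ → ℝ := fun s => ∫ x : Fin m → ℝ,
    -(∑ i, pw ε (zl ℓ (s, x)) i * f i) * psi ε (zl ℓ (s, x)) with hg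
  set G1 : ℝ → ℝ := fun s => ∫ x : Fin m → ℝ,
    -(∑ i, pw ε (zl ℓ (s, x)) i * e i) * psi ε (zl ℓ (s, x)) with hG1
  have hprodm : ∀ c : ι → ℝ, Continuous fun Y => (∑ i, pw ε (zl ℓ Y) i * c i) * psi ε (zl ℓ Y) :=
    fun c => (continuous_finsetSum _ fun i _ =>
      ((continuous_pw i).comp hz).mul continuous_const).mul (continuous_psi.comp hz)
  have hprodi : Integrable fun Y => (∑ i, pw ε (zl ℓ Y) i * f i) * psi ε (zl ℓ Y) := by
    refine (hI.const_mul C).mono' (hprodm f).aestronglyMeasurable (ae_of_all _ fun Y => ?_)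
    rw [norm_mul, Real.norm_eq_abs, Real.norm_of_nonneg (psi_pos _).le]
    exact mul_le_mul_of_nonneg_right (abs_pw_avg_le _ _ hfC) (psi_pos _).le
  have hsi : ∀ (s : ℝ) (c : ι → ℝ), (∀ i, |c i| ≤ C) → Integrable fun x : Fin m → ℝ =>
      (∑ i, pw ε (zl ℓ (s, x)) i * c i) * psi ε (zl ℓ (s, x)) := by
    intro s c hc
    refine ((hsl s).const_mul C).mono' ((hprodm c).comp (by fun_prop)).aestronglyMeasurable
      (ae_of_all _ fun x => ?_)
    rw [norm_mul, Real.norm_eq_abs, Real.norm_of_nonneg (psi_pos _).le]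
    exact mul_le_mul_of_nonneg_right (abs_pw_avg_le _ _ hc) (psi_pos _).le
  have hbnd : ∀ (s : ℝ) (c : ι → ℝ), (∀ i, |c i| ≤ C) → |∫ x : Fin m → ℝ,
      -(∑ i, pw ε (zl ℓ (s, x)) i * c i) * psi ε (zl ℓ (s, x))| ≤ C * Γ 0 s := by
    intro s c hc
    rw [hΓ0, ← integral_const_mul]
    refine abs_integral_le_integral_abs.trans (integral_mono ?_ ((hsl s).const_mul C) fun x => ?_)
    · have := (hsi s c hc).neg.abs
      exact this.congr (ae_of_all _ fun x => by simp [abs_mul])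
    · simp only [abs_mul, abs_neg, abs_of_pos (psi_pos (ε := ε) (zl ℓ (s, x)))]
      exact mul_le_mul_of_nonneg_right (abs_pw_avg_le _ _ hc) (psi_pos _).le
  have hA : ∀ s, ∫ y in Iic s, g y
      = -∫ Y in Iic s ×ˢ univ, (∑ i, pw ε (zl ℓ Y) i * f i) * psi ε (zl ℓ Y) := by
    intro s
    rw [Measure.volume_eq_prod, setIntegral_prod _ (by
      rw [← Measure.volume_eq_prod]; exact hprodi.integrableOn), ← integral_neg]
    refine integral_congr_ae (ae_of_all _ fun y => ?_)
    simp only [hg, neg_mul, integral_neg, Measure.restrict_univ]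
  have key := oneD (Γ := Γ) (g := g) (G1 := G1) (C := C) (a := a) (b := b) (γ := γ)
    (q := ∫ Y, ((∑ i, pw ε (zl ℓ Y) i * f i) ^ 2 -
        (∑ i, pw ε (zl ℓ Y) i * f i ^ 2 - (∑ i, pw ε (zl ℓ Y) i * f i) ^ 2) / ε)
          * psi ε (zl ℓ Y)) hC0 ?_ (fun t s a => pl_slice hr hε hco f t s a) ?_ ?_ ?_
    (continuous_slice_integral hr hε hco f) (continuous_slice_integral hr hε hco e)
    (fun s => hbnd s f hfC) (fun s => hbnd s e heC) ?_ ?_ ?_ hab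
    (fun s hs => by rw [hΓ0]; exact hγ s hs)
  · rw [hA, hA, hΓ0, hΓ0] at key
    convert key using 2
    ring
  · intro t s
    exact integral_pos_of_integrable_nonneg_nonzero (x := 0)
      (continuous_psi.comp ((hzs s).add continuous_const)) (hi t s) (fun x => (psi_pos _).le)
      (psi_pos _).ne'
  · intro t t' s s'
    rw [← integral_const_mul]
    refine integral_mono (hi t s) ((hi t' s').const_mul _) fun x => psi_le_mul hε _ _ fun i => ?_
    simp only [Pi.add_apply, Pi.smul_apply, smul_eq_mul, hze]
    exact lipschitz_psi_aux (hfC i) (heC i)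
  · intro s w
    have h := hgen s (fun i => f i + w * e i)
    have e1 : (∫ x : Fin m → ℝ, -(∑ i, pw ε (zl ℓ (s, x)) i * (f i + w * e i)) * psi ε (zl ℓ (s, x)))
        = g s + w * G1 s := by
      have e2 : (∫ x : Fin m → ℝ,
          (∑ i, pw ε (zl ℓ (s, x)) i * (f i + w * e i)) * psi ε (zl ℓ (s, x)))
          = (∫ x : Fin m → ℝ, (∑ i, pw ε (zl ℓ (s, x)) i * f i) * psi ε (zl ℓ (s, x))) +
            w * ∫ x : Fin m → ℝ, (∑ i, pw ε (zl ℓ (s, x)) i * e i) * psi ε (zl ℓ (s, x)) := by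
        rw [← integral_const_mul, ← integral_add (hsi s f hfC) ((hsi s e heC).const_mul w)]
        refine integral_congr_ae (ae_of_all _ fun x => ?_)
        simp only [mul_add, Finset.sum_add_distrib]
        rw [add_mul, Finset.sum_congr rfl fun i _ => mul_left_comm _ w (e i),
          ← Finset.mul_sum]
        ring
      simp only [hg, hG1, neg_mul, integral_neg]
      rw [e2]
      ring
    rw [e1] at h
    refine h.congr_of_eventuallyEq (Eventually.of_forall fun t => ?_)
    simp only [hΓ]
    refine integral_congr_ae (ae_of_all _ fun x => ?_)
    simp only
    congr 1
    ext i
    simp only [Pi.add_apply, Pi.smul_apply, smul_eq_mul, hze]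
    ring
  · intro s
    have h := hgen s e
    have h2 : HasDerivAt (fun y : ℝ => y - s) 1 s := (hasDerivAt_id s).sub_const s
    have h' : HasDerivAt (fun t : ℝ => ∫ x : Fin m → ℝ, psi ε (zl ℓ (s, x) + t • e)) (G1 s)
        (s - s) := by rw [sub_self]; exact h
    have h3 := HasDerivAt.scomp (h := fun y : ℝ => y - s) s h' h2
    rw [one_smul] at h3
    refine h3.congr_of_eventuallyEq (Eventually.of_forall fun y => ?_)
    rw [hΓ0]
    simp only [Function.comp]
    refine integral_congr_ae (ae_of_all _ fun x => ?_)
    simp only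
    congr 1
    ext i
    simp only [Pi.add_apply, Pi.smul_apply, smul_eq_mul, hze]
    ring
  · have := hI
    rw [Measure.volume_eq_prod] at this
    exact this.integral_prod_left.congr (ae_of_all _ fun s => (hΓ0 s).symm)
  · have h := hmean
    rw [Measure.volume_eq_prod, integral_prod _ (by
      rw [← Measure.volume_eq_prod]; exact hprodi)] at h
    simp only [hg, neg_mul, integral_neg]
    rw [h, neg_zero]
  · have hZ : ∀ t, ∫ s, Γ t s = ∫ Y, psi ε (zl ℓ Y + t • f) := by
      intro t
      have := hIt t
      rw [Measure.volume_eq_prod] at this ⊢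
      rw [integral_prod _ this]
    simp only [hZ]
    exact second_diff (fun t => hasDerivAt_integral_psi hε hz.measurable hI f t)
      (hasDerivAt_integral_psi2 hε hz.measurable hI f)

end

/-! ### The limit of vanishing scale -/

noncomputable section
variable {ι : Type*} [Fintype ι] [Nonempty ι]

/-- The maximum of the coordinates of `z`. -/
def mx (z : ι → ℝ) : ℝ := Finset.univ.sup' Finset.univ_nonempty z

lemma le_mx (z : ι → ℝ) (i : ι) : z i ≤ mx z := Finset.le_sup' z (Finset.mem_univ i)

lemma exists_mx (z : ι → ℝ) : ∃ i, mx z = z i := by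
  obtain ⟨i, -, h⟩ := Finset.exists_mem_eq_sup' Finset.univ_nonempty z
  exact ⟨i, h⟩

lemma continuous_mx : Continuous (mx : (ι → ℝ) → ℝ) := by
  unfold mx
  exact Continuous.finset_sup'_apply Finset.univ_nonempty fun i _ => continuous_apply i

open Classical in
/-- The value `f i` at the index `i` where `z` has its strict maximum (and `0` if the maximum is
attained twice). -/
def sel (f z : ι → ℝ) : ℝ := ∑ i, if ∀ k, k ≠ i → z k < z i then f i else 0

omit [Nonempty ι] in
lemma sel_eq (f : ι → ℝ) {z : ι → ℝ} {i : ι} (h : ∀ k, k ≠ i → z k < z i) : sel f z = f i := by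
  classical
  unfold sel
  rw [Finset.sum_eq_single i]
  · rw [if_pos h]
  · intro j _ hj
    rw [if_neg]
    intro hh
    exact lt_asymm (h j hj) (hh i hj.symm)
  · simp

lemma exists_strict_max {z : ι → ℝ} (hz : ∀ i j, i ≠ j → z i ≠ z j) :
    ∃ i, ∀ k, k ≠ i → z k < z i := by
  obtain ⟨i, hi⟩ := exists_mx z
  exact ⟨i, fun k hk => lt_of_le_of_ne (hi ▸ le_mx z k) (hz k i hk)⟩

lemma tendsto_psi (z : ι → ℝ) : Tendsto (fun ε => psi ε z) (𝓝[>] 0) (𝓝 (Real.exp (-mx z))) := by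
  have h1 : Tendsto (fun ε : ℝ => Real.exp (-(ε * Real.log (Fintype.card ι))) * Real.exp (-mx z))
      (𝓝[>] 0) (𝓝 (Real.exp (-mx z))) := by
    have : Continuous fun ε : ℝ =>
      Real.exp (-(ε * Real.log (Fintype.card ι))) * Real.exp (-mx z) := by fun_prop
    have h := (this.tendsto 0).mono_left (nhdsWithin_le_nhds (s := Ioi 0))
    simpa using h
  obtain ⟨i, hi⟩ := exists_mx z
  refine tendsto_of_tendsto_of_tendsto_of_le_of_le' h1 tendsto_const_nhds ?_ ?_
  · filter_upwards [self_mem_nhdsWithin] with ε hε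
    exact le_psi hε z (le_mx z)
  · filter_upwards [self_mem_nhdsWithin] with ε hε
    rw [hi]; exact psi_le_exp hε z i

lemma tendsto_pw_zero {z : ι → ℝ} {i k : ι} (h : z i < z k) :
    Tendsto (fun ε => pw ε z i) (𝓝[>] 0) (𝓝 0) := by
  have h1 : Tendsto (fun ε : ℝ => Real.exp ((z i - z k) * ε⁻¹)) (𝓝[>] 0) (𝓝 0) := by
    refine Real.tendsto_exp_atBot.comp ?_
    exact tendsto_inv_nhdsGT_zero.const_mul_atTop_of_neg (by linarith)
  refine tendsto_of_tendsto_of_tendsto_of_le_of_le' tendsto_const_nhds h1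
    (Eventually.of_forall fun ε => pw_nonneg z i) (Eventually.of_forall fun ε => ?_)
  unfold pw
  rw [div_le_iff₀ (sumexp_pos z)]
  calc Real.exp (z i / ε) = Real.exp ((z i - z k) * ε⁻¹) * Real.exp (z k / ε) := by
        rw [← Real.exp_add]; ring_nf
    _ ≤ _ := by
      gcongr
      exact Finset.single_le_sum (f := fun j => Real.exp (z j / ε))
        (fun _ _ => (Real.exp_pos _).le) (Finset.mem_univ k)

lemma tendsto_pw_one {z : ι → ℝ} {i : ι} (h : ∀ k, k ≠ i → z k < z i) :
    Tendsto (fun ε => pw ε z i) (𝓝[>] 0) (𝓝 1) := by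
  classical
  have e : (fun ε => pw ε z i) = fun ε => 1 - ∑ k ∈ Finset.univ.erase i, pw ε z k := by
    ext ε
    rw [← pw_sum (ε := ε) z, ← Finset.add_sum_erase _ _ (Finset.mem_univ i)]
    ring
  rw [e]
  have : Tendsto (fun ε => ∑ k ∈ Finset.univ.erase i, pw ε z k) (𝓝[>] 0)
      (𝓝 (∑ k ∈ Finset.univ.erase i, (0:ℝ))) :=
    tendsto_finsetSum _ fun k hk => tendsto_pw_zero (h k (Finset.ne_of_mem_erase hk))
  simpa using this.const_sub 1

lemma tendsto_avg {z : ι → ℝ} (hz : ∀ i j, i ≠ j → z i ≠ z j) (f : ι → ℝ) :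
    Tendsto (fun ε => ∑ i, pw ε z i * f i) (𝓝[>] 0) (𝓝 (sel f z)) := by
  classical
  obtain ⟨i, hi⟩ := exists_strict_max hz
  rw [sel_eq f hi]
  have e : f i = ∑ j, (if j = i then 1 else 0) * f j := by simp
  rw [e]
  refine tendsto_finsetSum _ fun j _ => Tendsto.mul_const _ ?_
  split_ifs with h
  · subst h; exact tendsto_pw_one hi
  · exact tendsto_pw_zero (hi j h)

lemma abs_sel_le (f z : ι → ℝ) {C : ℝ} (hC : ∀ i, |f i| ≤ C) : |sel f z| ≤ C := by
  classical
  by_cases h : ∃ i, ∀ k, k ≠ i → z k < z i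
  · obtain ⟨i, hi⟩ := h
    rw [sel_eq f hi]; exact hC i
  · have : sel f z = 0 := by
      unfold sel
      exact Finset.sum_eq_zero fun i _ => if_neg fun hi => h ⟨i, hi⟩
    rw [this, abs_zero]
    exact (abs_nonneg _).trans (hC (Classical.arbitrary ι))

section general
variable {E : Type*} [NormedAddCommGroup E] [NormedSpace ℝ E]
    [FiniteDimensional ℝ E] [MeasurableSpace E] [BorelSpace E] (μ : Measure E)
    [μ.IsAddHaarMeasure] {ℓ : ι → E →L[ℝ] ℝ} {r : ℝ}

omit [Nonempty ι] in
lemma ae_ne_of_ne {a b : E →L[ℝ] ℝ} (h : a ≠ b) : ∀ᵐ Y ∂μ, a Y ≠ b Y := by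
  have h1 : LinearMap.ker ((a - b : E →L[ℝ] ℝ) : E →ₗ[ℝ] ℝ) ≠ ⊤ := by
    intro h2
    rw [LinearMap.ker_eq_top] at h2
    apply h
    ext Y
    have := LinearMap.congr_fun h2 Y
    simpa [sub_eq_zero] using this
  have := Measure.addHaar_submodule μ _ h1
  rw [ae_iff]
  convert this using 2
  ext Y
  simp [sub_eq_zero]

omit [Nonempty ι] in
lemma ae_distinct (hinj : Function.Injective ℓ) :
    ∀ᵐ Y ∂μ, ∀ i j, i ≠ j → zl ℓ Y i ≠ zl ℓ Y j := by
  rw [ae_all_iff]; intro i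
  rw [ae_all_iff]; intro j
  by_cases hij : i = j
  · simp [hij]
  · filter_upwards [ae_ne_of_ne μ (hinj.ne hij)] with Y hY _
    exact hY

lemma exp_mx_le (hco : ∀ Y, ∃ i, r * ‖Y‖ ≤ ℓ i Y) (Y : E) :
    Real.exp (-mx (zl ℓ Y)) ≤ Real.exp (-(r * ‖Y‖)) := by
  obtain ⟨i, hi⟩ := hco Y
  rw [Real.exp_le_exp, neg_le_neg_iff]
  exact hi.trans (le_mx (zl ℓ Y) i)

lemma continuous_exp_mx : Continuous fun Y : E => Real.exp (-mx (zl ℓ Y)) :=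
  Real.continuous_exp.comp (continuous_mx.comp (continuous_zl ℓ)).neg

lemma integrable_exp_mx (hr : 0 < r) (hco : ∀ Y, ∃ i, r * ‖Y‖ ≤ ℓ i Y) :
    Integrable (fun Y => Real.exp (-mx (zl ℓ Y))) μ := by
  refine (integrable_exp_neg_norm μ hr).mono' continuous_exp_mx.aestronglyMeasurable
    (ae_of_all _ fun Y => ?_)
  rw [Real.norm_of_nonneg (Real.exp_pos _).le]
  exact exp_mx_le hco Y

lemma aesm_avg_psi (f : ι → ℝ) (ε : ℝ) (ν : Measure E) :
    AEStronglyMeasurable (fun Y => (∑ i, pw ε (zl ℓ Y) i * f i) * psi ε (zl ℓ Y)) ν :=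
  Continuous.aestronglyMeasurable ((continuous_finsetSum _ fun i _ =>
      ((continuous_pw i).comp (continuous_zl ℓ)).mul continuous_const).mul
      (continuous_psi.comp (continuous_zl ℓ)))

lemma aesm_sel (hinj : Function.Injective ℓ) (f : ι → ℝ) :
    AEStronglyMeasurable (fun Y => sel f (zl ℓ Y)) μ := by
  have hc : ∀ ε : ℝ, AEStronglyMeasurable (fun Y => ∑ i, pw ε (zl ℓ Y) i * f i) μ := fun ε =>
    (continuous_finsetSum _ fun i _ =>
      ((continuous_pw i).comp (continuous_zl ℓ)).mul continuous_const).aestronglyMeasurable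
  refine aestronglyMeasurable_of_tendsto_ae (𝓝[>] (0:ℝ)) hc ?_
  filter_upwards [ae_distinct μ hinj] with Y hY
  exact tendsto_avg hY f

lemma integrable_sel_exp (hr : 0 < r) (hco : ∀ Y, ∃ i, r * ‖Y‖ ≤ ℓ i Y)
    (hinj : Function.Injective ℓ) (f : ι → ℝ) :
    Integrable (fun Y => sel f (zl ℓ Y) * Real.exp (-mx (zl ℓ Y))) μ := by
  obtain ⟨C, hC0, hC⟩ := exists_abs_bound f
  refine ((integrable_exp_mx μ hr hco).const_mul C).mono'
    ((aesm_sel μ hinj f).mul continuous_exp_mx.aestronglyMeasurable) (ae_of_all _ fun Y => ?_)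
  rw [norm_mul, Real.norm_eq_abs, Real.norm_of_nonneg (Real.exp_pos _).le]
  exact mul_le_mul_of_nonneg_right (abs_sel_le _ _ hC) (Real.exp_pos _).le

lemma tendsto_integral_psi (hr : 0 < r) (hco : ∀ Y, ∃ i, r * ‖Y‖ ≤ ℓ i Y) :
    Tendsto (fun ε => ∫ Y, psi ε (zl ℓ Y) ∂μ) (𝓝[>] 0) (𝓝 (∫ Y, Real.exp (-mx (zl ℓ Y)) ∂μ)) := by
  refine tendsto_integral_filter_of_dominated_convergence (fun Y => Real.exp (-(r * ‖Y‖)))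
    (Eventually.of_forall fun ε => (continuous_psi.comp (continuous_zl ℓ)).aestronglyMeasurable)
    ?_ (integrable_exp_neg_norm μ hr) (ae_of_all _ fun Y => tendsto_psi _)
  filter_upwards [self_mem_nhdsWithin] with ε hε
  refine ae_of_all _ fun Y => ?_
  rw [Real.norm_of_nonneg (psi_pos _).le]
  exact psi_zl_le hε hco Y

lemma tendsto_setIntegral_avg (hr : 0 < r) (hco : ∀ Y, ∃ i, r * ‖Y‖ ≤ ℓ i Y)
    (hinj : Function.Injective ℓ) (f : ι → ℝ) (S : Set E) :
    Tendsto (fun ε => ∫ Y in S, (∑ i, pw ε (zl ℓ Y) i * f i) * psi ε (zl ℓ Y) ∂μ) (𝓝[>] 0)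
      (𝓝 (∫ Y in S, sel f (zl ℓ Y) * Real.exp (-mx (zl ℓ Y)) ∂μ)) := by
  obtain ⟨C, hC0, hC⟩ := exists_abs_bound f
  refine tendsto_integral_filter_of_dominated_convergence (fun Y => C * Real.exp (-(r * ‖Y‖)))
    (Eventually.of_forall fun ε => aesm_avg_psi f ε _)
    ?_ ((integrable_exp_neg_norm μ hr).const_mul C).integrableOn ?_
  · filter_upwards [self_mem_nhdsWithin] with ε hε
    refine ae_of_all _ fun Y => ?_
    rw [norm_mul, Real.norm_eq_abs, Real.norm_of_nonneg (psi_pos _).le]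
    exact mul_le_mul (abs_pw_avg_le _ _ hC) (psi_zl_le hε hco Y) (psi_pos _).le hC0
  · refine ae_restrict_of_ae ?_
    filter_upwards [ae_distinct μ hinj] with Y hY
    exact (tendsto_avg hY f).mul (tendsto_psi _)

end general
end

section
variable {ι : Type*} [Fintype ι] [Nonempty ι] {m : ℕ} {ℓ : ι → (ℝ × (Fin m → ℝ)) →L[ℝ] ℝ} {r : ℝ}

/-- A bound from below on the slice integrals that is uniform in `ε ≤ 1`. -/
lemma slice_lower_bound (hr : 0 < r) (hco : ∀ Y, ∃ i, r * ‖Y‖ ≤ ℓ i Y) (a b : ℝ) :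
    ∃ γ : ℝ, 0 < γ ∧ ∀ ε : ℝ, 0 < ε → ε ≤ 1 → ∀ s ∈ Icc a b,
      γ ≤ ∫ x : Fin m → ℝ, psi ε (zl ℓ (s, x)) := by
  obtain ⟨C, hC0, hC⟩ := exists_abs_bound fun i => ‖ℓ i‖
  have hC' : ∀ i, ‖ℓ i‖ ≤ C + 1 := fun i => by have := hC i; rw [abs_norm] at this; linarith
  set S := max |a| |b| with hS
  set K := Real.exp (-Real.log (Fintype.card ι)) * Real.exp (-((C + 1) * S)) with hK
  have hi := integrable_exp_neg_norm (volume : Measure (Fin m → ℝ)) (r := C + 1) (by linarith)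
  refine ⟨K * ∫ x : Fin m → ℝ, Real.exp (-((C + 1) * ‖x‖)), ?_, fun ε hε hε1 s hs => ?_⟩
  · refine mul_pos (by positivity) ?_
    exact integral_pos_of_integrable_nonneg_nonzero (x := 0) (by fun_prop) hi
      (fun x => (Real.exp_pos _).le) (Real.exp_pos _).ne'
  · rw [← integral_const_mul]
    refine integral_mono (hi.const_mul K) (integrable_slice hr hε hco s) fun x => ?_
    have hsS : |s| ≤ S := abs_le_max_abs_abs hs.1 hs.2
    have hn : ‖(s, x)‖ ≤ S + ‖x‖ := by
      refine max_le ?_ ?_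
      · exact hsS.trans (le_add_of_nonneg_right (norm_nonneg _))
      · exact le_add_of_nonneg_left ((abs_nonneg a).trans (le_max_left _ _))
    refine le_trans ?_ (le_psi hε (zl ℓ (s, x)) (M := (C + 1) * (S + ‖x‖)) fun i => ?_)
    · simp only [hK]
      rw [mul_assoc, ← Real.exp_add]
      refine mul_le_mul ?_ (le_of_eq (by ring_nf)) (Real.exp_pos _).le (Real.exp_pos _).le
      rw [Real.exp_le_exp, neg_le_neg_iff]
      exact mul_le_of_le_one_left (Real.log_nonneg (by
        exact_mod_cast Fintype.card_pos)) hε1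
    · calc zl ℓ (s, x) i ≤ ‖ℓ i (s, x)‖ := le_abs_self _
        _ ≤ ‖ℓ i‖ * ‖(s, x)‖ := (ℓ i).le_opNorm _
        _ ≤ _ := by gcongr; exact hC' i

lemma tendsto_slice_psi (hr : 0 < r) (hco : ∀ Y, ∃ i, r * ‖Y‖ ≤ ℓ i Y) (s : ℝ) :
    Tendsto (fun ε => ∫ x : Fin m → ℝ, psi ε (zl ℓ (s, x))) (𝓝[>] 0)
      (𝓝 (∫ x : Fin m → ℝ, Real.exp (-mx (zl ℓ (s, x))))) := by
  refine tendsto_integral_filter_of_dominated_convergence (fun x => Real.exp (-(r * ‖x‖)))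
    (Eventually.of_forall fun ε =>
      (continuous_psi.comp ((continuous_zl ℓ).comp (by fun_prop))).aestronglyMeasurable)
    ?_ (integrable_exp_neg_norm volume hr) (ae_of_all _ fun Y => tendsto_psi _)
  filter_upwards [self_mem_nhdsWithin] with ε hε
  refine ae_of_all _ fun x => ?_
  rw [Real.norm_of_nonneg (psi_pos _).le]
  refine (psi_zl_le hε hco _).trans ?_
  rw [Real.exp_le_exp]
  have : ‖x‖ ≤ ‖(s, x)‖ := le_max_right _ _
  nlinarith

/-- If the stability deficit of `f` vanishes as `ε → 0`, the left-hand mass of `sel f` is a fixed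
multiple of the slice integral: in the limit `core_eps` has right-hand side `0`. -/
theorem core_limit (hr : 0 < r) (hco : ∀ Y, ∃ i, r * ‖Y‖ ≤ ℓ i Y)
    (hinj : Function.Injective ℓ) (f : ι → ℝ)
    (hmean : ∀ ε : ℝ, 0 < ε → ∫ Y, (∑ i, pw ε (zl ℓ Y) i * f i) * psi ε (zl ℓ Y) = 0)
    (hq : Tendsto (fun ε : ℝ => ∫ Y, ((∑ i, pw ε (zl ℓ Y) i * f i) ^ 2 -
        (∑ i, pw ε (zl ℓ Y) i * f i ^ 2 - (∑ i, pw ε (zl ℓ Y) i * f i) ^ 2) / ε)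
          * psi ε (zl ℓ Y)) (𝓝[>] 0) (𝓝 0)) :
    ∃ c : ℝ, ∀ s : ℝ, (∫ Y in Iic s ×ˢ univ, sel f (zl ℓ Y) * Real.exp (-mx (zl ℓ Y)))
      = c * ∫ x : Fin m → ℝ, Real.exp (-mx (zl ℓ (s, x))) := by
  have : (volume : Measure (ℝ × (Fin m → ℝ))).IsAddHaarMeasure := by
    rw [Measure.volume_eq_prod]; infer_instance
  set T : ℝ → ℝ := fun s => ∫ Y in Iic s ×ˢ univ, sel f (zl ℓ Y) * Real.exp (-mx (zl ℓ Y)) with hT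
  set G : ℝ → ℝ := fun s => ∫ x : Fin m → ℝ, Real.exp (-mx (zl ℓ (s, x))) with hG
  have hlt : ∀ᶠ ε : ℝ in 𝓝[>] 0, ε ≤ 1 :=
    (eventually_le_nhds zero_lt_one).filter_mono nhdsWithin_le_nhds
  have hGpos : ∀ s, 0 < G s := by
    intro s
    obtain ⟨γ, hγ0, hγ⟩ := slice_lower_bound hr hco s s
    refine hγ0.trans_le (ge_of_tendsto (tendsto_slice_psi hr hco s) ?_)
    filter_upwards [self_mem_nhdsWithin, hlt] with ε hε hε1
    exact hγ ε hε hε1 s ⟨le_rfl, le_rfl⟩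
  have hlim : ∀ s, Tendsto (fun ε : ℝ =>
      (∫ Y in Iic s ×ˢ univ, (∑ i, pw ε (zl ℓ Y) i * f i) * psi ε (zl ℓ Y)) /
          (∫ x : Fin m → ℝ, psi ε (zl ℓ (s, x)))) (𝓝[>] 0) (𝓝 (T s / G s)) := fun s =>
    (tendsto_setIntegral_avg volume hr hco hinj f _).div (tendsto_slice_psi hr hco s) (hGpos s).ne'
  have hconst : ∀ a b : ℝ, a < b → T b / G b = T a / G a := by
    intro a b hab
    obtain ⟨γ, hγ0, hγ⟩ := slice_lower_bound hr hco a b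
    have h1 := ((((hlim b).sub (hlim a)).pow 2).const_mul γ)
    have h2 := hq.neg.const_mul (b - a)
    have h3 := le_of_tendsto_of_tendsto h1 h2 (by
      filter_upwards [self_mem_nhdsWithin, hlt] with ε hε hε1
      exact core_eps hr hε hco f (hmean ε hε) hab fun s hs => hγ ε hε hε1 s hs)
    rw [neg_zero, mul_zero] at h3
    have h4 : (T b / G b - T a / G a) ^ 2 ≤ 0 := by
      by_contra h
      push Not at h
      exact absurd h3 (not_le.2 (mul_pos hγ0 h))
    have h5 := pow_eq_zero_iff (two_ne_zero) |>.1 (le_antisymm h4 (sq_nonneg _))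
    linarith
  refine ⟨T 0 / G 0, fun s => ?_⟩
  have : T s / G s = T 0 / G 0 := by
    rcases lt_trichotomy s 0 with h | h | h
    · exact (hconst s 0 h).symm
    · rw [h]
    · exact hconst 0 s h
  rw [← this]
  exact (div_mul_cancel₀ _ (hGpos s).ne').symm

/-- Integrating the identity of `core_limit` against `exp (-lam * s)`. -/
theorem core_laplace (hr : 0 < r) (hco : ∀ Y, ∃ i, r * ‖Y‖ ≤ ℓ i Y)
    (hinj : Function.Injective ℓ) (f : ι → ℝ) {c : ℝ}
    (hc : ∀ s : ℝ, (∫ Y in Iic s ×ˢ univ, sel f (zl ℓ Y) * Real.exp (-mx (zl ℓ Y)))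
      = c * ∫ x : Fin m → ℝ, Real.exp (-mx (zl ℓ (s, x)))) {lam : ℝ} (hlam : 0 < lam)
    (hint : Integrable fun Y : ℝ × (Fin m → ℝ) => Real.exp (-(lam * Y.1)) * Real.exp (-mx (zl ℓ Y))) :
    ∫ Y : ℝ × (Fin m → ℝ), Real.exp (-(lam * Y.1)) * (sel f (zl ℓ Y) * Real.exp (-mx (zl ℓ Y)))
      = lam * c * ∫ Y : ℝ × (Fin m → ℝ), Real.exp (-(lam * Y.1)) * Real.exp (-mx (zl ℓ Y)) := by
  have : (volume : Measure (ℝ × (Fin m → ℝ))).IsAddHaarMeasure := by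
    rw [Measure.volume_eq_prod]; infer_instance
  obtain ⟨C, hC0, hC⟩ := exists_abs_bound f
  set H : ℝ × (Fin m → ℝ) → ℝ := fun Y => sel f (zl ℓ Y) * Real.exp (-mx (zl ℓ Y)) with hH
  have hHm : AEStronglyMeasurable H volume := (integrable_sel_exp volume hr hco hinj f).1
  have hHb : ∀ Y, |H Y| ≤ C * Real.exp (-mx (zl ℓ Y)) := fun Y => by
    rw [hH, abs_mul, abs_of_pos (Real.exp_pos _)]
    exact mul_le_mul_of_nonneg_right (abs_sel_le _ _ hC) (Real.exp_pos _).le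
  set S : Set (ℝ × (ℝ × (Fin m → ℝ))) := {p | p.2.1 ≤ p.1} with hS
  have hSm : MeasurableSet S := measurableSet_le (by fun_prop) (by fun_prop)
  set Φ : ℝ × (ℝ × (Fin m → ℝ)) → ℝ := S.indicator fun p => Real.exp (-(lam * p.1)) * H p.2 with hΦ
  have hΦm : AEStronglyMeasurable Φ (volume.prod volume) := by
    refine AEStronglyMeasurable.indicator ?_ hSm
    exact (Continuous.aestronglyMeasurable (by fun_prop)).mul hHm.comp_snd
  have hexp : ∀ y : ℝ, ∫ s in Ici y, Real.exp (-(lam * s)) = Real.exp (-(lam * y)) / lam := by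
    intro y
    rw [integral_Ici_eq_integral_Ioi]
    have := integral_exp_mul_Ioi (a := -lam) (by linarith) y
    simp only [neg_mul] at this
    rw [this, neg_div_neg_eq]
  have hexpi : ∀ y : ℝ, IntegrableOn (fun s => Real.exp (-(lam * s))) (Ici y) := by
    intro y
    rw [integrableOn_Ici_iff_integrableOn_Ioi]
    have := integrableOn_exp_mul_Ioi (a := -lam) (by linarith) y
    simpa only [neg_mul] using this
  have hΦY : ∀ Y, (fun s => Φ (s, Y)) = (Ici Y.1).indicator fun s => Real.exp (-(lam * s)) * H Y := by
    intro Y; ext s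
    simp [hΦ, hS, indicator]
  have hΦs : ∀ s, (fun Y => Φ (s, Y)) =
      (Iic s ×ˢ univ).indicator fun Y => Real.exp (-(lam * s)) * H Y := by
    intro s; ext Y
    simp [hΦ, hS, indicator]
  have hYint : ∀ Y, ∫ s, Φ (s, Y) = Real.exp (-(lam * Y.1)) * H Y / lam := by
    intro Y
    rw [hΦY, integral_indicator measurableSet_Ici, integral_mul_const, hexp]
    ring
  have hΦi : Integrable Φ (volume.prod volume) := by
    rw [integrable_prod_iff' hΦm]
    refine ⟨ae_of_all _ fun Y => ?_, ?_⟩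
    · rw [hΦY, integrable_indicator_iff measurableSet_Ici]
      exact (hexpi _).mul_const _
    · have e : ∀ Y, ∫ s, ‖Φ (s, Y)‖ = Real.exp (-(lam * Y.1)) * ‖H Y‖ / lam := by
        intro Y
        have : (fun s => ‖Φ (s, Y)‖) =
            (Ici Y.1).indicator fun s => Real.exp (-(lam * s)) * ‖H Y‖ := by
          ext s
          have := congrFun (hΦY Y) s
          rw [this, norm_indicator_eq_indicator_norm]
          simp [indicator]
        rw [this, integral_indicator measurableSet_Ici, integral_mul_const, hexp]
        ring
      simp only [e]
      refine ((hint.const_mul (C / lam))).mono' ?_ (ae_of_all _ fun Y => ?_)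
      · have hm : AEStronglyMeasurable
            (fun Y : ℝ × (Fin m → ℝ) => Real.exp (-(lam * Y.1))) volume :=
          Continuous.aestronglyMeasurable (by fun_prop)
        simp only [div_eq_mul_inv]
        exact (hm.mul hHm.norm).mul_const _
      · rw [Real.norm_of_nonneg (by positivity), Real.norm_eq_abs]
        calc _ ≤ Real.exp (-(lam * Y.1)) * (C * Real.exp (-mx (zl ℓ Y))) / lam := by
              gcongr; exact hHb Y
          _ = _ := by ring
  have hswap := integral_integral_swap (f := fun s Y => Φ (s, Y)) hΦi
  have hl : ∀ s, ∫ Y, Φ (s, Y) = c * ∫ x : Fin m → ℝ,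
      Real.exp (-(lam * s)) * Real.exp (-mx (zl ℓ (s, x))) := by
    intro s
    rw [hΦs, integral_indicator (measurableSet_Iic.prod MeasurableSet.univ), integral_const_mul, hc,
      integral_const_mul]
    ring
  have hr' : ∫ s : ℝ, ∫ x : Fin m → ℝ, Real.exp (-(lam * s)) * Real.exp (-mx (zl ℓ (s, x)))
      = ∫ Y : ℝ × (Fin m → ℝ), Real.exp (-(lam * Y.1)) * Real.exp (-mx (zl ℓ Y)) := by
    rw [Measure.volume_eq_prod] at hint ⊢
    rw [integral_prod _ hint]
  simp only [hl, hYint] at hswap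
  rw [integral_const_mul, hr', integral_div] at hswap
  rw [mul_assoc, hswap, mul_div_cancel₀ _ hlam.ne']
end

/-! ### The Laplace identity for an arbitrary functional -/

noncomputable section
section general
variable {E : Type*} [NormedAddCommGroup E] [NormedSpace ℝ E]
    [FiniteDimensional ℝ E] [MeasurableSpace E] [BorelSpace E] (μ : Measure E)
    [μ.IsAddHaarMeasure]

/-- Linear coordinates in which a nonzero functional `e` is the first coordinate; the Haar measure
changes by a constant `κ`. -/
lemma straighten {e : E →L[ℝ] ℝ} (he : e ≠ 0) :
    ∃ (m : ℕ) (L : (ℝ × (Fin m → ℝ)) ≃L[ℝ] E) (κ : ℝ), κ ≠ 0 ∧ (∀ Y, e (L Y) = Y.1) ∧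
      (∀ g : E → ℝ, ∫ Y, g Y ∂μ = κ * ∫ Y, g (L Y)) ∧
      (∀ g : E → ℝ, Integrable g μ → Integrable fun Y => g (L Y)) := by
  obtain ⟨u, hu⟩ : ∃ u, e u ≠ 0 := by
    by_contra! h
    exact he (by ext u; simpa using h u)
  set s : ℝ →L[ℝ] E := ContinuousLinearMap.toSpanSingleton ℝ ((e u)⁻¹ • u) with hs
  have hse : Function.RightInverse s e := fun t => by
    simp [hs, ContinuousLinearMap.toSpanSingleton_apply, hu]
  set A := ContinuousLinearEquiv.equivOfRightInverse e s hse with hA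
  set m := Module.finrank ℝ e.ker with hm
  have B : (Fin m → ℝ) ≃L[ℝ] e.ker := ContinuousLinearEquiv.ofFinrankEq (by simp [hm])
  set L : (ℝ × (Fin m → ℝ)) ≃L[ℝ] E :=
    ((ContinuousLinearEquiv.refl ℝ ℝ).prodCongr B).trans A.symm with hL
  have hLe : ∀ Y, e (L Y) = Y.1 := by
    intro Y
    have h1 := ContinuousLinearEquiv.fst_equivOfRightInverse e s hse (L Y)
    rw [← h1, ← hA]
    simp [hL]
  have hvol : (volume : Measure (ℝ × (Fin m → ℝ))).IsAddHaarMeasure := by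
    rw [Measure.volume_eq_prod]; infer_instance
  have hmap : (Measure.map L (volume : Measure (ℝ × (Fin m → ℝ)))).IsAddHaarMeasure :=
    ContinuousLinearEquiv.isAddHaarMeasure_map L _
  have hμ := Measure.isAddLeftInvariant_eq_smul μ (Measure.map L volume)
  set κ := Measure.addHaarScalarFactor μ (Measure.map L volume) with hκ
  have hκ0 : κ ≠ 0 := by
    intro h0
    rw [h0, zero_smul] at hμ
    exact (NeZero.ne μ) hμ
  have hme : MeasurableEmbedding L := L.toHomeomorph.measurableEmbedding
  refine ⟨m, L, κ, by exact_mod_cast hκ0, hLe, fun g => ?_, fun g hg => ?_⟩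
  · conv_lhs => rw [hμ]
    rw [integral_smul_nnreal_measure, hme.integral_map]
    rfl
  · rw [hμ] at hg
    have hg2 := (integrable_smul_measure (c := (κ : ENNReal)) (by exact_mod_cast hκ0)
      ENNReal.coe_ne_top).1 hg
    exact (hme.integrable_map_iff).1 hg2

end general

variable {E : Type*} [NormedAddCommGroup E] [NormedSpace ℝ E]
    [FiniteDimensional ℝ E] [MeasurableSpace E] [BorelSpace E] (μ : Measure E)
    [μ.IsAddHaarMeasure] {ι : Type*} [Fintype ι] [Nonempty ι] {ℓ : ι → E →L[ℝ] ℝ} {r : ℝ}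

/-- `core_laplace` for an arbitrary nonzero functional `e`, whose sign is reversed so that the
exponent becomes `lam * e`. -/
theorem laplace_general (hr : 0 < r) (hco : ∀ Y, ∃ i, r * ‖Y‖ ≤ ℓ i Y)
    (hinj : Function.Injective ℓ) (f : ι → ℝ)
    (hmean : ∀ ε : ℝ, 0 < ε → ∫ Y, (∑ i, pw ε (zl ℓ Y) i * f i) * psi ε (zl ℓ Y) ∂μ = 0)
    (hq : Tendsto (fun ε : ℝ => ∫ Y, ((∑ i, pw ε (zl ℓ Y) i * f i) ^ 2 -
        (∑ i, pw ε (zl ℓ Y) i * f i ^ 2 - (∑ i, pw ε (zl ℓ Y) i * f i) ^ 2) / ε)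
          * psi ε (zl ℓ Y) ∂μ) (𝓝[>] 0) (𝓝 0)) {e : E →L[ℝ] ℝ} (he : e ≠ 0) :
    ∃ c : ℝ, ∀ lam : ℝ, 0 < lam →
      Integrable (fun Y => Real.exp (lam * e Y) * Real.exp (-mx (zl ℓ Y))) μ →
      ∫ Y, Real.exp (lam * e Y) * (sel f (zl ℓ Y) * Real.exp (-mx (zl ℓ Y))) ∂μ
      = lam * c * ∫ Y, Real.exp (lam * e Y) * Real.exp (-mx (zl ℓ Y)) ∂μ := by
  obtain ⟨m, L, κ, hκ, hLe, hLi, hLint⟩ := straighten μ (neg_ne_zero.2 he)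
  set ℓ' : ι → (ℝ × (Fin m → ℝ)) →L[ℝ] ℝ := fun i => (ℓ i).comp L.toContinuousLinearMap with hℓ'
  have hz : ∀ Y, zl ℓ (L Y) = zl ℓ' Y := fun Y => rfl
  have hr' : 0 < r / (‖(L.symm : E →L[ℝ] (ℝ × (Fin m → ℝ)))‖ + 1) := by positivity
  have hco' : ∀ Y, ∃ i, r / (‖(L.symm : E →L[ℝ] (ℝ × (Fin m → ℝ)))‖ + 1) * ‖Y‖ ≤ ℓ' i Y := by
    intro Y
    obtain ⟨i, hi⟩ := hco (L Y)
    refine ⟨i, le_trans ?_ hi⟩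
    rw [div_mul_eq_mul_div, div_le_iff₀ (by positivity), mul_assoc]
    refine mul_le_mul_of_nonneg_left ?_ hr.le
    have := (L.symm : E →L[ℝ] (ℝ × (Fin m → ℝ))).le_opNorm (L Y)
    simp only [ContinuousLinearEquiv.coe_coe, ContinuousLinearEquiv.symm_apply_apply] at this
    nlinarith [norm_nonneg (L Y)]
  have hinj' : Function.Injective ℓ' := by
    intro i j hij
    apply hinj
    ext Y
    have := congrArg (fun a : (ℝ × (Fin m → ℝ)) →L[ℝ] ℝ => a (L.symm Y)) hij
    simpa [hℓ'] using this
  have hmean' : ∀ ε : ℝ, 0 < ε → ∫ Y, (∑ i, pw ε (zl ℓ' Y) i * f i) * psi ε (zl ℓ' Y) = 0 := by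
    intro ε hε
    have := hmean ε hε
    rw [hLi] at this
    exact (mul_eq_zero.1 this).resolve_left hκ
  have hq' : Tendsto (fun ε : ℝ => ∫ Y, ((∑ i, pw ε (zl ℓ' Y) i * f i) ^ 2 -
        (∑ i, pw ε (zl ℓ' Y) i * f i ^ 2 - (∑ i, pw ε (zl ℓ' Y) i * f i) ^ 2) / ε)
          * psi ε (zl ℓ' Y)) (𝓝[>] 0) (𝓝 0) := by
    have := hq.const_mul κ⁻¹
    rw [mul_zero] at this
    refine this.congr fun ε => ?_
    rw [hLi, inv_mul_cancel_left₀ hκ]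
    rfl
  obtain ⟨c, hc⟩ := core_limit hr' hco' hinj' f hmean' hq'
  refine ⟨c, fun lam hlam hint => ?_⟩
  have hLe' : ∀ Y, e (L Y) = -Y.1 := fun Y => by
    have := hLe Y
    simp only [neg_apply] at this
    linarith
  have h1 := hLint _ hint
  simp only [hLe', hz, mul_neg] at h1
  have h2 := core_laplace hr' hco' hinj' f hc hlam h1
  rw [hLi, hLi]
  simp only [hLe', hz, mul_neg]
  rw [h2]
  ring

/-- Differentiation at `0` of the Laplace transform of a function that decays exponentially. -/
lemma hasDerivAt_laplace (hr : 0 < r) {g : E → ℝ} (hg : AEStronglyMeasurable g μ) {C : ℝ}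
    (hC : ∀ Y, |g Y| ≤ C * Real.exp (-(r * ‖Y‖))) (e : E →L[ℝ] ℝ) :
    HasDerivAt (fun lam : ℝ => ∫ Y, Real.exp (lam * e Y) * g Y ∂μ) (∫ Y, e Y * g Y ∂μ) 0 := by
  set δ := r / (4 * (‖e‖ + 1)) with hδ
  have hδ0 : 0 < δ := by positivity
  have hC0 : 0 ≤ C := by
    have := (abs_nonneg _).trans (hC 0)
    simpa using this
  have hexpm : ∀ lam : ℝ, AEStronglyMeasurable (fun Y => Real.exp (lam * e Y)) μ := fun lam =>
    Continuous.aestronglyMeasurable (by fun_prop)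
  have h := hasDerivAt_integral_of_dominated_loc_of_deriv_le (μ := μ) (s := Metric.ball (0:ℝ) δ)
    (F := fun lam Y => Real.exp (lam * e Y) * g Y) (x₀ := (0:ℝ))
    (F' := fun lam Y => Real.exp (lam * e Y) * e Y * g Y)
    (bound := fun Y => (‖e‖ * (4 / r) * C) * Real.exp (-(r / 2 * ‖Y‖)))
    (Metric.ball_mem_nhds 0 hδ0)
    (Eventually.of_forall fun lam => (hexpm lam).mul hg) ?_ ?_ ?_ ?_ ?_
  · refine h.2.congr_deriv ?_
    simp
  · refine ((integrable_exp_neg_norm μ hr).const_mul C).mono' ((hexpm 0).mul hg)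
      (ae_of_all _ fun Y => ?_)
    simpa using hC Y
  · have hem : AEStronglyMeasurable (fun Y => e Y) μ := e.continuous.aestronglyMeasurable
    exact ((hexpm 0).mul hem).mul hg
  · refine ae_of_all _ fun Y lam hlam => ?_
    have hlam' : |lam| ≤ δ := by
      rw [Metric.mem_ball, dist_zero_right, Real.norm_eq_abs] at hlam; exact hlam.le
    have h1 : |e Y| ≤ ‖e‖ * ‖Y‖ := e.le_opNorm Y
    have h2 : lam * e Y ≤ r / 4 * ‖Y‖ := by
      calc lam * e Y ≤ |lam * e Y| := le_abs_self _
        _ = |lam| * |e Y| := abs_mul _ _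
        _ ≤ δ * (‖e‖ * ‖Y‖) := by gcongr
        _ = r / 4 * ‖Y‖ * (‖e‖ / (‖e‖ + 1)) := by rw [hδ]; field_simp
        _ ≤ r / 4 * ‖Y‖ * 1 := by
          gcongr
          rw [div_le_one (by positivity)]; linarith
        _ = _ := mul_one _
    have h3 : ‖Y‖ ≤ 4 / r * Real.exp (r / 4 * ‖Y‖) := by
      have := Real.add_one_le_exp (r / 4 * ‖Y‖)
      rw [div_mul_eq_mul_div, le_div_iff₀ hr]
      linarith
    rw [norm_mul, norm_mul, Real.norm_of_nonneg (Real.exp_pos _).le, Real.norm_eq_abs,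
      Real.norm_eq_abs]
    calc _ ≤ Real.exp (r / 4 * ‖Y‖) * (‖e‖ * (4 / r * Real.exp (r / 4 * ‖Y‖))) *
          (C * Real.exp (-(r * ‖Y‖))) := by
          gcongr
          · exact h1.trans (by gcongr)
          · exact hC Y
      _ = (‖e‖ * (4 / r) * C) * (Real.exp (r / 4 * ‖Y‖) * Real.exp (r / 4 * ‖Y‖) *
          Real.exp (-(r * ‖Y‖))) := by ring
      _ = _ := by rw [← Real.exp_add, ← Real.exp_add]; ring_nf
  · exact (integrable_exp_neg_norm μ (by positivity)).const_mul _
  · refine ae_of_all _ fun Y lam _ => ?_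
    refine HasDerivAt.mul_const ?_ _
    have := ((hasDerivAt_id lam).mul_const (e Y)).exp
    simpa using this

end

/-! ### Stable functions are linear -/

noncomputable section

section
variable {ι : Type*} [Fintype ι] [Nonempty ι]

lemma mx_smul {t : ℝ} (ht : 0 < t) (z : ι → ℝ) : mx (t • z) = t * mx z := by
  obtain ⟨i, hi⟩ := exists_mx z
  obtain ⟨j, hj⟩ := exists_mx (t • z)
  refine le_antisymm ?_ ?_
  · rw [hj]; exact mul_le_mul_of_nonneg_left (le_mx z j) ht.le
  · rw [hi]; exact le_mx (t • z) i

lemma sel_smul {t : ℝ} (ht : 0 < t) (f z : ι → ℝ) : sel f (t • z) = sel f z := by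
  have h : ∀ i, (∀ k, k ≠ i → (t • z) k < (t • z) i) ↔ ∀ k, k ≠ i → z k < z i := fun i =>
    forall₂_congr fun k _ => mul_lt_mul_iff_right₀ ht
  unfold sel
  refine Finset.sum_congr rfl fun i _ => ?_
  by_cases hi : ∀ k, k ≠ i → z k < z i
  · rw [if_pos hi, if_pos ((h i).2 hi)]
  · rw [if_neg hi, if_neg fun h' => hi ((h i).1 h')]

lemma zl_smul {E : Type*} [NormedAddCommGroup E] [NormedSpace ℝ E] (ℓ : ι → E →L[ℝ] ℝ) (t : ℝ)
    (Y : E) : zl ℓ (t • Y) = t • zl ℓ Y := by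
  ext i; simp [zl]

lemma mx_eq_of_strict {z : ι → ℝ} {i : ι} (h : ∀ k, k ≠ i → z k < z i) : mx z = z i := by
  obtain ⟨j, hj⟩ := exists_mx z
  by_cases hji : j = i
  · rw [hj, hji]
  · exact absurd (le_mx z i) (not_le.2 (hj ▸ h j hji))
end

variable {E : Type*} [NormedAddCommGroup E] [NormedSpace ℝ E]
    [FiniteDimensional ℝ E] [MeasurableSpace E] [BorelSpace E] (μ : Measure E)
    [μ.IsAddHaarMeasure] {ι : Type*} [Fintype ι] [Nonempty ι] {ℓ : ι → E →L[ℝ] ℝ} {r : ℝ}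

lemma integrable_exp_lt (e : E →L[ℝ] ℝ) {lam : ℝ}
    {r' : ℝ} (hr' : 0 < r') (h : ∀ Y, r' * ‖Y‖ ≤ mx (zl ℓ Y) - lam * e Y) :
    Integrable (fun Y => Real.exp (lam * e Y) * Real.exp (-mx (zl ℓ Y))) μ := by
  refine (integrable_exp_neg_norm μ hr').mono'
    ((Continuous.aestronglyMeasurable (by fun_prop)).mul continuous_exp_mx.aestronglyMeasurable)
    (ae_of_all _ fun Y => ?_)
  rw [Real.norm_of_nonneg (by positivity), ← Real.exp_add, Real.exp_le_exp]
  linarith [h Y]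

lemma le_mx_zl (hco : ∀ Y, ∃ i, r * ‖Y‖ ≤ ℓ i Y) (Y : E) : r * ‖Y‖ ≤ mx (zl ℓ Y) := by
  obtain ⟨i, hi⟩ := hco Y
  exact hi.trans (le_mx (zl ℓ Y) i)

/-- The constant in the Laplace identity is a first moment, hence linear in the functional. -/
lemma moment_formula (hr : 0 < r) (hco : ∀ Y, ∃ i, r * ‖Y‖ ≤ ℓ i Y)
    (hinj : Function.Injective ℓ) (f : ι → ℝ)
    (hmean0 : ∫ Y, sel f (zl ℓ Y) * Real.exp (-mx (zl ℓ Y)) ∂μ = 0) {e : E →L[ℝ] ℝ} {c : ℝ}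
    (hc : ∀ lam : ℝ, 0 < lam →
      Integrable (fun Y => Real.exp (lam * e Y) * Real.exp (-mx (zl ℓ Y))) μ →
      ∫ Y, Real.exp (lam * e Y) * (sel f (zl ℓ Y) * Real.exp (-mx (zl ℓ Y))) ∂μ
      = lam * c * ∫ Y, Real.exp (lam * e Y) * Real.exp (-mx (zl ℓ Y)) ∂μ) :
    c * ∫ Y, Real.exp (-mx (zl ℓ Y)) ∂μ
      = ∫ Y, e Y * (sel f (zl ℓ Y) * Real.exp (-mx (zl ℓ Y))) ∂μ := by
  obtain ⟨C, hC0, hC⟩ := exists_abs_bound f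
  have h1 := hasDerivAt_laplace μ hr
    (g := fun Y => sel f (zl ℓ Y) * Real.exp (-mx (zl ℓ Y))) (C := C)
    ((aesm_sel μ hinj f).mul continuous_exp_mx.aestronglyMeasurable) (fun Y => by
      rw [abs_mul, abs_of_pos (Real.exp_pos _)]
      exact mul_le_mul (abs_sel_le _ _ hC) (exp_mx_le hco Y) (Real.exp_pos _).le hC0) e
  have h2 := (hasDerivAt_laplace μ hr
    (g := fun Y => Real.exp (-mx (zl ℓ Y))) (C := 1)
    continuous_exp_mx.aestronglyMeasurable (fun Y => by
      rw [abs_of_pos (Real.exp_pos _), one_mul]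
      exact exp_mx_le hco Y) e).continuousAt
  have h3 := (hasDerivAt_iff_tendsto_slope.1 h1).mono_left
    (nhdsWithin_mono 0 (fun x (hx : 0 < x) => ne_of_gt hx : Ioi (0:ℝ) ⊆ {0}ᶜ))
  have h4 : Tendsto (fun lam : ℝ => c * ∫ Y, Real.exp (lam * e Y) * Real.exp (-mx (zl ℓ Y)) ∂μ)
      (𝓝[>] 0) (𝓝 (c * ∫ Y, Real.exp (-mx (zl ℓ Y)) ∂μ)) := by
    have := (h2.tendsto.mono_left (nhdsWithin_le_nhds (s := Ioi (0:ℝ)))).const_mul c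
    simpa using this
  refine tendsto_nhds_unique (h4.congr' ?_) h3
  have hδ : 0 < r / (2 * (‖e‖ + 1)) := by positivity
  filter_upwards [self_mem_nhdsWithin,
    (eventually_lt_nhds hδ).filter_mono nhdsWithin_le_nhds] with lam hlam hlt
  rw [slope_def_field]
  simp only [zero_mul, Real.exp_zero, one_mul, hmean0, sub_zero]
  have hlam0 : 0 < lam := hlam
  rw [hc lam hlam0 ?_]
  · field_simp
  · refine integrable_exp_lt μ e (half_pos hr) fun Y => ?_
    have h5 := le_mx_zl hco Y
    have h6 : lam * e Y ≤ r / 2 * ‖Y‖ := by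
      calc lam * e Y ≤ lam * (‖e‖ * ‖Y‖) := by
            gcongr; exact (le_abs_self _).trans (e.le_opNorm Y)
        _ ≤ r / (2 * (‖e‖ + 1)) * (‖e‖ * ‖Y‖) := by gcongr
        _ = r / 2 * ‖Y‖ * (‖e‖ / (‖e‖ + 1)) := by field_simp
        _ ≤ r / 2 * ‖Y‖ * 1 := by
          gcongr
          rw [div_le_one (by positivity)]; linarith
        _ = _ := mul_one _
    linarith

/-- Letting the parameter of the Laplace identity for the functional `ℓ a` tend to `1` isolates
the cone where `ℓ a` is maximal. -/
lemma cone_formula (hr : 0 < r) (hco : ∀ Y, ∃ i, r * ‖Y‖ ≤ ℓ i Y)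
    (hinj : Function.Injective ℓ) (f : ι → ℝ) {a : ι} (hU : ∃ Y, ∀ k, k ≠ a → ℓ k Y < ℓ a Y) {c : ℝ}
    (hc : ∀ lam : ℝ, 0 < lam →
      Integrable (fun Y => Real.exp (lam * ℓ a Y) * Real.exp (-mx (zl ℓ Y))) μ →
      ∫ Y, Real.exp (lam * ℓ a Y) * (sel f (zl ℓ Y) * Real.exp (-mx (zl ℓ Y))) ∂μ
      = lam * c * ∫ Y, Real.exp (lam * ℓ a Y) * Real.exp (-mx (zl ℓ Y)) ∂μ) :
    f a = c := by
  obtain ⟨C, hC0, hC⟩ := exists_abs_bound f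
  set U : Set E := {Y | ∀ k, k ≠ a → ℓ k Y < ℓ a Y} with hUdef
  have hUo : IsOpen U := by
    have : U = ⋂ k, {Y | k ≠ a → ℓ k Y < ℓ a Y} := by ext; simp [hUdef]
    rw [this]
    refine isOpen_iInter_of_finite fun k => ?_
    by_cases hk : k = a
    · simp [hk]
    · simpa [hk] using isOpen_lt (ℓ k).continuous (ℓ a).continuous
  set W : ℝ → E → ℝ := fun t Y => Real.exp (-((mx (zl ℓ Y) - ℓ a Y) * t⁻¹) - ℓ a Y) with hW
  have hWc : ∀ t, Continuous (W t) := fun t => by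
    have := (continuous_mx.comp (continuous_zl ℓ) : Continuous fun Y => mx (zl ℓ Y))
    simp only [hW]
    fun_prop
  -- rescaling by `t = 1 - lam`
  have hid : ∀ t ∈ Ioo (0:ℝ) 1, ∫ Y, sel f (zl ℓ Y) * W t Y ∂μ = (1 - t) * c * ∫ Y, W t Y ∂μ := by
    intro t ht
    have h1 := hc (1 - t) (by linarith [ht.2]) (integrable_exp_lt μ (ℓ a)
      (r' := t * r) (mul_pos ht.1 hr) fun Y => by
        have h5 := le_mx_zl hco Y
        have h6 := le_mx (zl ℓ Y) a
        have h7 : ℓ a Y ≤ mx (zl ℓ Y) := h6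
        nlinarith [mul_le_mul_of_nonneg_left h5 ht.1.le,
          mul_le_mul_of_nonneg_left h7 (by linarith [ht.2] : 0 ≤ 1 - t)])
    have hs : ∀ Y, Real.exp ((1 - t) * ℓ a (t⁻¹ • Y)) * Real.exp (-mx (zl ℓ (t⁻¹ • Y))) = W t Y := by
      intro Y
      have ht0 : t ≠ 0 := ht.1.ne'
      rw [zl_smul, mx_smul (inv_pos.2 ht.1), ← Real.exp_add, map_smul, smul_eq_mul]
      simp only [hW]
      congr 1
      field_simp
      ring
    have hs2 : ∀ Y, Real.exp ((1 - t) * ℓ a (t⁻¹ • Y)) *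
        (sel f (zl ℓ (t⁻¹ • Y)) * Real.exp (-mx (zl ℓ (t⁻¹ • Y)))) = sel f (zl ℓ Y) * W t Y := by
      intro Y
      rw [← hs Y, zl_smul, sel_smul (inv_pos.2 ht.1)]
      ring
    have e1 := Measure.integral_comp_inv_smul μ (fun Y => Real.exp ((1 - t) * ℓ a Y) *
      (sel f (zl ℓ Y) * Real.exp (-mx (zl ℓ Y)))) t
    have e2 := Measure.integral_comp_inv_smul μ
      (fun Y => Real.exp ((1 - t) * ℓ a Y) * Real.exp (-mx (zl ℓ Y))) t
    simp only [hs2] at e1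
    simp only [hs] at e2
    rw [e1, e2, h1, smul_eq_mul, smul_eq_mul]
    ring
  have hWlim : ∀ᵐ Y ∂μ, Tendsto (fun t => W t Y) (𝓝[>] 0)
      (𝓝 (U.indicator (fun Y => Real.exp (-ℓ a Y)) Y)) := by
    filter_upwards [ae_distinct μ hinj] with Y hY
    by_cases hYU : Y ∈ U
    · have : mx (zl ℓ Y) = ℓ a Y := mx_eq_of_strict (z := zl ℓ Y) hYU
      rw [indicator_of_mem hYU]
      simp only [hW, this, sub_self, zero_mul, neg_zero, zero_sub]
      exact tendsto_const_nhds
    · rw [indicator_of_notMem hYU]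
      have hlt : 0 < mx (zl ℓ Y) - ℓ a Y := by
        rw [sub_pos]
        refine lt_of_le_of_ne (le_mx (zl ℓ Y) a) fun heq => hYU fun k hk => ?_
        exact lt_of_le_of_ne (heq ▸ le_mx (zl ℓ Y) k) (hY k a hk)
      refine Real.tendsto_exp_atBot.comp ?_
      simp only [sub_eq_add_neg]
      refine tendsto_atBot_add_const_right _ _ ?_
      exact tendsto_neg_atTop_atBot.comp (tendsto_inv_nhdsGT_zero.const_mul_atTop hlt)
  have hWb : ∀ t ∈ Ioo (0:ℝ) 1, ∀ Y, W t Y ≤ Real.exp (-(r * ‖Y‖)) := by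
    intro t ht Y
    refine le_trans ?_ (exp_mx_le hco Y)
    simp only [hW]
    rw [Real.exp_le_exp]
    have h7 : ℓ a Y ≤ mx (zl ℓ Y) := le_mx (zl ℓ Y) a
    have h8 : 1 ≤ t⁻¹ := (one_le_inv₀ ht.1).2 ht.2.le
    nlinarith [mul_le_mul_of_nonneg_left h8 (sub_nonneg.2 h7)]
  have hev : ∀ᶠ t : ℝ in 𝓝[>] 0, t ∈ Ioo (0:ℝ) 1 := Ioo_mem_nhdsGT one_pos
  have hl1 : Tendsto (fun t => ∫ Y, W t Y ∂μ) (𝓝[>] 0)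
      (𝓝 (∫ Y, U.indicator (fun Y => Real.exp (-ℓ a Y)) Y ∂μ)) := by
    refine tendsto_integral_filter_of_dominated_convergence (fun Y => Real.exp (-(r * ‖Y‖)))
      (Eventually.of_forall fun t => (hWc t).aestronglyMeasurable) ?_
      (integrable_exp_neg_norm μ hr) hWlim
    filter_upwards [hev] with t ht
    refine ae_of_all _ fun Y => ?_
    rw [Real.norm_of_nonneg (Real.exp_pos _).le]
    exact hWb t ht Y
  have hl2 : Tendsto (fun t => ∫ Y, sel f (zl ℓ Y) * W t Y ∂μ) (𝓝[>] 0)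
      (𝓝 (∫ Y, sel f (zl ℓ Y) * U.indicator (fun Y => Real.exp (-ℓ a Y)) Y ∂μ)) := by
    refine tendsto_integral_filter_of_dominated_convergence (fun Y => C * Real.exp (-(r * ‖Y‖)))
      (Eventually.of_forall fun t => (aesm_sel μ hinj f).mul (hWc t).aestronglyMeasurable) ?_
      ((integrable_exp_neg_norm μ hr).const_mul C) ?_
    · filter_upwards [hev] with t ht
      refine ae_of_all _ fun Y => ?_
      rw [norm_mul, Real.norm_eq_abs, Real.norm_of_nonneg (Real.exp_pos _).le]
      exact mul_le_mul (abs_sel_le _ _ hC) (hWb t ht Y) (Real.exp_pos _).le hC0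
    · filter_upwards [hWlim] with Y hY
      exact hY.const_mul _
  have hl3 : Tendsto (fun t : ℝ => (1 - t) * c * ∫ Y, W t Y ∂μ) (𝓝[>] 0)
      (𝓝 (c * ∫ Y, U.indicator (fun Y => Real.exp (-ℓ a Y)) Y ∂μ)) := by
    have h1 : Tendsto (fun t : ℝ => (1 - t) * c) (𝓝[>] 0) (𝓝 c) := by
      have : Continuous fun t : ℝ => (1 - t) * c := by fun_prop
      simpa using (this.tendsto 0).mono_left (nhdsWithin_le_nhds (s := Ioi 0))
    exact h1.mul hl1
  have heq := tendsto_nhds_unique (hl2.congr' (by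
    filter_upwards [hev] with t ht using hid t ht)) hl3
  have hfa : ∀ Y, sel f (zl ℓ Y) * U.indicator (fun Y => Real.exp (-ℓ a Y)) Y
      = f a * U.indicator (fun Y => Real.exp (-ℓ a Y)) Y := by
    intro Y
    by_cases hYU : Y ∈ U
    · rw [sel_eq f (z := zl ℓ Y) (i := a) hYU]
    · rw [indicator_of_notMem hYU, mul_zero, mul_zero]
  simp only [hfa] at heq
  rw [integral_const_mul] at heq
  refine mul_right_cancel₀ (ne_of_gt ?_) heq
  have hVi : IntegrableOn (fun Y => Real.exp (-ℓ a Y)) U μ := by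
    refine ((integrable_exp_mx μ hr hco).integrableOn (s := U)).congr_fun (fun Y hY => ?_)
      hUo.measurableSet
    have : mx (zl ℓ Y) = ℓ a Y := mx_eq_of_strict (z := zl ℓ Y) hY
    simp only [this]
  rw [integral_indicator hUo.measurableSet]
  rw [integral_pos_iff_support_of_nonneg (fun Y => (Real.exp_pos _).le) hVi]
  have hsupp : Function.support (fun Y => Real.exp (-ℓ a Y)) = univ := by
    ext Y; simp [(Real.exp_pos _).ne']
  rw [hsupp, Measure.restrict_apply_univ]
  exact hUo.measure_pos μ hU

/-- Stable functions are moments: comparing the behaviour of the Laplace identity of `ℓ a` at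
parameter `1` (which sees the value `f a`) and at parameter `0` (which sees a first moment)
identifies the constant in two ways. -/
theorem linear_of_stable (hr : 0 < r) (hco : ∀ Y, ∃ i, r * ‖Y‖ ≤ ℓ i Y)
    (hinj : Function.Injective ℓ) (hU : ∀ a, ∃ Y, ∀ k, k ≠ a → ℓ k Y < ℓ a Y) (hne : ∀ a, ℓ a ≠ 0)
    (f : ι → ℝ)
    (hmean : ∀ ε : ℝ, 0 < ε → ∫ Y, (∑ i, pw ε (zl ℓ Y) i * f i) * psi ε (zl ℓ Y) ∂μ = 0)
    (hq : Tendsto (fun ε : ℝ => ∫ Y, ((∑ i, pw ε (zl ℓ Y) i * f i) ^ 2 -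
        (∑ i, pw ε (zl ℓ Y) i * f i ^ 2 - (∑ i, pw ε (zl ℓ Y) i * f i) ^ 2) / ε)
          * psi ε (zl ℓ Y) ∂μ) (𝓝[>] 0) (𝓝 0)) :
    ∀ a, f a * ∫ Y, Real.exp (-mx (zl ℓ Y)) ∂μ
      = ∫ Y, ℓ a Y * (sel f (zl ℓ Y) * Real.exp (-mx (zl ℓ Y))) ∂μ := by
  intro a
  obtain ⟨c, hc⟩ := laplace_general μ hr hco hinj f hmean hq (hne a)
  have hmean0 : ∫ Y, sel f (zl ℓ Y) * Real.exp (-mx (zl ℓ Y)) ∂μ = 0 := by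
    have h1 := tendsto_setIntegral_avg μ hr hco hinj f univ
    simp only [Measure.restrict_univ] at h1
    refine tendsto_nhds_unique h1 (tendsto_const_nhds.congr' ?_)
    filter_upwards [self_mem_nhdsWithin] with ε hε using (hmean ε hε).symm
  rw [cone_formula μ hr hco hinj f (hU a) hc, moment_formula μ hr hco hinj f hmean0 hc]

end

/-! ### The overlap matrix -/

noncomputable section

variable {E : Type*} [NormedAddCommGroup E] [NormedSpace ℝ E]
    [FiniteDimensional ℝ E] [MeasurableSpace E] [BorelSpace E] (μ : Measure E)
    [μ.IsAddHaarMeasure] {ι : Type*} [Fintype ι] [Nonempty ι] {ℓ : ι → E →L[ℝ] ℝ} {r ε : ℝ}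

/-- The overlap of the softened cells `i` and `j` at scale `ε`. -/
def overlap (ℓ : ι → E →L[ℝ] ℝ) (ε : ℝ) (i j : ι) : ℝ :=
  ∫ Y, pw ε (zl ℓ Y) i * pw ε (zl ℓ Y) j * psi ε (zl ℓ Y) ∂μ

/-- The mass of the softened cell `i` at scale `ε`. -/
def cellMass (ℓ : ι → E →L[ℝ] ℝ) (ε : ℝ) (i : ι) : ℝ := ∫ Y, pw ε (zl ℓ Y) i * psi ε (zl ℓ Y) ∂μ

/-- Bounded continuous weights may be multiplied with `psi`. -/
lemma integrable_weight (hr : 0 < r) (hε : 0 < ε) (hco : ∀ Y, ∃ i, r * ‖Y‖ ≤ ℓ i Y)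
    {g : E → ℝ} (hg : Continuous g) {C : ℝ} (hC : ∀ Y, |g Y| ≤ C) :
    Integrable (fun Y => g Y * psi ε (zl ℓ Y)) μ := by
  refine ((integrable_psi_zl μ hr hε hco).const_mul C).mono'
    (hg.mul (continuous_psi.comp (continuous_zl ℓ))).aestronglyMeasurable (ae_of_all _ fun Y => ?_)
  rw [norm_mul, Real.norm_eq_abs, Real.norm_of_nonneg (psi_pos _).le]
  exact mul_le_mul_of_nonneg_right (hC Y) (psi_pos _).le

lemma continuous_pw_zl (i : ι) : Continuous fun Y => pw ε (zl ℓ Y) i :=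
  (continuous_pw i).comp (continuous_zl ℓ)

lemma abs_pw_le (z : ι → ℝ) (i : ι) : |pw ε z i| ≤ 1 := by
  rw [abs_of_nonneg (pw_nonneg z i)]; exact pw_le_one z i

lemma integrable_pw (hr : 0 < r) (hε : 0 < ε) (hco : ∀ Y, ∃ i, r * ‖Y‖ ≤ ℓ i Y) (i : ι) :
    Integrable (fun Y => pw ε (zl ℓ Y) i * psi ε (zl ℓ Y)) μ :=
  integrable_weight μ hr hε hco (continuous_pw_zl i) fun _ => abs_pw_le _ i

lemma integrable_pw_mul (hr : 0 < r) (hε : 0 < ε) (hco : ∀ Y, ∃ i, r * ‖Y‖ ≤ ℓ i Y) (i j : ι) :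
    Integrable (fun Y => pw ε (zl ℓ Y) i * pw ε (zl ℓ Y) j * psi ε (zl ℓ Y)) μ :=
  integrable_weight μ hr hε hco ((continuous_pw_zl i).mul (continuous_pw_zl j)) (C := 1) fun _ => by
    rw [abs_mul]
    exact mul_le_one₀ (abs_pw_le _ i) (abs_nonneg _) (abs_pw_le _ j)

lemma overlap_comm (i j : ι) : overlap μ ℓ ε i j = overlap μ ℓ ε j i := by
  unfold overlap
  simp only [mul_comm (pw ε _ i)]

lemma sum_overlap_mul (hr : 0 < r) (hε : 0 < ε) (hco : ∀ Y, ∃ i, r * ‖Y‖ ≤ ℓ i Y) (a : ι → ℝ) (i : ι) :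
    ∑ j, overlap μ ℓ ε i j * a j
      = ∫ Y, pw ε (zl ℓ Y) i * (∑ j, pw ε (zl ℓ Y) j * a j) * psi ε (zl ℓ Y) ∂μ := by
  unfold overlap
  simp only [← integral_mul_const]
  rw [← integral_finsetSum _ fun j _ => (integrable_pw_mul μ hr hε hco i j).mul_const _]
  refine integral_congr_ae (ae_of_all _ fun Y => ?_)
  simp only [Finset.mul_sum, Finset.sum_mul]
  exact Finset.sum_congr rfl fun j _ => by ring

lemma cellMass_eq_sum (hr : 0 < r) (hε : 0 < ε) (hco : ∀ Y, ∃ i, r * ‖Y‖ ≤ ℓ i Y) (i : ι) :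
    cellMass μ ℓ ε i = ∑ j, overlap μ ℓ ε i j := by
  have := sum_overlap_mul μ hr hε hco (fun _ => 1) i
  simp only [mul_one, pw_sum] at this
  rw [this]; rfl

lemma sum_cellMass_mul (hr : 0 < r) (hε : 0 < ε) (hco : ∀ Y, ∃ i, r * ‖Y‖ ≤ ℓ i Y) (a : ι → ℝ) :
    ∑ i, cellMass μ ℓ ε i * a i = ∫ Y, (∑ i, pw ε (zl ℓ Y) i * a i) * psi ε (zl ℓ Y) ∂μ := by
  unfold cellMass
  simp only [← integral_mul_const]
  rw [← integral_finsetSum _ fun j _ => (integrable_pw μ hr hε hco j).mul_const _]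
  refine integral_congr_ae (ae_of_all _ fun Y => ?_)
  simp only [Finset.sum_mul]
  exact Finset.sum_congr rfl fun j _ => by ring

lemma integral_psi_pos (hr : 0 < r) (hε : 0 < ε) (hco : ∀ Y, ∃ i, r * ‖Y‖ ≤ ℓ i Y) :
    0 < ∫ Y, psi ε (zl ℓ Y) ∂μ :=
  integral_pos_of_integrable_nonneg_nonzero (x := 0) (continuous_psi.comp (continuous_zl ℓ))
    (integrable_psi_zl μ hr hε hco) (fun _ => (psi_pos _).le) (psi_pos _).ne'

/-- Integration by parts along `u`: the vector of values `ℓ j u` satisfies an eigenvector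
equation for the overlap matrix. -/
lemma translation_identity (hr : 0 < r) (hε : 0 < ε) (hco : ∀ Y, ∃ i, r * ‖Y‖ ≤ ℓ i Y) (u : E)
    (i : ι) :
    (cellMass μ ℓ ε i * ℓ i u - ∑ j, overlap μ ℓ ε i j * ℓ j u) / ε = ∑ j, overlap μ ℓ ε i j * ℓ j u := by
  set a : ι → ℝ := zl ℓ u with ha
  have hz : ∀ (Y : E) (t : ℝ), zl ℓ (Y + t • u) = zl ℓ Y + t • a := fun Y t => by
    ext k; simp [zl, ha]
  obtain ⟨C, hC0, hC⟩ := exists_abs_bound a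
  have hav : Continuous fun Y => ∑ j, pw ε (zl ℓ Y) j * a j :=
    continuous_finsetSum _ fun i _ => (continuous_pw_zl i).mul continuous_const
  have h := integral_bilinear_hasLineDerivAt_right_eq_neg_left_of_integrable
    (f := fun Y => pw ε (zl ℓ Y) i)
    (f' := fun Y => pw ε (zl ℓ Y) i * (a i - ∑ j, pw ε (zl ℓ Y) j * a j) / ε)
    (g := fun Y => psi ε (zl ℓ Y))
    (g' := fun Y => -(∑ j, pw ε (zl ℓ Y) j * a j) * psi ε (zl ℓ Y)) (μ := μ) (v := u)
    (B := ContinuousLinearMap.mul ℝ ℝ) ?_ ?_ ?_ ?_ ?_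
  · simp only [ContinuousLinearMap.mul_apply'] at h
    have e2 : ∑ j, overlap μ ℓ ε i j * ℓ j u = ∑ j, overlap μ ℓ ε i j * a j := rfl
    have e3 : cellMass μ ℓ ε i * ℓ i u = cellMass μ ℓ ε i * a i := rfl
    rw [e2, e3, sum_overlap_mul μ hr hε hco]
    have l1 : ∫ Y, pw ε (zl ℓ Y) i * (-(∑ j, pw ε (zl ℓ Y) j * a j) * psi ε (zl ℓ Y)) ∂μ
        = -∫ Y, pw ε (zl ℓ Y) i * (∑ j, pw ε (zl ℓ Y) j * a j) * psi ε (zl ℓ Y) ∂μ := by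
      rw [← integral_neg]
      refine integral_congr_ae (ae_of_all _ fun Y => ?_)
      simp only; ring
    have l2 : ∫ Y, pw ε (zl ℓ Y) i * (a i - ∑ j, pw ε (zl ℓ Y) j * a j) / ε * psi ε (zl ℓ Y) ∂μ
        = (cellMass μ ℓ ε i * a i -
          ∫ Y, pw ε (zl ℓ Y) i * (∑ j, pw ε (zl ℓ Y) j * a j) * psi ε (zl ℓ Y) ∂μ) / ε := by
      unfold cellMass
      rw [← integral_mul_const, ← integral_sub ((integrable_pw μ hr hε hco i).mul_const _),
        ← integral_div]
      · refine integral_congr_ae (ae_of_all _ fun Y => ?_)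
        simp only; ring
      · refine integrable_weight μ hr hε hco ((continuous_pw_zl i).mul hav) (C := C) fun Y => ?_
        rw [abs_mul]
        calc _ ≤ 1 * C := mul_le_mul (abs_pw_le _ i) (abs_pw_avg_le _ _ hC) (abs_nonneg _) zero_le_one
          _ = C := one_mul C
    rw [l1, l2] at h
    linarith
  · simp only [ContinuousLinearMap.mul_apply']
    refine integrable_weight μ hr hε hco (C := 1 * (C + C) / ε) ?_ fun Y => ?_
    · exact ((continuous_pw_zl i).mul (continuous_const.sub hav)).div_const _
    · rw [abs_div, abs_of_pos hε, abs_mul]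
      gcongr
      · exact abs_pw_le _ i
      · exact (abs_sub _ _).trans (add_le_add (hC i) (abs_pw_avg_le _ _ hC))
  · simp only [ContinuousLinearMap.mul_apply', ← mul_assoc]
    refine integrable_weight μ hr hε hco (C := 1 * C) ?_ fun Y => ?_
    · exact (continuous_pw_zl i).mul hav.neg
    · rw [abs_mul, abs_neg]
      gcongr
      · exact abs_pw_le _ i
      · exact abs_pw_avg_le _ _ hC
  · simp only [ContinuousLinearMap.mul_apply']
    exact integrable_pw μ hr hε hco i
  · intro Y _
    have := hasDerivAt_pw hε (zl ℓ Y) a 0 i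
    simp only [zero_smul, add_zero] at this
    unfold HasLineDerivAt
    simp only [hz]
    exact this
  · intro Y _
    have := hasDerivAt_psi hε (zl ℓ Y) a 0
    simp only [zero_smul, add_zero] at this
    unfold HasLineDerivAt
    simp only [hz]
    exact this

lemma psi_symm (S : E ≃L[ℝ] E) (σ : Equiv.Perm ι) (hS : ∀ i Y, ℓ (σ i) Y = ℓ i (S Y)) (Y : E) :
    psi ε (zl ℓ (S Y)) = psi ε (zl ℓ Y) := by
  unfold psi zl
  rw [← Equiv.sum_comp σ (fun i => Real.exp (ℓ i Y / ε))]
  simp only [hS]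

/-- A linear symmetry of the family preserves the Haar measure, since it preserves `∫ psi`. -/
lemma integral_symm (hr : 0 < r) (hco : ∀ Y, ∃ i, r * ‖Y‖ ≤ ℓ i Y) (S : E ≃L[ℝ] E)
    (σ : Equiv.Perm ι) (hS : ∀ i Y, ℓ (σ i) Y = ℓ i (S Y)) (g : E → ℝ) :
    ∫ Y, g (S Y) ∂μ = ∫ Y, g Y ∂μ := by
  have hmap : (Measure.map S μ).IsAddHaarMeasure := ContinuousLinearEquiv.isAddHaarMeasure_map S _
  have hμ := Measure.isAddLeftInvariant_eq_smul (Measure.map S μ) μ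
  set κ := Measure.addHaarScalarFactor (Measure.map S μ) μ with hκ
  have hme : MeasurableEmbedding S := S.toHomeomorph.measurableEmbedding
  have key : ∀ g : E → ℝ, ∫ Y, g (S Y) ∂μ = κ * ∫ Y, g Y ∂μ := fun g => by
    rw [← hme.integral_map, hμ, integral_smul_nnreal_measure]; rfl
  have h1 := key fun Y => psi 1 (zl ℓ Y)
  simp only [psi_symm S σ hS] at h1
  have h2 := integral_psi_pos μ hr one_pos hco
  have h3 : (κ : ℝ) = 1 := by
    have : (1 - (κ : ℝ)) * ∫ Y, psi 1 (zl ℓ Y) ∂μ = 0 := by linarith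
    have := (mul_eq_zero.1 this).resolve_right h2.ne'
    linarith
  rw [key, h3, one_mul]

lemma pw_symm (S : E ≃L[ℝ] E) (σ : Equiv.Perm ι) (hS : ∀ i Y, ℓ (σ i) Y = ℓ i (S Y)) (Y : E)
    (i : ι) : pw ε (zl ℓ (S Y)) i = pw ε (zl ℓ Y) (σ i) := by
  unfold pw zl
  rw [← Equiv.sum_comp σ (fun i => Real.exp (ℓ i Y / ε))]
  simp only [hS]

lemma overlap_symm (hr : 0 < r) (hco : ∀ Y, ∃ i, r * ‖Y‖ ≤ ℓ i Y) (S : E ≃L[ℝ] E)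
    (σ : Equiv.Perm ι) (hS : ∀ i Y, ℓ (σ i) Y = ℓ i (S Y)) (i j : ι) :
    overlap μ ℓ ε (σ i) (σ j) = overlap μ ℓ ε i j := by
  have := integral_symm μ hr hco S σ hS
    (fun Y => pw ε (zl ℓ Y) i * pw ε (zl ℓ Y) j * psi ε (zl ℓ Y))
  simp only [pw_symm S σ hS, psi_symm S σ hS] at this
  exact this

lemma cellMass_symm (hr : 0 < r) (hco : ∀ Y, ∃ i, r * ‖Y‖ ≤ ℓ i Y) (S : E ≃L[ℝ] E)
    (σ : Equiv.Perm ι) (hS : ∀ i Y, ℓ (σ i) Y = ℓ i (S Y)) (i : ι) :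
    cellMass μ ℓ ε (σ i) = cellMass μ ℓ ε i := by
  have := integral_symm μ hr hco S σ hS (fun Y => pw ε (zl ℓ Y) i * psi ε (zl ℓ Y))
  simp only [pw_symm S σ hS, psi_symm S σ hS] at this
  exact this

end

/-! ### Overlaps of cells without a common facet -/

noncomputable section

lemma pw_le_exp {ι : Type*} [Fintype ι] [Nonempty ι] {ε : ℝ} (z : ι → ℝ) (i k : ι) :
    pw ε z i ≤ Real.exp ((z i - z k) / ε) := by
  unfold pw
  rw [div_le_iff₀ (sumexp_pos z)]
  calc Real.exp (z i / ε) = Real.exp ((z i - z k) / ε) * Real.exp (z k / ε) := by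
        rw [← Real.exp_add]; ring_nf
    _ ≤ _ := by
      gcongr
      exact Finset.single_le_sum (f := fun j => Real.exp (z j / ε))
        (fun _ _ => (Real.exp_pos _).le) (Finset.mem_univ k)

/-- Stretching the first factor of a product space. -/
lemma integral_stretch {m : ℕ} {F : ℝ × (Fin m → ℝ) → ℝ} {ε : ℝ} (hε : 0 < ε) (hF : Integrable F)
    (hF' : Integrable fun Y : ℝ × (Fin m → ℝ) => F (ε * Y.1, Y.2)) :
    ∫ Y : ℝ × (Fin m → ℝ), F (ε * Y.1, Y.2) = (∫ Y, F Y) / ε := by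
  rw [Measure.volume_eq_prod] at *
  rw [integral_prod _ hF, integral_prod _ hF']
  have := Measure.integral_comp_mul_left (fun s => ∫ x : Fin m → ℝ, F (s, x)) ε
  rw [this, abs_of_pos (inv_pos.2 hε), smul_eq_mul]
  ring

section
variable {m : ℕ} {ι : Type*} [Fintype ι] [Nonempty ι] {ℓ : ι → (ℝ × (Fin m → ℝ)) →L[ℝ] ℝ} {r : ℝ}

/-- Straightened form of `tendsto_overlap_div`: the hyperplane on which the two functionals agree is
`{0} × ℝᵐ`, and at almost all of its points a third functional is larger. -/
lemma tendsto_overlap (hr : 0 < r) (hco : ∀ Y, ∃ i, r * ‖Y‖ ≤ ℓ i Y) {i j : ι}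
    (hij : ∀ Y, ℓ i Y - ℓ j Y = Y.1)
    (hae : ∀ᵐ x : Fin m → ℝ, ∃ k, ℓ i (0, x) < ℓ k (0, x)) :
    Tendsto (fun ε : ℝ => (∫ Y, pw ε (zl ℓ Y) i * pw ε (zl ℓ Y) j * psi ε (zl ℓ Y)) / ε)
      (𝓝[>] 0) (𝓝 0) := by
  have : (volume : Measure (ℝ × (Fin m → ℝ))).IsAddHaarMeasure := by
    rw [Measure.volume_eq_prod]; infer_instance
  set F : ℝ → ℝ × (Fin m → ℝ) → ℝ :=
    fun ε Y => pw ε (zl ℓ Y) i * pw ε (zl ℓ Y) j * psi ε (zl ℓ Y) with hF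
  have hFc : ∀ ε, Continuous (F ε) := fun ε =>
    ((continuous_pw_zl i).mul (continuous_pw_zl j)).mul (continuous_psi.comp (continuous_zl ℓ))
  have hF0 : ∀ ε Y, 0 ≤ F ε Y := fun ε Y =>
    mul_nonneg (mul_nonneg (pw_nonneg _ _) (pw_nonneg _ _)) (psi_pos _).le
  set bd : ℝ × (Fin m → ℝ) → ℝ :=
    fun Y => Real.exp (-(1 * ‖Y.1‖)) * Real.exp (-(r * ‖Y.2‖)) with hbd
  have hbdi : Integrable bd := by
    rw [Measure.volume_eq_prod]
    exact (integrable_exp_neg_norm volume one_pos).mul_prod (integrable_exp_neg_norm volume hr)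
  have hle : ∀ ε : ℝ, 0 < ε → ∀ Y : ℝ × (Fin m → ℝ), F ε (ε * Y.1, Y.2) ≤ bd Y := by
    intro ε hε Y
    have h1 := pw_mul_le (ε := ε) (zl ℓ (ε * Y.1, Y.2)) i j
    have h2 : zl ℓ (ε * Y.1, Y.2) i - zl ℓ (ε * Y.1, Y.2) j = ε * Y.1 := hij _
    rw [h2, abs_mul, abs_of_pos hε, neg_div, mul_div_cancel_left₀ _ hε.ne'] at h1
    refine mul_le_mul (by simpa using h1) ((psi_zl_le hε hco _).trans ?_) (psi_pos _).le
      (Real.exp_pos _).le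
    rw [Real.exp_le_exp]
    have : ‖Y.2‖ ≤ ‖(ε * Y.1, Y.2)‖ := le_max_right _ _
    nlinarith
  have hFi' : ∀ ε : ℝ, 0 < ε → Integrable fun Y : ℝ × (Fin m → ℝ) => F ε (ε * Y.1, Y.2) := by
    intro ε hε
    refine hbdi.mono' ((hFc ε).comp (by fun_prop)).aestronglyMeasurable (ae_of_all _ fun Y => ?_)
    rw [Real.norm_of_nonneg (hF0 _ _)]
    exact hle ε hε Y
  have hlim : Tendsto (fun ε : ℝ => ∫ Y : ℝ × (Fin m → ℝ), F ε (ε * Y.1, Y.2)) (𝓝[>] 0)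
      (𝓝 (∫ _ : ℝ × (Fin m → ℝ), (0:ℝ))) := by
    refine tendsto_integral_filter_of_dominated_convergence bd
      (Eventually.of_forall fun ε => ((hFc ε).comp (by fun_prop)).aestronglyMeasurable) ?_ hbdi ?_
    · filter_upwards [self_mem_nhdsWithin] with ε hε
      refine ae_of_all _ fun Y => ?_
      rw [Real.norm_of_nonneg (hF0 _ _)]
      exact hle ε hε Y
    · have hae' : ∀ᵐ Y : ℝ × (Fin m → ℝ), ∃ k, ℓ i (0, Y.2) < ℓ k (0, Y.2) := by
        rw [Measure.volume_eq_prod]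
        exact Measure.quasiMeasurePreserving_snd.ae hae
      filter_upwards [hae'] with Y hY
      obtain ⟨k, hk⟩ := hY
      have hval : ∀ (ε : ℝ) (l : ι), zl ℓ (ε * Y.1, Y.2) l = ε * (Y.1 * ℓ l (1, 0)) + ℓ l (0, Y.2) := by
        intro ε l
        have : (ε * Y.1, Y.2) = (ε * Y.1) • ((1:ℝ), (0 : Fin m → ℝ)) + (0, Y.2) := by ext <;> simp
        simp only [zl]
        rw [this, map_add, map_smul, smul_eq_mul, mul_assoc]
      have hub : Tendsto (fun ε : ℝ => Real.exp (Y.1 * ℓ i (1, 0) - Y.1 * ℓ k (1, 0) +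
          -((ℓ k (0, Y.2) - ℓ i (0, Y.2)) * ε⁻¹))) (𝓝[>] 0) (𝓝 0) := by
        refine Real.tendsto_exp_atBot.comp (tendsto_atBot_add_const_left _ _ ?_)
        exact tendsto_neg_atTop_atBot.comp
          (tendsto_inv_nhdsGT_zero.const_mul_atTop (sub_pos.2 hk))
      refine tendsto_of_tendsto_of_tendsto_of_le_of_le' tendsto_const_nhds hub
        (Eventually.of_forall fun ε => hF0 _ _) ?_
      filter_upwards [self_mem_nhdsWithin] with ε hε
      have hε0 : 0 < ε := hε
      have h1 := pw_le_exp (ε := ε) (zl ℓ (ε * Y.1, Y.2)) i k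
      rw [hval, hval] at h1
      have h2 : psi ε (zl ℓ (ε * Y.1, Y.2)) ≤ 1 :=
        (psi_zl_le hε hco _).trans (Real.exp_le_one_iff.2 (by
          have := norm_nonneg (ε * Y.1, Y.2); nlinarith))
      calc F ε (ε * Y.1, Y.2) ≤ pw ε (zl ℓ (ε * Y.1, Y.2)) i * 1 * 1 := by
            refine mul_le_mul (mul_le_mul_of_nonneg_left (pw_le_one _ _) (pw_nonneg _ _)) h2
              (psi_pos _).le (by simpa using pw_nonneg _ _)
        _ ≤ _ := by
          rw [mul_one, mul_one]
          refine h1.trans (le_of_eq ?_)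
          congr 1
          field_simp
          ring
  rw [integral_zero] at hlim
  refine hlim.congr' ?_
  filter_upwards [self_mem_nhdsWithin] with ε hε
  have hε0 : 0 < ε := hε
  exact integral_stretch hε0 (integrable_pw_mul volume hr hε0 hco i j) (hFi' ε hε0)
end

variable {E : Type*} [NormedAddCommGroup E] [NormedSpace ℝ E]
    [FiniteDimensional ℝ E] [MeasurableSpace E] [BorelSpace E] (μ : Measure E)
    [μ.IsAddHaarMeasure] {ι : Type*} [Fintype ι] [Nonempty ι] {ℓ : ι → E →L[ℝ] ℝ} {r : ℝ}

omit [FiniteDimensional ℝ E] [MeasurableSpace E] [BorelSpace E] [Fintype ι] [Nonempty ι] in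
/-- No three functionals of a family in convex position are collinear. -/
lemma not_collinear (hU : ∀ a, ∃ Y, ∀ k, k ≠ a → ℓ k Y < ℓ a Y) {i j k : ι} (hij : i ≠ j)
    (hki : k ≠ i) (hkj : k ≠ j) (t : ℝ) : ∃ Y, ℓ k Y - ℓ i Y ≠ t * (ℓ i Y - ℓ j Y) := by
  by_contra! h
  rcases le_total 0 t with ht | ht
  · obtain ⟨Y, hY⟩ := hU i
    have h1 := hY k hki
    have h2 := hY j hij.symm
    have := h Y
    nlinarith
  rcases le_total t (-1) with ht1 | ht1
  · obtain ⟨Y, hY⟩ := hU j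
    have h1 := hY k hkj
    have h2 := hY i hij
    have := h Y
    nlinarith
  · obtain ⟨Y, hY⟩ := hU k
    have h1 := hY i hki.symm
    have h2 := hY j hkj.symm
    have h3 := h Y
    have h4 : 0 ≤ (1 + t) * (ℓ k Y - ℓ i Y) := mul_nonneg (by linarith) (by linarith)
    rcases ht.lt_or_eq with ht | rfl
    · have h5 : 0 < -t * (ℓ k Y - ℓ j Y) := mul_pos (by linarith) (by linarith)
      nlinarith
    · linarith

/-- Softened cells which do not share a facet overlap in `o(ε)`. -/
lemma tendsto_overlap_div (hr : 0 < r) (hco : ∀ Y, ∃ i, r * ‖Y‖ ≤ ℓ i Y)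
    (hU : ∀ a, ∃ Y, ∀ k, k ≠ a → ℓ k Y < ℓ a Y) {i j : ι} (hij : i ≠ j)
    (hne : ∀ Y, ∃ k, k ≠ i ∧ k ≠ j ∧ min (ℓ i Y) (ℓ j Y) ≤ ℓ k Y) :
    Tendsto (fun ε : ℝ => overlap μ ℓ ε i j / ε) (𝓝[>] 0) (𝓝 0) := by
  have he : ℓ i - ℓ j ≠ 0 := by
    intro h
    obtain ⟨Y, hY⟩ := hU i
    have h1 := hY j hij.symm
    have h2 := congrArg (fun a : E →L[ℝ] ℝ => a Y) h
    simp at h2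
    linarith
  obtain ⟨m, L, κ, hκ, hLe, hLi, hLint⟩ := straighten μ he
  set ℓ' : ι → (ℝ × (Fin m → ℝ)) →L[ℝ] ℝ := fun i => (ℓ i).comp L.toContinuousLinearMap with hℓ'
  have hr' : 0 < r / (‖(L.symm : E →L[ℝ] (ℝ × (Fin m → ℝ)))‖ + 1) := by positivity
  have hco' : ∀ Y, ∃ i, r / (‖(L.symm : E →L[ℝ] (ℝ × (Fin m → ℝ)))‖ + 1) * ‖Y‖ ≤ ℓ' i Y := by
    intro Y
    obtain ⟨i, hi⟩ := hco (L Y)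
    refine ⟨i, le_trans ?_ hi⟩
    rw [div_mul_eq_mul_div, div_le_iff₀ (by positivity), mul_assoc]
    refine mul_le_mul_of_nonneg_left ?_ hr.le
    have := (L.symm : E →L[ℝ] (ℝ × (Fin m → ℝ))).le_opNorm (L Y)
    simp only [ContinuousLinearEquiv.coe_coe, ContinuousLinearEquiv.symm_apply_apply] at this
    nlinarith [norm_nonneg (L Y)]
  have hij' : ∀ Y, ℓ' i Y - ℓ' j Y = Y.1 := fun Y => hLe Y
  have hae : ∀ᵐ x : Fin m → ℝ, ∃ k, ℓ' i (0, x) < ℓ' k (0, x) := by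
    have hd : ∀ k, ∀ᵐ x : Fin m → ℝ, k ≠ i → k ≠ j → ℓ' k (0, x) ≠ ℓ' i (0, x) := by
      intro k
      by_cases hki : k = i
      · simp [hki]
      by_cases hkj : k = j
      · simp [hkj]
      have hneq : (ℓ' k).comp (ContinuousLinearMap.inr ℝ ℝ (Fin m → ℝ))
          ≠ (ℓ' i).comp (ContinuousLinearMap.inr ℝ ℝ (Fin m → ℝ)) := by
        intro h
        obtain ⟨Y, hY⟩ := not_collinear hU hij hki hkj (ℓ' k (1, 0) - ℓ' i (1, 0))
        apply hY
        have hx : ∀ x, ℓ' k (0, x) = ℓ' i (0, x) := fun x => by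
          simpa using congrArg (fun a : (Fin m → ℝ) →L[ℝ] ℝ => a x) h
        set W := L.symm Y with hW
        have hLW : L W = Y := by simp [hW]
        have hdec : ∀ l, ℓ l Y = W.1 * ℓ' l (1, 0) + ℓ' l (0, W.2) := fun l => by
          have : W = W.1 • ((1:ℝ), (0 : Fin m → ℝ)) + (0, W.2) := by ext <;> simp
          have h2 : ℓ l Y = ℓ' l W := by simp [hℓ', hLW]
          rw [h2, this, map_add, map_smul, smul_eq_mul]
          simp
        have h3 : ℓ i Y - ℓ j Y = W.1 := by have := hLe W; rw [hLW] at this; simpa using this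
        rw [h3, hdec k, hdec i, hx]
        ring
      filter_upwards [ae_ne_of_ne volume hneq] with x hx _ _
      simpa using hx
    filter_upwards [ae_all_iff.2 hd] with x hx
    obtain ⟨k, hki, hkj, hk⟩ := hne (L (0, x))
    have h0 : ℓ' i (0, x) = ℓ' j (0, x) := by have := hij' (0, x); simp only at this; linarith
    refine ⟨k, lt_of_le_of_ne ?_ (hx k hki hkj).symm⟩
    have h1 : min (ℓ' i (0, x)) (ℓ' j (0, x)) ≤ ℓ' k (0, x) := hk
    rwa [← h0, min_self] at h1
  have := (tendsto_overlap hr' hco' hij' hae).const_mul κ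
  rw [mul_zero] at this
  refine this.congr fun ε => ?_
  unfold overlap
  rw [hLi, mul_div_assoc]
  rfl

end

/-! ### The graph Laplacian and its eigenspace -/

noncomputable section

open Classical in
/-- The combinatorial Laplacian of the graph `Adj`. -/
def lap {ι : Type*} [Fintype ι] (Adj : ι → ι → Prop) (g : ι → ℝ) (i : ι) : ℝ :=
  ∑ j, if Adj i j then g i - g j else 0

lemma sum_lap {ι : Type*} [Fintype ι] {Adj : ι → ι → Prop} (hs : ∀ i j, Adj i j → Adj j i)
    (g : ι → ℝ) : ∑ i, lap Adj g i = 0 := by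
  classical
  have h : ∑ i, lap Adj g i = -∑ i, lap Adj g i := by
    conv_lhs => simp only [lap]
    rw [Finset.sum_comm, ← Finset.sum_neg_distrib]
    refine Finset.sum_congr rfl fun i _ => ?_
    rw [lap, ← Finset.sum_neg_distrib]
    refine Finset.sum_congr rfl fun j _ => ?_
    by_cases hij : Adj i j
    · rw [if_pos hij, if_pos (hs _ _ hij)]; ring
    · rw [if_neg hij, if_neg fun h => hij (hs _ _ h), neg_zero]
  linarith

variable {E : Type*} [NormedAddCommGroup E] [NormedSpace ℝ E]
    [FiniteDimensional ℝ E] [MeasurableSpace E] [BorelSpace E] (μ : Measure E)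
    [μ.IsAddHaarMeasure] {ι : Type*} [Fintype ι] [Nonempty ι] {ℓ : ι → E →L[ℝ] ℝ} {r : ℝ}

/-- The vector of a stable `f` is the normalised first moment of the selection of `f`. -/
lemma exists_vector (hr : 0 < r) (hco : ∀ Y, ∃ i, r * ‖Y‖ ≤ ℓ i Y)
    (hinj : Function.Injective ℓ) (f : ι → ℝ)
    (h : ∀ a, f a * ∫ Y, Real.exp (-mx (zl ℓ Y)) ∂μ
      = ∫ Y, ℓ a Y * (sel f (zl ℓ Y) * Real.exp (-mx (zl ℓ Y))) ∂μ) :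
    ∃ y : E, ∀ a, f a = ℓ a y := by
  set Z := ∫ Y, Real.exp (-mx (zl ℓ Y)) ∂μ with hZ
  have hZ0 : 0 < Z := integral_pos_of_integrable_nonneg_nonzero (x := 0) continuous_exp_mx
    (integrable_exp_mx μ hr hco) (fun _ => (Real.exp_pos _).le) (Real.exp_pos _).ne'
  obtain ⟨C, hC0, hC⟩ := exists_abs_bound f
  have hint : Integrable (fun Y => (sel f (zl ℓ Y) * Real.exp (-mx (zl ℓ Y))) • Y) μ := by
    refine ((integrable_exp_neg_norm μ (half_pos hr)).const_mul (C * (2 / r))).mono'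
      (((aesm_sel μ hinj f).mul continuous_exp_mx.aestronglyMeasurable).smul
        continuous_id.aestronglyMeasurable) (ae_of_all _ fun Y => ?_)
    have h3 : ‖Y‖ ≤ 2 / r * Real.exp (r / 2 * ‖Y‖) := by
      have := Real.add_one_le_exp (r / 2 * ‖Y‖)
      rw [div_mul_eq_mul_div, le_div_iff₀ hr]
      linarith
    rw [norm_smul, norm_mul, Real.norm_eq_abs, Real.norm_of_nonneg (Real.exp_pos _).le]
    calc _ ≤ C * Real.exp (-(r * ‖Y‖)) * (2 / r * Real.exp (r / 2 * ‖Y‖)) := by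
          gcongr
          · exact abs_sel_le _ _ hC
          · exact le_mx_zl hco Y
      _ = C * (2 / r) * (Real.exp (-(r * ‖Y‖)) * Real.exp (r / 2 * ‖Y‖)) := by ring
      _ = _ := by rw [← Real.exp_add]; ring_nf
  refine ⟨Z⁻¹ • ∫ Y, (sel f (zl ℓ Y) * Real.exp (-mx (zl ℓ Y))) • Y ∂μ, fun a => ?_⟩
  rw [map_smul, ← ContinuousLinearMap.integral_comp_comm _ hint, smul_eq_mul,
    eq_inv_mul_iff_mul_eq₀ hZ0.ne', mul_comm, h a]
  refine integral_congr_ae (ae_of_all _ fun Y => ?_)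
  simp only [map_smul, smul_eq_mul]
  ring

/-- The stability functional in terms of the overlap matrix. -/
lemma quad_eq {ε : ℝ} (hr : 0 < r) (hε : 0 < ε) (hco : ∀ Y, ∃ i, r * ‖Y‖ ≤ ℓ i Y) (f : ι → ℝ) :
    ∫ Y, ((∑ i, pw ε (zl ℓ Y) i * f i) ^ 2 -
        (∑ i, pw ε (zl ℓ Y) i * f i ^ 2 - (∑ i, pw ε (zl ℓ Y) i * f i) ^ 2) / ε)
          * psi ε (zl ℓ Y) ∂μ
      = ∑ i, f i * (∑ j, overlap μ ℓ ε i j * f j)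
        - ∑ i, f i * ((cellMass μ ℓ ε i * f i - ∑ j, overlap μ ℓ ε i j * f j) / ε) := by
  obtain ⟨C, hC0, hC⟩ := exists_abs_bound f
  have hav : Continuous fun Y => ∑ j, pw ε (zl ℓ Y) j * f j :=
    continuous_finsetSum _ fun i _ => (continuous_pw_zl i).mul continuous_const
  have hi1 : ∀ i, Integrable (fun Y => pw ε (zl ℓ Y) i * (∑ j, pw ε (zl ℓ Y) j * f j)
      * psi ε (zl ℓ Y)) μ := fun i =>
    integrable_weight μ hr hε hco ((continuous_pw_zl i).mul hav) (C := 1 * C) fun Y => by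
      rw [abs_mul]
      exact mul_le_mul (abs_pw_le _ i) (abs_pw_avg_le _ _ hC) (abs_nonneg _) zero_le_one
  have hi2 : Integrable (fun Y => (∑ i, pw ε (zl ℓ Y) i * f i) ^ 2 * psi ε (zl ℓ Y)) μ :=
    integrable_weight μ hr hε hco (hav.pow 2) (C := C ^ 2) fun Y => by
      rw [abs_pow]
      exact pow_le_pow_left₀ (abs_nonneg _) (abs_pw_avg_le _ _ hC) 2
  have hi3 : Integrable (fun Y => (∑ i, pw ε (zl ℓ Y) i * f i ^ 2) * psi ε (zl ℓ Y)) μ :=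
    integrable_weight μ hr hε hco (C := C ^ 2)
      (continuous_finsetSum _ fun i _ => (continuous_pw_zl i).mul continuous_const) fun Y =>
      abs_pw_avg_le _ _ fun i => by
        rw [abs_pow]
        exact pow_le_pow_left₀ (abs_nonneg _) (hC i) 2
  have e1 : ∑ i, f i * (∑ j, overlap μ ℓ ε i j * f j)
      = ∫ Y, (∑ i, pw ε (zl ℓ Y) i * f i) ^ 2 * psi ε (zl ℓ Y) ∂μ := by
    simp only [sum_overlap_mul μ hr hε hco, ← integral_const_mul]
    rw [← integral_finsetSum _ fun i _ => (hi1 i).const_mul (f i)]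
    refine integral_congr_ae (ae_of_all _ fun Y => ?_)
    simp only
    rw [sq, Finset.sum_mul, Finset.sum_mul]
    exact Finset.sum_congr rfl fun i _ => by ring
  have e2 : ∑ i, f i * ((cellMass μ ℓ ε i * f i - ∑ j, overlap μ ℓ ε i j * f j) / ε)
      = (∑ i, cellMass μ ℓ ε i * f i ^ 2 - ∑ i, f i * (∑ j, overlap μ ℓ ε i j * f j)) / ε := by
    rw [← Finset.sum_sub_distrib, Finset.sum_div]
    exact Finset.sum_congr rfl fun i _ => by ring
  rw [e2, e1, sum_cellMass_mul μ hr hε hco, ← integral_sub hi3 hi2, ← integral_div, ← integral_sub hi2]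
  · refine integral_congr_ae (ae_of_all _ fun Y => ?_)
    simp only
    ring
  · exact (hi3.sub hi2).div_const ε

/-- The coordinate functions `i ↦ ℓ i u` exhaust one eigenspace of the graph Laplacian. -/
theorem eigenspace_exhausted (hr : 0 < r) (hco : ∀ Y, ∃ i, r * ‖Y‖ ≤ ℓ i Y)
    (hinj : Function.Injective ℓ) (hU : ∀ a, ∃ Y, ∀ k, k ≠ a → ℓ k Y < ℓ a Y) (hne : ∀ a, ℓ a ≠ 0)
    {Adj : ι → ι → Prop} (hs : ∀ i j, Adj i j → Adj j i)
    (hD : ∀ ε i j, cellMass μ ℓ ε i = cellMass μ ℓ ε j)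
    (hM : ∀ ε i j k l, Adj i j → Adj k l → overlap μ ℓ ε i j = overlap μ ℓ ε k l)
    (hnon : ∀ i j, i ≠ j → ¬ Adj i j → Tendsto (fun ε : ℝ => overlap μ ℓ ε i j / ε) (𝓝[>] 0) (𝓝 0)) :
    ∃ ρ : ℝ, (∀ u i, lap Adj (zl ℓ u) i = ρ * ℓ i u) ∧
      ∀ f : ι → ℝ, (∀ i, lap Adj f i = ρ * f i) → ∃ y, ∀ a, f a = ℓ a y := by
  classical
  obtain ⟨b, hb⟩ : ∃ b : ℝ → ℝ, ∀ ε i j, Adj i j → overlap μ ℓ ε i j = b ε := by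
    by_cases h : ∃ p : ι × ι, Adj p.1 p.2
    · obtain ⟨p, hp⟩ := h
      exact ⟨fun ε => overlap μ ℓ ε p.1 p.2, fun ε i j hij => hM ε i j _ _ hij hp⟩
    · exact ⟨0, fun ε i j hij => (h ⟨(i, j), hij⟩).elim⟩
  obtain ⟨D, hDD⟩ : ∃ D : ℝ → ℝ, ∀ ε i, cellMass μ ℓ ε i = D ε :=
    ⟨fun ε => cellMass μ ℓ ε (Classical.arbitrary ι), fun ε i => hD ε i _⟩
  set Z := ∫ Y, Real.exp (-mx (zl ℓ Y)) ∂μ with hZ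
  have hZ0 : 0 < Z := integral_pos_of_integrable_nonneg_nonzero (x := 0) continuous_exp_mx
    (integrable_exp_mx μ hr hco) (fun _ => (Real.exp_pos _).le) (Real.exp_pos _).ne'
  set D0 := Z / Fintype.card ι with hD0
  have hD0pos : 0 < D0 := div_pos hZ0 (by exact_mod_cast Fintype.card_pos)
  have hDlim : Tendsto D (𝓝[>] 0) (𝓝 D0) := by
    refine ((tendsto_integral_psi μ hr hco).div_const (Fintype.card ι : ℝ)).congr' ?_
    filter_upwards [self_mem_nhdsWithin] with ε hε
    have hc : (Fintype.card ι : ℝ) ≠ 0 := by simp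
    rw [div_eq_iff hc]
    have h1 := sum_cellMass_mul μ hr hε hco (fun _ => 1)
    simp only [mul_one, pw_sum, one_mul, hDD, Finset.sum_const, Finset.card_univ,
      nsmul_eq_mul] at h1
    linarith
  -- the contribution of the nonadjacent pairs
  set R : ℝ → (ι → ℝ) → ι → ℝ := fun ε g i =>
    ∑ j, if Adj i j then 0 else overlap μ ℓ ε i j / ε * (g i - g j) with hR
  have hRlim : ∀ g i, Tendsto (fun ε => R ε g i) (𝓝[>] 0) (𝓝 0) := by
    intro g i
    have : Tendsto (fun ε => R ε g i) (𝓝[>] 0) (𝓝 (∑ j : ι, (0:ℝ))) := by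
      refine tendsto_finsetSum _ fun j _ => ?_
      by_cases hij : Adj i j
      · simp only [if_pos hij]; exact tendsto_const_nhds
      simp only [if_neg hij]
      by_cases hne' : i = j
      · subst hne'; simp
      · simpa using (hnon i j hne' hij).mul_const (g i - g j)
    simpa using this
  have hT : ∀ ε, 0 < ε → ∀ g i, (D ε * g i - ∑ j, overlap μ ℓ ε i j * g j) / ε
      = b ε / ε * lap Adj g i + R ε g i := by
    intro ε hε g i
    have h1 : D ε * g i - ∑ j, overlap μ ℓ ε i j * g j = ∑ j, overlap μ ℓ ε i j * (g i - g j) := by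
      rw [← hDD ε i, cellMass_eq_sum μ hr hε hco, Finset.sum_mul, ← Finset.sum_sub_distrib]
      exact Finset.sum_congr rfl fun j _ => by ring
    rw [h1, Finset.sum_div, lap, Finset.mul_sum, hR, ← Finset.sum_add_distrib]
    refine Finset.sum_congr rfl fun j _ => ?_
    by_cases hij : Adj i j
    · rw [if_pos hij, if_pos hij, hb ε i j hij]; ring
    · rw [if_neg hij, if_neg hij]; ring
  have hε0 : Tendsto (fun ε : ℝ => ε) (𝓝[>] 0) (𝓝 0) := tendsto_nhdsWithin_of_tendsto_nhds tendsto_id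
  have hLlim : ∀ u i, Tendsto (fun ε => b ε / ε * lap Adj (zl ℓ u) i) (𝓝[>] 0)
      (𝓝 (D0 * ℓ i u)) := by
    intro u i
    have h1 : Tendsto (fun ε => D ε * ℓ i u / (1 + ε) - R ε (zl ℓ u) i) (𝓝[>] 0)
        (𝓝 (D0 * ℓ i u / (1 + 0) - 0)) :=
      ((hDlim.mul_const _).div (hε0.const_add 1) (by norm_num)).sub (hRlim _ _)
    rw [add_zero, div_one, sub_zero] at h1
    refine h1.congr' ?_
    filter_upwards [self_mem_nhdsWithin] with ε hε
    have hε' : 0 < ε := hε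
    have h2 := translation_identity μ hr hε hco u i
    have h3 := hT ε hε (zl ℓ u) i
    rw [hDD] at h2
    simp only [zl] at h3 ⊢
    rw [h2] at h3
    rw [div_eq_iff hε'.ne'] at h2
    have h4 : D ε * ℓ i u / (1 + ε) = ∑ j, overlap μ ℓ ε i j * ℓ j u := by
      rw [div_eq_iff (by positivity)]; linarith
    rw [h4, h3]
    ring
  obtain ⟨i0⟩ := ‹Nonempty ι›
  obtain ⟨u0, hu0⟩ : ∃ u, ℓ i0 u ≠ 0 := by
    by_contra! h
    exact hne i0 (by ext u; simpa using h u)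
  have hlim0 := hLlim u0 i0
  have hL0 : lap Adj (zl ℓ u0) i0 ≠ 0 := by
    intro h
    rw [h] at hlim0
    simp only [mul_zero] at hlim0
    exact (mul_ne_zero hD0pos.ne' hu0) (tendsto_nhds_unique hlim0 tendsto_const_nhds)
  set β0 := D0 * ℓ i0 u0 / lap Adj (zl ℓ u0) i0 with hβ0
  have hβ0ne : β0 ≠ 0 := div_ne_zero (mul_ne_zero hD0pos.ne' hu0) hL0
  have hβ : Tendsto (fun ε => b ε / ε) (𝓝[>] 0) (𝓝 β0) := by
    refine (hlim0.div_const (lap Adj (zl ℓ u0) i0)).congr fun ε => ?_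
    rw [mul_div_assoc, div_self hL0, mul_one]
  have hρ : D0 / β0 ≠ 0 := div_ne_zero hD0pos.ne' hβ0ne
  refine ⟨D0 / β0, fun u i => ?_, fun f hf => ?_⟩
  · have := tendsto_nhds_unique (hβ.mul_const _) (hLlim u i)
    rw [div_mul_eq_mul_div, eq_div_iff hβ0ne, ← this]
    ring
  have hsum : ∑ i, f i = 0 := by
    have h1 := sum_lap hs f
    simp only [hf, ← Finset.mul_sum] at h1
    exact (mul_eq_zero.1 h1).resolve_left hρ
  have hTlim : ∀ i, Tendsto (fun ε => b ε / ε * lap Adj f i + R ε f i) (𝓝[>] 0)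
      (𝓝 (D0 * f i)) := by
    intro i
    have h1 := (hβ.mul_const (lap Adj f i)).add (hRlim f i)
    convert h1 using 2
    rw [hf, add_zero]
    field_simp
  refine exists_vector μ hr hco hinj f
    (linear_of_stable μ hr hco hinj hU hne f (fun ε hε => ?_) ?_)
  · rw [← sum_cellMass_mul μ hr hε hco]
    simp only [hDD]
    rw [← Finset.mul_sum, hsum, mul_zero]
  · have hfin : Tendsto (fun ε => ∑ i, f i * (D ε * f i - ε * (b ε / ε * lap Adj f i + R ε f i))
        - ∑ i, f i * (b ε / ε * lap Adj f i + R ε f i)) (𝓝[>] 0)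
        (𝓝 (∑ i, f i * (D0 * f i - 0 * (D0 * f i)) - ∑ i, f i * (D0 * f i))) :=
      (tendsto_finsetSum _ fun i _ =>
        ((hDlim.mul_const _).sub (hε0.mul (hTlim i))).const_mul _).sub
        (tendsto_finsetSum _ fun i _ => (hTlim i).const_mul _)
    simp only [zero_mul, sub_zero, sub_self] at hfin
    refine hfin.congr' ?_
    filter_upwards [self_mem_nhdsWithin] with ε hε
    have hε' : 0 < ε := hε
    rw [quad_eq μ hr hε' hco f]
    simp only [hDD]
    congr 1
    · refine Finset.sum_congr rfl fun i _ => ?_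
      rw [← hT ε hε' f i]
      field_simp
      ring
    · refine Finset.sum_congr rfl fun i _ => ?_
      rw [← hT ε hε' f i]

end

/-! ### Vertices, edges and symmetries of the polytope -/

noncomputable section
section
variable {F : Type*} [NormedAddCommGroup F] [InnerProductSpace ℝ F] [FiniteDimensional ℝ F]
  {ι : Type*} [Fintype ι] [Nonempty ι] {v : ι → F}

lemma innerSL_comm (x y : F) : innerSL ℝ x y = innerSL ℝ y x := by
  simp [real_inner_comm]

/-- A ball around the origin inside the polytope bounds its support function from below. -/
lemma support_coercive (h0 : (0 : F) ∈ interior (convexHull ℝ (range v))) :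
    ∃ r : ℝ, 0 < r ∧ ∀ Y, ∃ i, r * ‖Y‖ ≤ innerSL ℝ (v i) Y := by
  obtain ⟨δ, hδ, hball⟩ := Metric.mem_nhds_iff.1 (mem_interior_iff_mem_nhds.1 h0)
  refine ⟨δ / 2, half_pos hδ, fun Y => ?_⟩
  by_cases hY : Y = 0
  · exact ⟨Classical.arbitrary ι, by simp [hY]⟩
  have hYn : 0 < ‖Y‖ := norm_pos_iff.2 hY
  by_contra! h
  have hsub : convexHull ℝ (range v) ⊆ {x | innerSL ℝ Y x < δ / 2 * ‖Y‖} := by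
    refine convexHull_min ?_ (convex_halfSpace_lt (innerSL ℝ Y).isLinear _)
    rintro _ ⟨i, rfl⟩
    simpa [real_inner_comm] using h i
  have hx : (δ / 2 / ‖Y‖) • Y ∈ Metric.ball (0 : F) δ := by
    rw [mem_ball_zero_iff, norm_smul, Real.norm_of_nonneg (by positivity)]
    field_simp
    linarith
  have h2 : innerSL ℝ Y ((δ / 2 / ‖Y‖) • Y) < δ / 2 * ‖Y‖ := hsub (hball hx)
  rw [map_smul, innerSL_apply_apply, real_inner_self_eq_norm_sq, smul_eq_mul] at h2
  have h3 : δ / 2 / ‖Y‖ * ‖Y‖ ^ 2 = δ / 2 * ‖Y‖ := by field_simp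
  linarith

/-- Every vertex is exposed. -/
lemma exists_exposing (hv : Function.Injective v)
    (hvert : range v = extremePoints ℝ (convexHull ℝ (range v))) (a : ι) :
    ∃ Y, ∀ k, k ≠ a → innerSL ℝ (v k) Y < innerSL ℝ (v a) Y := by
  have ha : v a ∈ extremePoints ℝ (convexHull ℝ (range v)) := hvert ▸ mem_range_self a
  have h1 := ((convex_convexHull ℝ _).mem_extremePoints_iff_mem_sdiff_convexHull_sdiff.1 ha).2
  have hfin : (range v \ {v a}).Finite := (finite_range v).sdiff
  have h2 : v a ∉ convexHull ℝ (range v \ {v a}) := fun h =>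
    h1 (convexHull_mono (sdiff_subset_sdiff_left (subset_convexHull ℝ _)) h)
  obtain ⟨f, u, hf, hu⟩ := geometric_hahn_banach_closed_point (convex_convexHull ℝ _)
    (hfin.isClosed_convexHull ℝ) h2
  have hY : ∀ x, innerSL ℝ x ((InnerProductSpace.toDual ℝ F).symm f) = f x := fun x => by
    rw [innerSL_comm]
    simp
  refine ⟨(InnerProductSpace.toDual ℝ F).symm f, fun k hk => ?_⟩
  rw [hY, hY]
  exact (hf _ (subset_convexHull ℝ _ ⟨mem_range_self k, fun h => hk (hv h)⟩)).trans hu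

/-- A linear functional maximised over the vertices exactly at `v i` and `v j` exposes the
segment between them. -/
lemma segment_extreme {i j : ι} {Y : F} (hij : innerSL ℝ (v i) Y = innerSL ℝ (v j) Y)
    (hk : ∀ k, k ≠ i → k ≠ j → innerSL ℝ (v k) Y < innerSL ℝ (v i) Y) :
    IsExtreme ℝ (convexHull ℝ (range v)) (segment ℝ (v i) (v j)) := by
  classical
  have hle : ∀ k, innerSL ℝ Y (v k) ≤ innerSL ℝ Y (v i) := fun k => by
    rw [innerSL_comm Y, innerSL_comm Y]
    by_cases h1 : k = i
    · rw [h1]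
    by_cases h2 : k = j
    · rw [h2, hij]
    · exact (hk k h1 h2).le
  have hleP : ∀ x ∈ convexHull ℝ (range v), innerSL ℝ Y x ≤ innerSL ℝ Y (v i) := by
    refine convexHull_min ?_ (convex_halfSpace_le (innerSL ℝ Y).isLinear _)
    rintro _ ⟨k, rfl⟩
    exact hle k
  have hsP : segment ℝ (v i) (v j) ⊆ convexHull ℝ (range v) :=
    (convex_convexHull ℝ _).segment_subset (subset_convexHull ℝ _ (mem_range_self i))
      (subset_convexHull ℝ _ (mem_range_self j))
  refine IsExposed.isExtreme (𝕜 := ℝ) fun _ => ⟨innerSL ℝ Y, Subset.antisymm (fun x hx => ?_) ?_⟩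
  · refine ⟨hsP hx, fun y hy => (hleP y hy).trans (le_of_eq ?_)⟩
    obtain ⟨s, t, hs, ht, hst, rfl⟩ := hx
    rw [map_add, map_smul, map_smul, innerSL_comm Y (v j), ← hij, innerSL_comm (v i), ← add_smul,
      hst, one_smul]
  · rintro x ⟨hx, hmax⟩
    have hxe : innerSL ℝ Y (v i) ≤ innerSL ℝ Y x := hmax _ (subset_convexHull ℝ _ (mem_range_self i))
    obtain ⟨κ, _, w, z, hw, hw1, hz, rfl⟩ := mem_convexHull_iff_exists_fintype.1 hx
    have hzle : ∀ k, 0 ≤ w k * (innerSL ℝ Y (v i) - innerSL ℝ Y (z k)) := fun k => by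
      obtain ⟨l, hl⟩ := hz k
      rw [← hl]
      exact mul_nonneg (hw k) (sub_nonneg.2 (hle l))
    have hsum : ∑ k, w k * (innerSL ℝ Y (v i) - innerSL ℝ Y (z k)) = 0 := by
      refine le_antisymm ?_ (Finset.sum_nonneg fun k _ => hzle k)
      simp only [mul_sub, Finset.sum_sub_distrib, ← Finset.sum_mul, hw1]
      simp only [map_sum, map_smul, smul_eq_mul] at hxe
      linarith
    have hzero := (Finset.sum_eq_zero_iff_of_nonneg fun k _ => hzle k).1 hsum
    rw [← convexHull_pair]
    refine mem_convexHull_of_exists_fintype w (fun k => if w k = 0 then v i else z k) hw hw1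
      (fun k => ?_) (Finset.sum_congr rfl fun k _ => ?_)
    · by_cases h : w k = 0
      · simp [h]
      · simp only [if_neg h]
        have h1 := (mul_eq_zero.1 (hzero k (Finset.mem_univ k))).resolve_left h
        obtain ⟨l, hl⟩ := hz k
        rw [← hl] at h1 ⊢
        by_cases hli : l = i
        · simp [hli]
        by_cases hlj : l = j
        · simp [hlj]
        have h2 := hk l hli hlj
        rw [innerSL_comm, innerSL_comm (v i)] at h2
        linarith
    · by_cases h : w k = 0
      · simp [h]
      · simp [h]

/-- It suffices that `v i` and `v j` are strictly above all other vertices, even at different heights: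
the functional can be tilted until the two are level. -/
lemma extreme_of_le (hv : Function.Injective v)
    (hvert : range v = extremePoints ℝ (convexHull ℝ (range v))) {i j : ι} (hij : i ≠ j) {Y : F}
    (hle : innerSL ℝ (v i) Y ≤ innerSL ℝ (v j) Y)
    (hk : ∀ k, k ≠ i → k ≠ j → innerSL ℝ (v k) Y < innerSL ℝ (v i) Y) :
    IsExtreme ℝ (convexHull ℝ (range v)) (segment ℝ (v i) (v j)) := by
  obtain ⟨W, hW⟩ := exists_exposing hv hvert i
  have hden : 0 < innerSL ℝ (v i) W - innerSL ℝ (v j) W := sub_pos.2 (hW j hij.symm)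
  -- moving towards the direction exposing `v i` until `v i` and `v j` are level
  set t := (innerSL ℝ (v j) Y - innerSL ℝ (v i) Y) / (innerSL ℝ (v i) W - innerSL ℝ (v j) W) with ht
  have ht0 : 0 ≤ t := div_nonneg (sub_nonneg.2 hle) hden.le
  have hte : t * (innerSL ℝ (v i) W - innerSL ℝ (v j) W) = innerSL ℝ (v j) Y - innerSL ℝ (v i) Y :=
    div_mul_cancel₀ _ hden.ne'
  refine segment_extreme (Y := Y + t • W) ?_ fun k hki hkj => ?_
  · rw [map_add, map_add, map_smul, map_smul, smul_eq_mul, smul_eq_mul]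
    linarith
  · rw [map_add, map_add, map_smul, map_smul, smul_eq_mul, smul_eq_mul]
    have := mul_le_mul_of_nonneg_left (hW k hki).le ht0
    linarith [hk k hki hkj]

/-- The normal cone condition for a pair of vertices not joined by an edge. -/
lemma exists_above_of_not_extreme (hv : Function.Injective v)
    (hvert : range v = extremePoints ℝ (convexHull ℝ (range v))) {i j : ι} (hij : i ≠ j)
    (hne : ¬ IsExtreme ℝ (convexHull ℝ (range v)) (segment ℝ (v i) (v j))) (Y : F) :
    ∃ k, k ≠ i ∧ k ≠ j ∧ min (innerSL ℝ (v i) Y) (innerSL ℝ (v j) Y) ≤ innerSL ℝ (v k) Y := by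
  by_contra! h
  apply hne
  rcases le_total (innerSL ℝ (v i) Y) (innerSL ℝ (v j) Y) with hle | hle
  · exact extreme_of_le hv hvert hij hle fun k hki hkj => (lt_min_iff.1 (h k hki hkj)).1
  · rw [segment_symm]
    exact extreme_of_le hv hvert hij.symm hle fun k hkj hki => (lt_min_iff.1 (h k hki hkj)).2

/-- A linear symmetry permutes the vertices, and its adjoint permutes the functionals. -/
lemma symmetry_perm (hv : Function.Injective v)
    (hvert : range v = extremePoints ℝ (convexHull ℝ (range v))) (T : F ≃ₗ[ℝ] F)
    (hT : ⇑T '' convexHull ℝ (range v) = convexHull ℝ (range v)) :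
    ∃ (σ : Equiv.Perm ι) (S : F ≃L[ℝ] F), (∀ i, T (v i) = v (σ i)) ∧
      ∀ i Y, innerSL ℝ (v (σ i)) Y = innerSL ℝ (v i) (S Y) := by
  have h1 : ∀ i, ∃ j, v j = T (v i) := by
    intro i
    have h2 := image_extremePoints (𝕜 := ℝ) T (convexHull ℝ (range v))
    rw [hT, ← hvert] at h2
    have h3 : T (v i) ∈ range v := h2 ▸ mem_image_of_mem _ (mem_range_self i)
    exact h3
  choose σ hσ using h1
  have hσi : Function.Injective σ := fun i j hij => by
    apply hv
    apply T.injective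
    rw [← hσ, ← hσ, hij]
  set A : F →ₗ[ℝ] F := LinearMap.adjoint (T : F →ₗ[ℝ] F) with hA
  have hAs : Function.Injective A := by
    rw [← LinearMap.ker_eq_bot, LinearMap.ker_eq_bot']
    intro x hx
    have h2 : ∀ y, inner ℝ x y = (0:ℝ) := fun y => by
      have h3 := LinearMap.adjoint_inner_left (T : F →ₗ[ℝ] F) (T.symm y) x
      rw [← hA, hx, inner_zero_left] at h3
      simpa using h3.symm
    exact inner_self_eq_zero.1 (h2 x)
  refine ⟨Equiv.ofBijective σ (Finite.injective_iff_bijective.1 hσi),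
    (LinearEquiv.ofInjectiveEndo A hAs).toContinuousLinearEquiv, fun i => (hσ i).symm,
    fun i Y => ?_⟩
  have h3 := LinearMap.adjoint_inner_right (T : F →ₗ[ℝ] F) (v i) Y
  simp only [Equiv.ofBijective_apply, innerSL_apply_apply, hσ, LinearEquiv.coe_toContinuousLinearEquiv',
    LinearEquiv.coe_ofInjectiveEndo]
  exact h3.symm
end

/-- Relabelling by a graph automorphism commutes with the Laplacian. -/
lemma lap_perm {ι : Type*} [Fintype ι] {Adj : ι → ι → Prop} {σ : Equiv.Perm ι}
    (hσ : ∀ i j, Adj i j ↔ Adj (σ i) (σ j)) (g : ι → ℝ) (i : ι) :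
    lap Adj (fun k => g (σ k)) i = lap Adj g (σ i) := by
  classical
  unfold lap
  rw [← Equiv.sum_comp σ fun j => if Adj (σ i) j then g (σ i) - g j else 0]
  refine Finset.sum_congr rfl fun j _ => ?_
  simp only [← hσ i j]

end

/-! ### Linearity of the automorphisms -/

/-- If the linear symmetry group of `P` acts transitively on the
vertices and on the edges of `P`, then `P` is exactly as symmetric as its edge-graph:
every combinatorial automorphism of the edge-graph is induced by a linear symmetry
of `P` (so the natural homomorphism `Aut_GL(P) → Aut(G_P)` is an isomorphism). -/
theorem stmt_17 {d n : ℕ}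
    (v : Fin n → EuclideanSpace ℝ (Fin d))
    (P : Set (EuclideanSpace ℝ (Fin d)))
    (hP : P = convexHull ℝ (Set.range v))
    (hfull : affineSpan ℝ P = ⊤)
    (hinj : Function.Injective v)
    (hvert : Set.range v = Set.extremePoints ℝ P)
    (h0 : (0 : EuclideanSpace ℝ (Fin d)) ∈ interior P)
    (Adj : Fin n → Fin n → Prop)
    (hAdj : ∀ i j, Adj i j ↔ i ≠ j ∧ IsExtreme ℝ P (segment ℝ (v i) (v j)))
    (hvtrans : ∀ i j, ∃ T : EuclideanSpace ℝ (Fin d) ≃ₗ[ℝ] EuclideanSpace ℝ (Fin d),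
      ⇑T '' P = P ∧ T (v i) = v j)
    (hetrans : ∀ i j k l, Adj i j → Adj k l →
      ∃ T : EuclideanSpace ℝ (Fin d) ≃ₗ[ℝ] EuclideanSpace ℝ (Fin d),
        ⇑T '' P = P ∧ ({T (v i), T (v j)} : Set (EuclideanSpace ℝ (Fin d)))
          = {v k, v l}) :
    ∀ σ : Equiv.Perm (Fin n), (∀ i j, Adj i j ↔ Adj (σ i) (σ j)) →
      ∃ T : EuclideanSpace ℝ (Fin d) ≃ₗ[ℝ] EuclideanSpace ℝ (Fin d),
        ⇑T '' P = P ∧ ∀ i, T (v i) = v (σ i) := by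
  subst hP
  intro σ hσ
  have hne : Nonempty (Fin n) := by
    obtain ⟨x, hx⟩ := convexHull_nonempty_iff.1 ⟨_, interior_subset h0⟩
    exact ⟨hx.choose⟩
  rcases subsingleton_or_nontrivial (EuclideanSpace ℝ (Fin d)) with hsub | hnt
  · refine ⟨LinearEquiv.refl ℝ _, ?_, fun i => Subsingleton.elim _ _⟩
    exact image_id _
  set ℓ : Fin n → EuclideanSpace ℝ (Fin d) →L[ℝ] ℝ := fun i => innerSL ℝ (v i) with hℓ
  obtain ⟨r, hr, hco⟩ := support_coercive h0
  have hU : ∀ a, ∃ Y, ∀ k, k ≠ a → ℓ k Y < ℓ a Y := exists_exposing hinj hvert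
  have hℓinj : Function.Injective ℓ := fun i j hij => by
    by_contra h
    obtain ⟨Y, hY⟩ := hU j
    exact (hY i h).ne (by rw [hij])
  -- A vertex at the origin would be the only vertex, contradicting positive dimension.
  have hℓ0 : ∀ a, ℓ a ≠ 0 := fun a ha => by
    obtain ⟨Y, hY⟩ := hU a
    have hsol : ∀ k, k = a := fun k => by
      by_contra hk
      obtain ⟨i, hi⟩ := hco Y
      by_cases hia : i = a
      · have h1 : ℓ i Y = 0 := by rw [hia, ha]; rfl
        have h2 : ‖Y‖ = 0 := by
          have h3 : r * ‖Y‖ ≤ 0 := hi.trans h1.le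
          nlinarith [norm_nonneg Y]
        have h4 := hY k hk
        rw [norm_eq_zero.1 h2, map_zero, map_zero] at h4
        exact lt_irrefl _ h4
      · have h1 := hY i hia
        rw [ha, zero_apply] at h1
        have h3 : r * ‖Y‖ ≤ ℓ i Y := hi
        nlinarith [norm_nonneg Y]
    obtain ⟨Z, hZ⟩ := exists_ne (0 : EuclideanSpace ℝ (Fin d))
    obtain ⟨i, hi⟩ := hco Z
    have h1 : ℓ i Z = 0 := by rw [hsol i, ha]; rfl
    have h3 : r * ‖Z‖ ≤ 0 := hi.trans h1.le
    nlinarith [norm_pos_iff.2 hZ]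
  have hs : ∀ i j, Adj i j → Adj j i := fun i j h => by
    rw [hAdj] at h ⊢
    exact ⟨h.1.symm, segment_symm ℝ (v i) (v j) ▸ h.2⟩
  have hD : ∀ ε i j, cellMass volume ℓ ε i = cellMass volume ℓ ε j := fun ε i j => by
    obtain ⟨T, hT, hij⟩ := hvtrans i j
    obtain ⟨τ, S, hτ, hS⟩ := symmetry_perm hinj hvert T hT
    rw [← hinj ((hτ i).symm.trans hij)]
    exact (cellMass_symm volume hr hco S τ hS i).symm
  have hM : ∀ ε i j k l, Adj i j → Adj k l → overlap volume ℓ ε i j = overlap volume ℓ ε k l := by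
    intro ε i j k l hij hkl
    obtain ⟨T, hT, hpair⟩ := hetrans i j k l hij hkl
    obtain ⟨τ, S, hτ, hS⟩ := symmetry_perm hinj hvert T hT
    rw [← overlap_symm volume hr hco S τ hS i j]
    rw [hτ, hτ, Set.pair_eq_pair_iff] at hpair
    rcases hpair with ⟨h1, h2⟩ | ⟨h1, h2⟩
    · rw [hinj h1, hinj h2]
    · rw [hinj h1, hinj h2, overlap_comm]
  have hnon : ∀ i j, i ≠ j → ¬ Adj i j →
      Tendsto (fun ε => overlap volume ℓ ε i j / ε) (𝓝[>] 0) (𝓝 0) := fun i j hij hA =>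
    tendsto_overlap_div volume hr hco hU hij
      (exists_above_of_not_extreme hinj hvert hij fun h => hA ((hAdj i j).2 ⟨hij, h⟩))
  obtain ⟨ρ, hρ, hex⟩ := eigenspace_exhausted volume hr hco hℓinj hU hℓ0 hs hD hM hnon
  -- Relabelling by `σ` preserves the eigenspace of the Laplacian, so `i ↦ ℓ (σ i) u` is again a
  -- coordinate function.
  have hy : ∀ u, ∃ y, ∀ a, ℓ (σ a) u = ℓ a y := fun u =>
    hex (fun i => ℓ (σ i) u) fun i => (lap_perm hσ (zl ℓ u) i).trans (hρ u (σ i))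
  -- The linear map is assembled from these vectors over an orthonormal basis.
  set b := EuclideanSpace.basisFun (Fin d) ℝ with hb
  choose y hy using fun k => hy (b k)
  set A : EuclideanSpace ℝ (Fin d) →ₗ[ℝ] EuclideanSpace ℝ (Fin d) :=
    ∑ k, (innerₛₗ ℝ (y k)).smulRight (b k) with hA
  have hAv : ∀ i, A (v i) = v (σ i) := fun i => by
    rw [← b.sum_repr' (v (σ i)), hA, LinearMap.sum_apply]
    refine Finset.sum_congr rfl fun k _ => ?_
    rw [LinearMap.smulRight_apply, innerₛₗ_apply_apply]
    have h1 := hy k i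
    simp only [hℓ, innerSL_apply_apply] at h1
    rw [real_inner_comm, ← h1, real_inner_comm]
  have hrange : range (fun i => A (v i)) = range v := by
    simp only [hAv]
    exact σ.surjective.range_comp v
  have hspan : Submodule.span ℝ (range v) = ⊤ := by
    rw [affineSpan_convexHull] at hfull
    have h1 := affineSpan_le_toAffineSubspace_span (k := ℝ) (s := range v)
    rw [hfull] at h1
    exact eq_top_iff.2 fun x _ => h1 (AffineSubspace.mem_top ℝ _ x)
  have hsurj : Function.Surjective A := by
    rw [← LinearMap.range_eq_top, eq_top_iff, ← hspan, Submodule.span_le, ← hrange]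
    rintro _ ⟨i, rfl⟩
    exact ⟨v i, rfl⟩
  refine ⟨LinearEquiv.ofInjectiveEndo A (LinearMap.injective_iff_surjective.2 hsurj), ?_, hAv⟩
  rw [LinearEquiv.coe_ofInjectiveEndo, LinearMap.image_convexHull, ← range_comp]
  exact congrArg _ hrange
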